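/- arXiv:1709.07787 — 4 statements merged into one kernel-verified Lean document; each statement's English description precedes it below -/
import Mathlib

section
/- Let 0 < ε < 1 and α > 0, and let D = {(x,t) ∈ ℝ² : ε·x > 0 and ε·|cos(√(1−ε²)·t)| < √(1−ε²)·sinh(ε·x)}. Then the function u(x,t) = (4/α)·artanh( (ε/√(1−ε²)) · cos(√(1−ε²)·t) / sinh(ε·x) ) is well defined on D, satisfies ∂²u/∂t² − ∂²u/∂x² + sinh(α·u)/α = 0 at every point of D, and u(x,t) → 0 as x → +∞, uniformly in t. -/
/-- The inverse hyperbolic tangent, defined for arguments in `(−1,1)`. -/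
noncomputable def artanh (x : ℝ) : ℝ := (1 / 2) * Real.log ((1 + x) / (1 - x))

/-!
The substitution `u = (4/α) artanh v` turns the sinh-Gordon equation into an algebraic relation
between `v` and its partial derivatives. For a quotient `v(x, t) = T(t) / X(x)` with `T'' = q T`
and `X'' = m X`, that relation follows from `m - q = 1` together with the equality of the first
integrals `T'² - q T²` and `X'² - m X²`. The breather is the case `T = (ε/s) cos(st)`,
`X = sinh(εx)` with `s = √(1 - ε²)`: then `m - q = ε² + s² = 1` and both first integrals equal `ε²`.
Since `T` is bounded and `X` tends to infinity, `v` tends to `0` uniformly in `t`, and so does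
`artanh v`.
-/

open Filter Topology

theorem artanh_eq_real_artanh {x : ℝ} (hx : |x| ≤ 1) : artanh x = Real.artanh x :=
  (Real.artanh_eq_half_log (abs_le.mp hx)).symm

theorem artanh_zero : artanh 0 = 0 := by
  rw [artanh_eq_real_artanh (by simp), Real.artanh_zero]

theorem one_sub_sq_pos {x : ℝ} (hx : |x| < 1) : 0 < 1 - x ^ 2 :=
  sub_pos.mpr ((sq_lt_one_iff_abs_lt_one x).mpr hx)

theorem sinh_two_mul_artanh {x : ℝ} (hx : |x| < 1) :
    Real.sinh (2 * artanh x) = 2 * x / (1 - x ^ 2) := by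
  rw [artanh_eq_real_artanh hx.le, Real.sinh_two_mul, Real.sinh_artanh (abs_lt.mp hx),
    Real.cosh_artanh (abs_lt.mp hx), mul_assoc, div_mul_div_comm, mul_one, ← mul_div_assoc,
    Real.mul_self_sqrt (one_sub_sq_pos hx).le]

theorem cosh_two_mul_artanh {x : ℝ} (hx : |x| < 1) :
    Real.cosh (2 * artanh x) = (1 + x ^ 2) / (1 - x ^ 2) := by
  rw [artanh_eq_real_artanh hx.le, Real.cosh_two_mul, Real.sinh_artanh (abs_lt.mp hx),
    Real.cosh_artanh (abs_lt.mp hx), div_pow, div_pow, Real.sq_sqrt (one_sub_sq_pos hx).le,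
    one_pow, add_div]

theorem sinh_four_mul_artanh {x : ℝ} (hx : |x| < 1) :
    Real.sinh (4 * artanh x) = 4 * x * (1 + x ^ 2) / (1 - x ^ 2) ^ 2 := by
  rw [show 4 * artanh x = 2 * (2 * artanh x) by ring, Real.sinh_two_mul, sinh_two_mul_artanh hx,
    cosh_two_mul_artanh hx]
  field_simp
  ring

theorem hasDerivAt_artanh {x : ℝ} (hx : |x| < 1) : HasDerivAt artanh (1 / (1 - x ^ 2)) x := by
  obtain ⟨hx_left, hx_right⟩ := abs_lt.mp hx
  have h_add : 1 + x ≠ 0 := by linarith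
  have h_sub : 1 - x ≠ 0 := by linarith
  have h_quot : HasDerivAt (fun y : ℝ => (1 + y) / (1 - y)) (2 / (1 - x) ^ 2) x :=
    (((hasDerivAt_id' x).const_add 1).fun_div ((hasDerivAt_id' x).const_sub 1) h_sub).congr_deriv
      (by ring)
  refine ((h_quot.log (div_ne_zero h_add h_sub)).const_mul (1 / 2)).congr_deriv ?_
  rw [show 1 - x ^ 2 = (1 + x) * (1 - x) by ring]
  field_simp

theorem deriv_deriv_artanh_comp {f f' : ℝ → ℝ} {f'' y : ℝ} (hy : |f y| < 1)
    (hf : ∀ᶠ z in 𝓝 y, HasDerivAt f (f' z) z) (hf' : HasDerivAt f' f'' y) :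
    deriv (deriv fun z => artanh (f z)) y =
      f'' / (1 - f y ^ 2) + 2 * f y * f' y ^ 2 / (1 - f y ^ 2) ^ 2 := by
  have hfy : HasDerivAt f (f' y) y := hf.self_of_nhds
  have h_lt : ∀ᶠ z in 𝓝 y, |f z| < 1 := hfy.continuousAt.abs.eventually (gt_mem_nhds hy)
  have h_deriv : deriv (fun z => artanh (f z)) =ᶠ[𝓝 y] fun z => f' z / (1 - f z ^ 2) := by
    filter_upwards [hf, h_lt] with z hz hz_lt
    exact ((hasDerivAt_artanh hz_lt).comp z hz).deriv.trans (one_div_mul_eq_div _ _)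
  have h_ne : 1 - f y ^ 2 ≠ 0 := (one_sub_sq_pos hy).ne'
  rw [h_deriv.deriv_eq, (hf'.fun_div ((hfy.fun_pow 2).const_sub 1) h_ne).deriv]
  field_simp
  ring

theorem hasDerivAt_const_div {X : ℝ → ℝ} {X' c x : ℝ} (hX : HasDerivAt X X' x)
    (hX_ne : X x ≠ 0) :
    HasDerivAt (fun ξ => c / X ξ) (-(c * X') / X x ^ 2) x :=
  ((hasDerivAt_const x c).fun_div hX hX_ne).congr_deriv (by ring)

theorem hasDerivAt_deriv_const_div {X X' : ℝ → ℝ} {X'' c x : ℝ} (hX : HasDerivAt X (X' x) x)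
    (hX' : HasDerivAt X' X'' x) (hX_ne : X x ≠ 0) :
    HasDerivAt (fun ξ => -(c * X' ξ) / X ξ ^ 2)
      (c * (2 * X' x ^ 2 - X x * X'') / X x ^ 3) x := by
  refine ((hX'.const_mul c).fun_neg.fun_div (hX.fun_pow 2) (pow_ne_zero 2 hX_ne)).congr_deriv ?_
  field_simp
  ring

theorem tendstoUniformly_div_atTop {ι κ : Type*} {l : Filter ι} {X : ι → ℝ} {T : κ → ℝ} {C : ℝ}
    (hT : ∀ t, |T t| ≤ C) (hX : Tendsto X l atTop) :
    TendstoUniformly (fun x t => T t / X x) (fun _ => 0) l := by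
  have hX_inv : Tendsto (fun p : ι × κ => (X p.1)⁻¹) (l ×ˢ ⊤) (𝓝 0) :=
    (tendsto_inv_atTop_zero.comp hX).comp tendsto_fst
  refine tendsto_prod_top_iff.mp ?_
  exact bdd_le_mul_tendsto_zero' C (.of_forall fun p => hT p.2) hX_inv

theorem tendsto_sinh_atTop : Tendsto Real.sinh atTop atTop :=
  tendsto_atTop_mono' atTop
    ((eventually_ge_atTop 0).mono fun _ hx => Real.self_le_sinh_iff.mpr hx) tendsto_id

section SinhGordon

/-- The function `u` of position and time satisfies the sinh-Gordon equation
`u_tt - u_xx + sinh(αu)/α = 0` at the point `(x, t)`. Partial derivatives are encoded by `deriv`,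
hence are `0` where they do not exist. -/
def SolvesSinhGordonAt (α : ℝ) (u : ℝ → ℝ → ℝ) (x t : ℝ) : Prop :=
  deriv (deriv fun τ => u x τ) t - deriv (deriv fun ξ => u ξ t) x
    + Real.sinh (α * u x t) / α = 0

variable {α x t : ℝ}

theorem solvesSinhGordonAt_artanh_iff (hα : α ≠ 0) {v : ℝ → ℝ → ℝ} {vt vx : ℝ → ℝ} {vtt vxx : ℝ}
    (hv : |v x t| < 1) (hvt : ∀ᶠ τ in 𝓝 t, HasDerivAt (fun τ => v x τ) (vt τ) τ)
    (hvtt : HasDerivAt vt vtt t) (hvx : ∀ᶠ ξ in 𝓝 x, HasDerivAt (fun ξ => v ξ t) (vx ξ) ξ)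
    (hvxx : HasDerivAt vx vxx x) :
    SolvesSinhGordonAt α (fun x t => 4 / α * artanh (v x t)) x t ↔
      (1 - v x t ^ 2) * (vtt - vxx) + 2 * v x t * (vt t ^ 2 - vx x ^ 2)
        + v x t * (1 + v x t ^ 2) = 0 := by
  have h_ne : 1 - v x t ^ 2 ≠ 0 := (one_sub_sq_pos hv).ne'
  have h_arg : α * (4 / α * artanh (v x t)) = 4 * artanh (v x t) := by field_simp
  have h_residual :
      4 / α * (vtt / (1 - v x t ^ 2) + 2 * v x t * vt t ^ 2 / (1 - v x t ^ 2) ^ 2)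
        - 4 / α * (vxx / (1 - v x t ^ 2) + 2 * v x t * vx x ^ 2 / (1 - v x t ^ 2) ^ 2)
        + 4 * v x t * (1 + v x t ^ 2) / (1 - v x t ^ 2) ^ 2 / α =
      4 / (α * (1 - v x t ^ 2) ^ 2) *
        ((1 - v x t ^ 2) * (vtt - vxx) + 2 * v x t * (vt t ^ 2 - vx x ^ 2)
          + v x t * (1 + v x t ^ 2)) := by
    field_simp
    ring
  have h_tt := deriv_deriv_artanh_comp hv hvt hvtt
  have h_xx := deriv_deriv_artanh_comp (f := fun ξ => v ξ t) hv hvx hvxx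
  simp only [SolvesSinhGordonAt, deriv_const_mul_field']
  rw [h_tt, h_xx, h_arg, sinh_four_mul_artanh hv, h_residual,
    mul_eq_zero_iff_left (div_ne_zero four_ne_zero (mul_ne_zero hα (pow_ne_zero 2 h_ne)))]

theorem solvesSinhGordonAt_artanh_div (hα : α ≠ 0) {T T' X X' : ℝ → ℝ} {q m : ℝ}
    (hT : ∀ᶠ τ in 𝓝 t, HasDerivAt T (T' τ) τ) (hT' : HasDerivAt T' (q * T t) t)
    (hX : ∀ᶠ ξ in 𝓝 x, HasDerivAt X (X' ξ) ξ) (hX' : HasDerivAt X' (m * X x) x)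
    (hqm : m - q = 1) (h_integral : T' t ^ 2 - q * T t ^ 2 = X' x ^ 2 - m * X x ^ 2)
    (hX_ne : X x ≠ 0) (hv : |T t / X x| < 1) :
    SolvesSinhGordonAt α (fun x t => 4 / α * artanh (T t / X x)) x t := by
  have hX_ne_near : ∀ᶠ ξ in 𝓝 x, X ξ ≠ 0 := hX.self_of_nhds.continuousAt.eventually_ne hX_ne
  have hvx : ∀ᶠ ξ in 𝓝 x, HasDerivAt (fun ξ => T t / X ξ) (-(T t * X' ξ) / X ξ ^ 2) ξ := by
    filter_upwards [hX, hX_ne_near] with ξ hξ hξ_ne using hasDerivAt_const_div hξ hξ_ne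
  refine (solvesSinhGordonAt_artanh_iff (v := fun x t => T t / X x) hα hv
    (hT.mono fun τ hτ => hτ.div_const (X x))
    (hT'.div_const (X x)) hvx (hasDerivAt_deriv_const_div hX.self_of_nhds hX' hX_ne)).mpr ?_
  obtain rfl : m = q + 1 := by linarith
  have hT'_sq : T' t ^ 2 = X' x ^ 2 - (q + 1) * X x ^ 2 + q * T t ^ 2 := by linarith
  simp only [div_pow, neg_sq, mul_pow, hT'_sq]
  field_simp
  ring

end SinhGordon

section Breather

variable {ε s : ℝ}

/-- The argument of `artanh` in the sinh-Gordon breather with spatial rate `ε` and frequency `s`;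
the breather of the paper has `s = √(1 - ε²)`. -/
noncomputable def breatherProfile (ε s x t : ℝ) : ℝ :=
  ε / s * Real.cos (s * t) / Real.sinh (ε * x)

theorem abs_breatherProfile_lt_one_iff {x t : ℝ} (hε : 0 < ε) (hs : 0 < s) (hx : 0 < ε * x) :
    |breatherProfile ε s x t| < 1 ↔ ε * |Real.cos (s * t)| < s * Real.sinh (ε * x) := by
  have h_sinh : 0 < Real.sinh (ε * x) := Real.sinh_pos_iff.mpr hx
  rw [breatherProfile, abs_div, abs_mul, abs_of_pos h_sinh, abs_of_pos (div_pos hε hs),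
    div_lt_one h_sinh, div_mul_eq_mul_div, div_lt_iff₀' hs]

theorem solvesSinhGordonAt_breather {α x t : ℝ} (hα : α ≠ 0) (hs : s ≠ 0) (hεs : ε ^ 2 + s ^ 2 = 1)
    (hx : ε * x ≠ 0) (hv : |breatherProfile ε s x t| < 1) :
    SolvesSinhGordonAt α (fun x t => 4 / α * artanh (breatherProfile ε s x t)) x t := by
  have h_lin (a z : ℝ) : HasDerivAt (fun z => a * z) a z := hasDerivAt_const_mul a
  have hT (τ : ℝ) :
      HasDerivAt (fun τ => ε / s * Real.cos (s * τ)) (-ε * Real.sin (s * τ)) τ :=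
    ((h_lin s τ).cos.const_mul (ε / s)).congr_deriv (by field_simp)
  have hT' : HasDerivAt (fun τ => -ε * Real.sin (s * τ))
      (-s ^ 2 * (ε / s * Real.cos (s * t))) t :=
    ((h_lin s t).sin.const_mul (-ε)).congr_deriv (by field_simp)
  have hX (ξ : ℝ) : HasDerivAt (fun ξ => Real.sinh (ε * ξ)) (ε * Real.cosh (ε * ξ)) ξ :=
    (h_lin ε ξ).sinh.congr_deriv (mul_comm _ _)
  have hX' : HasDerivAt (fun ξ => ε * Real.cosh (ε * ξ)) (ε ^ 2 * Real.sinh (ε * x)) x :=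
    ((h_lin ε x).cosh.const_mul ε).congr_deriv (by ring)
  have hT_integral : (-ε * Real.sin (s * t)) ^ 2 - -s ^ 2 * (ε / s * Real.cos (s * t)) ^ 2
      = ε ^ 2 := by
    rw [mul_pow, Real.sin_sq]
    field_simp
    ring
  have hX_integral : (ε * Real.cosh (ε * x)) ^ 2 - ε ^ 2 * Real.sinh (ε * x) ^ 2 = ε ^ 2 := by
    rw [mul_pow, Real.cosh_sq]
    ring
  exact solvesSinhGordonAt_artanh_div hα (.of_forall hT) hT' (.of_forall hX) hX' (by linarith)
    (hT_integral.trans hX_integral.symm) (Real.sinh_ne_zero.mpr hx) hv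

theorem tendstoUniformly_breatherProfile (hε : 0 < ε) :
    TendstoUniformly (breatherProfile ε s) (fun _ => 0) atTop := by
  have hT (t : ℝ) : |ε / s * Real.cos (s * t)| ≤ |ε / s| := by
    rw [abs_mul]
    exact mul_le_of_le_one_right (abs_nonneg _) (Real.abs_cos_le_one _)
  exact tendstoUniformly_div_atTop hT (tendsto_sinh_atTop.comp (tendsto_id.const_mul_atTop hε))

theorem tendstoUniformly_breather (c : ℝ) (hε : 0 < ε) :
    TendstoUniformly (fun x t => c * artanh (breatherProfile ε s x t)) (fun _ => 0) atTop := by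
  have h_artanh : Tendsto (fun y => c * artanh y) (𝓝 0) (𝓝 0) := by
    have h_cont : ContinuousAt (fun y => c * artanh y) 0 :=
      (hasDerivAt_artanh (by simp)).continuousAt.const_mul c
    simpa only [ContinuousAt, artanh_zero, mul_zero] using h_cont
  exact tendsto_prod_top_iff.mp
    (h_artanh.comp (tendsto_prod_top_iff.mpr (tendstoUniformly_breatherProfile hε)))

end Breather

/-- Let `0 < ε < 1` and `α > 0`, and let
`D = {(x,t) : ε·x > 0 ∧ ε·|cos(√(1−ε²)·t)| < √(1−ε²)·sinh(ε·x)}`. Then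
`u(x,t) = (4/α)·artanh((ε/√(1−ε²))·cos(√(1−ε²)·t)/sinh(ε·x))` is well defined on `D`
(its artanh-argument has absolute value `< 1` there), satisfies
`u_tt − u_xx + sinh(α·u)/α = 0` at every point of `D`, and `u(x,t) → 0` as `x → +∞`,
uniformly in `t`. -/
theorem sinh_gordon_solution (ε α : ℝ) (hε0 : 0 < ε) (hε1 : ε < 1) (hα : 0 < α)
    (u : ℝ → ℝ → ℝ)
    (hu : ∀ x t, u x t = (4 / α) * artanh ((ε / Real.sqrt (1 - ε ^ 2)) *
        Real.cos (Real.sqrt (1 - ε ^ 2) * t) / Real.sinh (ε * x))) :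
    (∀ x t, ε * x > 0 →
      ε * |Real.cos (Real.sqrt (1 - ε ^ 2) * t)| < Real.sqrt (1 - ε ^ 2) * Real.sinh (ε * x) →
      |(ε / Real.sqrt (1 - ε ^ 2)) * Real.cos (Real.sqrt (1 - ε ^ 2) * t)
        / Real.sinh (ε * x)| < 1) ∧
    (∀ x t, ε * x > 0 →
      ε * |Real.cos (Real.sqrt (1 - ε ^ 2) * t)| < Real.sqrt (1 - ε ^ 2) * Real.sinh (ε * x) →
      deriv (deriv (fun t' => u x t')) t - deriv (deriv (fun x' => u x' t)) x
        + Real.sinh (α * u x t) / α = 0) ∧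
    (∀ δ > 0, ∃ A : ℝ, ∀ x t, A ≤ x → |u x t| < δ) := by
  have h_pos : 0 < 1 - ε ^ 2 := one_sub_sq_pos (abs_lt.mpr ⟨by linarith, hε1⟩)
  have hs : 0 < √(1 - ε ^ 2) := Real.sqrt_pos.mpr h_pos
  have hεs : ε ^ 2 + √(1 - ε ^ 2) ^ 2 = 1 := by
    rw [Real.sq_sqrt h_pos.le, add_sub_cancel]
  obtain rfl : u = fun x t => 4 / α * artanh (breatherProfile ε √(1 - ε ^ 2) x t) :=
    funext₂ hu
  refine ⟨fun x t hx h_dom => (abs_breatherProfile_lt_one_iff hε0 hs hx).mpr h_dom,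
    fun x t hx h_dom => ?_, fun δ hδ => ?_⟩
  · exact solvesSinhGordonAt_breather hα.ne' hs.ne' hεs hx.ne'
      ((abs_breatherProfile_lt_one_iff hε0 hs hx).mpr h_dom)
  · obtain ⟨A, hA⟩ := eventually_atTop.mp
      (Metric.tendstoUniformly_iff.mp (tendstoUniformly_breather (4 / α) hε0) δ hδ)
    refine ⟨A, fun x t hx => ?_⟩
    simpa only [dist_zero_left, Real.norm_eq_abs] using hA x hx t
end

section
/- Let g(u) = Σ_{m≥1} g_m u^m be an entire function with real coefficients, g₁ = 1, and assume λ := (5/6)g₂² − (3/4)g₃ > 0; set S(ξ) = √(2/λ)/cosh(ξ). Then there exists a sequence of smooth functions v_k : ℝ² → ℝ (k ≥ 1, arguments (τ, ξ)), with v₀ := 0, such that: (a) v₁(τ,ξ) = S(ξ)·cos τ; (b) each v_k is 2π-periodic in τ, even in τ, even in ξ, and v_k(τ,ξ) → 0 as |ξ| → ∞ uniformly in τ; (c) for each k there exist real polynomials a_{kq}, 0 ≤ q ≤ k, with a_{kq} = 0 whenever k + q is odd, deg a_{kq} ≤ k, a_{kq} containing only monomials of degree congruent to k mod 2, and a_{kq}(0)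 = 0 (so each a_{kq}(S) is divisible by S), such that v_k(τ,ξ) = Σ_{q=0}^{k} a_{kq}(S(ξ))·cos(qτ); and (d) for every m ≥ 1, with v_j := 0 for j ≤ 0: ∂²_τ v_m + v_m − (∂²_τ + ∂²_ξ) v_{m−2} + Σ_{j=2}^{m} g_j · Σ_{(k₁,…,k_j) ∈ (ℤ_{≥1})^j, k₁+⋯+k_j = m} v_{k₁}·v_{k₂}·⋯·v_{k_j} = 0 identically on ℝ². -/
/-!
The equation of order `m` reads `(∂²_τ + 1) v_m = f_m`, where `f_m` involves only earlier terms. It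
is solvable in `2π`-periodic functions exactly when `f_m` contains no `cos τ`, and it determines an
even `v_m` only up to a term `p(S) cos τ`. For even `m` parity rules out both. At order `3` there is
no `cos τ` because `S` solves the amplitude equation `S'' = S - λ S³`. For odd `m ≥ 3` the freedom
in `v_m` is what makes order `m + 2` solvable: adding `p(S) cos τ` to `v_m`, together with the
change it forces on `v_{m+1}`, changes the `cos τ` amplitude of `f_{m+2}` by `L p`, where `L` is the
linearised amplitude equation. On odd monomials `L` is triangular,
`L Sⁿ = (n² - 1) Sⁿ + λ (3 - n (n + 1) / 2) Sⁿ⁺²`, and the leading coefficient does not vanish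
because `n (n + 1) ≠ 6` for odd `n`, so `p` can be chosen to cancel any resonance.
-/

section PowerSeries

open PowerSeries

variable {R A : Type*}

section CommSemiring

variable [CommSemiring R] [CommSemiring A] [Algebra R A]

lemma coeff_mk_pow_eq_sum_antidiagonalTuple (w : ℕ → A) (j m : ℕ) :
    coeff m (mk w ^ j) = ∑ c ∈ Finset.Nat.antidiagonalTuple j m, ∏ i, w (c i) := by
  rw [← Fin.prod_const j (mk w), coeff_prod]
  refine Finset.sum_nbij' (fun f => ⇑f) Finsupp.equivFunOnFinite.symm ?_ ?_ ?_ ?_ ?_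
  all_goals simp +contextual [Finset.Nat.mem_antidiagonalTuple]

lemma coeff_mk_pow_eq_sum_compositions {w : ℕ → A} (hw : w 0 = 0) (j m : ℕ) :
    coeff m (mk w ^ j) = ∑ c ∈ (Finset.Nat.antidiagonalTuple j m).filter (fun c => ∀ i, c i ≠ 0),
      ∏ i, w (c i) := by
  rw [coeff_mk_pow_eq_sum_antidiagonalTuple, Finset.sum_filter_of_ne]
  intro c _ hc i hi
  exact hc (Finset.prod_eq_zero (Finset.mem_univ i) (by rw [hi, hw]))

lemma coeff_add_X_pow_mul_pow (f δ : A⟦X⟧) {i k : ℕ} (hik : i < k) (j : ℕ) :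
    coeff (k + i) ((f + X ^ k * δ) ^ j) =
      coeff (k + i) (f ^ j) + j * coeff i (f ^ (j - 1) * δ) := by
  obtain ⟨r, hr⟩ := Polynomial.powAddExpansion f (X ^ k * δ) j
  have expansion : (f + X ^ k * δ) ^ j =
      f ^ j + X ^ k * (C (j : A) * (f ^ (j - 1) * δ)) + X ^ (2 * k) * (r * δ ^ 2) := by
    rw [hr, map_natCast]
    ring
  rw [expansion, map_add, map_add, coeff_X_pow_mul', if_pos (by omega), Nat.add_sub_cancel_left,
    coeff_C_mul, coeff_X_pow_mul', if_neg (by omega), add_zero]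

/-- The coefficient of `ε ^ m` in `∑ j ≥ 2, g j * W ^ j`, where `W = ∑ k, w k * ε ^ k` is meant to
have no constant term, so that the powers beyond the `m`-th do not contribute. -/
noncomputable def nonlinearCoeff (g : ℕ → R) (w : ℕ → A) (m : ℕ) : A :=
  ∑ j ∈ Finset.Icc 2 m, g j • coeff m (mk w ^ j)

lemma nonlinearCoeff_two (g : ℕ → R) {w : ℕ → A} (hw : w 0 = 0) :
    nonlinearCoeff g w 2 = g 2 • w 1 ^ 2 := by
  simp [nonlinearCoeff, pow_two, coeff_mul, Finset.Nat.antidiagonal_succ, hw]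

lemma nonlinearCoeff_three (g : ℕ → R) {w : ℕ → A} (hw : w 0 = 0) :
    nonlinearCoeff g w 3 = (2 * g 2) • (w 1 * w 2) + g 3 • w 1 ^ 3 := by
  have Icc_eq : Finset.Icc 2 3 = {2, 3} := rfl
  rw [nonlinearCoeff, Icc_eq, Finset.sum_pair (by norm_num)]
  simp [pow_succ, coeff_mul, Finset.Nat.antidiagonal_succ, hw, mul_smul, two_smul, mul_comm]

end CommSemiring

section CommRing

variable [CommSemiring R] [CommRing A] [Algebra R A]

lemma nonlinearCoeff_add_of_agree (g : ℕ → R) {w w' : ℕ → A} (hw : w 0 = 0) {i k : ℕ}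
    (hik : i < k) (h : ∀ l < k, w' l = w l) :
    nonlinearCoeff g w' (k + i) = nonlinearCoeff g w (k + i) + ∑ j ∈ Finset.Icc 2 (i + 1),
      (j * g j) • coeff i (mk w ^ (j - 1) * mk fun l => w' (k + l) - w (k + l)) := by
  set δ : A⟦X⟧ := mk fun l => w' (k + l) - w (k + l) with hδ
  have mk_eq : mk w' = mk w + X ^ k * δ := by
    ext m
    rw [map_add, coeff_X_pow_mul', coeff_mk, coeff_mk]
    split_ifs with hm
    · simp [hδ, Nat.add_sub_cancel' hm]
    · rw [h m (not_le.1 hm), add_zero]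
  have coeff_eq_zero {j : ℕ} (hj : i + 1 < j) : coeff i (mk w ^ (j - 1) * δ) = 0 := by
    have X_dvd : (X : A⟦X⟧) ∣ mk w := X_dvd_iff.2 (by simp [hw])
    exact X_pow_dvd_iff.1 ((pow_dvd_pow_of_dvd X_dvd (j - 1)).mul_right δ) i (by omega)
  have sum_extend : ∑ j ∈ Finset.Icc 2 (i + 1), (j * g j) • coeff i (mk w ^ (j - 1) * δ) =
      ∑ j ∈ Finset.Icc 2 (k + i), (j * g j) • coeff i (mk w ^ (j - 1) * δ) := by
    refine Finset.sum_subset (Finset.Icc_subset_Icc_right (by omega)) fun j hj hj' => ?_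
    rw [Finset.mem_Icc] at hj hj'
    rw [coeff_eq_zero (by omega), smul_zero]
  rw [sum_extend, nonlinearCoeff, nonlinearCoeff, ← Finset.sum_add_distrib]
  refine Finset.sum_congr rfl fun j _ => ?_
  rw [mk_eq, coeff_add_X_pow_mul_pow _ _ hik, smul_add, ← nsmul_eq_mul, smul_comm, mul_smul,
    Nat.cast_smul_eq_nsmul]

lemma nonlinearCoeff_congr (g : ℕ → R) {w w' : ℕ → A} (hw : w 0 = 0) {m : ℕ} (hm : 1 ≤ m)
    (h : ∀ l < m, w' l = w l) : nonlinearCoeff g w' m = nonlinearCoeff g w m := by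
  simpa using nonlinearCoeff_add_of_agree g hw (i := 0) hm h

lemma nonlinearCoeff_succ_of_agree (g : ℕ → R) {w w' : ℕ → A} (hw : w 0 = 0) {k : ℕ}
    (hk : 2 ≤ k) (h : ∀ l < k, w' l = w l) :
    nonlinearCoeff g w' (k + 1) =
      nonlinearCoeff g w (k + 1) + (2 * g 2) • (w 1 * (w' k - w k)) := by
  simp [nonlinearCoeff_add_of_agree g hw (i := 1) hk h, coeff_mul,
    Finset.Nat.antidiagonal_succ, hw]

lemma nonlinearCoeff_add_two_of_agree (g : ℕ → R) {w w' : ℕ → A} (hw : w 0 = 0) {k : ℕ}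
    (hk : 3 ≤ k) (h : ∀ l < k, w' l = w l) :
    nonlinearCoeff g w' (k + 2) = nonlinearCoeff g w (k + 2) +
      ((2 * g 2) • (w 1 * (w' (k + 1) - w (k + 1)) + w 2 * (w' k - w k)) +
        (3 * g 3) • (w 1 ^ 2 * (w' k - w k))) := by
  have Icc_eq : Finset.Icc 2 (2 + 1) = {2, 3} := rfl
  rw [nonlinearCoeff_add_of_agree g hw hk h, Icc_eq, Finset.sum_pair (by norm_num)]
  simp [coeff_mul, pow_two, Finset.Nat.antidiagonal_succ, hw]

end CommRing

end PowerSeries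

lemma exists_seq_of_forall_exists_extension {α : Type*} {P : ℕ → (ℕ → α) → Prop} {w₀ : ℕ → α}
    (h₀ : P 0 w₀) (ext : ∀ n w, P n w → ∃ w', P (n + 1) w' ∧ ∀ k ≤ n, w' k = w k) :
    ∃ v : ℕ → α, ∀ n, ∃ w, P n w ∧ ∀ k ≤ n, v k = w k := by
  choose! next hnext using ext
  let W : ℕ → ℕ → α := fun n => Nat.rec w₀ next n
  have hW : ∀ n, P n (W n) := fun n => by
    induction n with
    | zero => exact h₀
    | succ n ih => exact (hnext n _ ih).1
  have stable : ∀ k n, k ≤ n → W n k = W k k := fun k n hkn => by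
    induction n, hkn using Nat.le_induction with
    | base => rfl
    | succ n hkn ih => rw [← ih]; exact (hnext n _ (hW n)).2 k hkn
  exact ⟨fun k => W k k, fun n => ⟨W n, hW n, fun k hk => (stable k n hk).symm⟩⟩

section SmoothFunctions

open scoped ContDiff

/-- The algebra of smooth functions of `(τ, ξ)`. -/
def smoothFunctions : Subalgebra ℝ (ℝ → ℝ → ℝ) where
  carrier := {f | ContDiff ℝ ∞ fun p : ℝ × ℝ => f p.1 p.2}
  mul_mem' {f g} hf hg := by
    rw [Set.mem_ofPred] at hf hg ⊢
    exact hf.mul hg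
  add_mem' {f g} hf hg := by
    rw [Set.mem_ofPred] at hf hg ⊢
    exact hf.add hg
  algebraMap_mem' _ := Set.mem_ofPred.2 contDiff_const

namespace smoothFunctions

lemma contDiff (f : smoothFunctions) : ContDiff ℝ ∞ fun p : ℝ × ℝ => f.1 p.1 p.2 := f.2

lemma hasDerivAt_left (f : smoothFunctions) (τ ξ : ℝ) :
    HasDerivAt (fun τ' => f.1 τ' ξ) (fderiv ℝ (fun p : ℝ × ℝ => f.1 p.1 p.2) (τ, ξ) (1, 0)) τ :=
  HasFDerivAt.comp_hasDerivAt (l := fun p : ℝ × ℝ => f.1 p.1 p.2) τ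
    ((contDiff f).differentiable (by simp) _).hasFDerivAt
    ((hasDerivAt_id τ).prodMk (hasDerivAt_const τ ξ))

lemma hasDerivAt_right (f : smoothFunctions) (τ ξ : ℝ) :
    HasDerivAt (fun ξ' => f.1 τ ξ') (fderiv ℝ (fun p : ℝ × ℝ => f.1 p.1 p.2) (τ, ξ) (0, 1)) ξ :=
  HasFDerivAt.comp_hasDerivAt (l := fun p : ℝ × ℝ => f.1 p.1 p.2) ξ
    ((contDiff f).differentiable (by simp) _).hasFDerivAt
    ((hasDerivAt_const ξ τ).prodMk (hasDerivAt_id ξ))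

lemma contDiff_fderiv_apply (f : smoothFunctions) (e : ℝ × ℝ) :
    ContDiff ℝ ∞ fun p => fderiv ℝ (fun p : ℝ × ℝ => f.1 p.1 p.2) p e :=
  ((contDiff f).fderiv_right le_rfl).clm_apply contDiff_const

/-- The partial derivative `∂_τ`. -/
noncomputable def dTau : smoothFunctions →ₗ[ℝ] smoothFunctions where
  toFun f := ⟨fun τ ξ => deriv (fun τ' => f.1 τ' ξ) τ, by
    simp only [(hasDerivAt_left f _ _).deriv]
    exact contDiff_fderiv_apply f (1, 0)⟩
  map_add' f g := by
    ext τ ξ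
    exact deriv_fun_add (hasDerivAt_left f τ ξ).differentiableAt
      (hasDerivAt_left g τ ξ).differentiableAt
  map_smul' c f := by
    ext τ ξ
    exact deriv_const_mul c (hasDerivAt_left f τ ξ).differentiableAt

/-- The partial derivative `∂_ξ`. -/
noncomputable def dXi : smoothFunctions →ₗ[ℝ] smoothFunctions where
  toFun f := ⟨fun τ ξ => deriv (fun ξ' => f.1 τ ξ') ξ, by
    simp only [(hasDerivAt_right f _ _).deriv]
    exact contDiff_fderiv_apply f (0, 1)⟩
  map_add' f g := by
    ext τ ξ
    exact deriv_fun_add (hasDerivAt_right f τ ξ).differentiableAt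
      (hasDerivAt_right g τ ξ).differentiableAt
  map_smul' c f := by
    ext τ ξ
    exact deriv_const_mul c (hasDerivAt_right f τ ξ).differentiableAt

/-- The harmonic oscillator `∂²_τ + 1`, which acts on the newest term of each order. -/
noncomputable def oscillator : smoothFunctions →ₗ[ℝ] smoothFunctions := dTau ∘ₗ dTau + .id

/-- The operator `∂²_τ + ∂²_ξ`, which the scaling puts on the term two orders below. -/
noncomputable def laplacian : smoothFunctions →ₗ[ℝ] smoothFunctions := dTau ∘ₗ dTau + dXi ∘ₗ dXi

end smoothFunctions

end SmoothFunctions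

section HyperbolicFunctions

open Filter

lemma hasDerivAt_div_cosh (A ξ : ℝ) : HasDerivAt (fun ξ => A / Real.cosh ξ)
    (-(A / Real.cosh ξ * Real.tanh ξ)) ξ := by
  refine ((hasDerivAt_const ξ A).fun_div (Real.hasDerivAt_cosh ξ)
    (Real.cosh_pos ξ).ne').congr_deriv ?_
  rw [Real.tanh_eq_sinh_div_cosh]
  ring

lemma tanh_sq (ξ : ℝ) : Real.tanh ξ ^ 2 = 1 - 1 / Real.cosh ξ ^ 2 := by
  have cosh_ne_zero := (Real.cosh_pos ξ).ne'
  rw [Real.tanh_eq_sinh_div_cosh]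
  field_simp
  exact Real.sinh_sq ξ

lemma hasDerivAt_tanh (ξ : ℝ) : HasDerivAt Real.tanh (1 / Real.cosh ξ ^ 2) ξ := by
  rw [funext Real.tanh_eq_sinh_div_cosh]
  refine ((Real.hasDerivAt_sinh ξ).fun_div (Real.hasDerivAt_cosh ξ)
    (Real.cosh_pos ξ).ne').congr_deriv ?_
  rw [← Real.cosh_sq_sub_sinh_sq ξ]
  ring

lemma tendsto_cosh : Tendsto Real.cosh (atBot ⊔ atTop) atTop := by
  rw [← comap_abs_atTop]
  refine tendsto_atTop_mono (f := fun ξ => |ξ| / 2) (fun ξ => ?_)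
    (tendsto_comap.atTop_div_const two_pos)
  rw [← Real.cosh_abs, Real.cosh_eq]
  linarith [Real.add_one_le_exp |ξ|, Real.exp_pos (-|ξ|)]

end HyperbolicFunctions

section Modes

open Filter Polynomial Topology smoothFunctions
open scoped ContDiff Pointwise

/-- The polynomials all of whose monomials have their exponent in `I`. -/
noncomputable def polySpan (I : Finset ℕ) : Submodule ℝ ℝ[X] :=
  .span ℝ ((fun n => X ^ n) '' I)

lemma X_pow_mem_polySpan {I : Finset ℕ} {n : ℕ} (hn : n ∈ I) : (X ^ n : ℝ[X]) ∈ polySpan I :=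
  Submodule.subset_span (Set.mem_image_of_mem _ hn)

lemma polySpan_le {I : Finset ℕ} {M : Submodule ℝ ℝ[X]} :
    polySpan I ≤ M ↔ ∀ n ∈ I, X ^ n ∈ M := by
  simp [polySpan, Submodule.span_le, Set.subset_def]

lemma mem_of_coeff_ne_zero {I : Finset ℕ} {p : ℝ[X]} (hp : p ∈ polySpan I) {n : ℕ}
    (hn : p.coeff n ≠ 0) : n ∈ I := by
  by_contra hnI
  have le_ker : polySpan I ≤ LinearMap.ker (lcoeff ℝ n) := polySpan_le.2 fun m hm => by
    rw [LinearMap.mem_ker, lcoeff_apply, coeff_X_pow, if_neg (ne_of_mem_of_not_mem hm hnI).symm]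
  exact hn (le_ker hp)

lemma polySpan_mono {I J : Finset ℕ} (h : I ⊆ J) : polySpan I ≤ polySpan J :=
  polySpan_le.2 fun _ hn => X_pow_mem_polySpan (h hn)

lemma polySpan_mul_le (I J : Finset ℕ) : polySpan I * polySpan J ≤ polySpan (I + J) := by
  rw [polySpan, polySpan, Submodule.span_mul_span, Submodule.span_le, Set.mul_subset_iff]
  rintro _ ⟨m, hm, rfl⟩ _ ⟨n, hn, rfl⟩
  rw [← pow_add]
  exact X_pow_mem_polySpan (Finset.add_mem_add hm hn)

lemma X_pow_mul_mem_polySpan {I J : Finset ℕ} {i : ℕ} (hIJ : ∀ n ∈ I, i + n ∈ J) {p : ℝ[X]}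
    (hp : p ∈ polySpan I) : X ^ i * p ∈ polySpan J := by
  have add_subset : {i} + I ⊆ J := Finset.add_subset_iff.2 (by simpa using hIJ)
  exact polySpan_mono add_subset <| polySpan_mul_le _ _ <|
    Submodule.mul_mem_mul (X_pow_mem_polySpan (Finset.mem_singleton_self i)) hp

/-- The exponents between `d` and `k` that have the parity of `k`. -/
def parityIcc (d k : ℕ) : Finset ℕ := {n ∈ Finset.Icc d k | n % 2 = k % 2}

lemma mem_parityIcc {d k n : ℕ} : n ∈ parityIcc d k ↔ (d ≤ n ∧ n ≤ k) ∧ n % 2 = k % 2 := by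
  rw [parityIcc, Finset.mem_filter, Finset.mem_Icc]

lemma parityIcc_anti_left {d d' : ℕ} (h : d ≤ d') (k : ℕ) : parityIcc d' k ⊆ parityIcc d k := by
  intro n hn
  rw [mem_parityIcc] at hn ⊢
  omega

lemma parityIcc_subset_add_two (d k : ℕ) : parityIcc d k ⊆ parityIcc d (k + 2) := by
  intro n hn
  rw [mem_parityIcc] at hn ⊢
  omega

lemma add_two_mem_parityIcc {d k n : ℕ} (hn : n ∈ parityIcc d k) :
    n + 2 ∈ parityIcc d (k + 2) := by
  rw [mem_parityIcc] at hn ⊢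
  omega

/-- A solution `S` of `S'' = S - lam * S ^ 3` at zero energy, the equation of the leading
amplitude. -/
structure SolitonProfile (lam : ℝ) where
  toFun : ℝ → ℝ
  contDiff : ContDiff ℝ ∞ toFun
  deriv_sq : ∀ ξ, deriv toFun ξ ^ 2 = toFun ξ ^ 2 - lam / 2 * toFun ξ ^ 4
  deriv_deriv : ∀ ξ, deriv (deriv toFun) ξ = toFun ξ - lam * toFun ξ ^ 3

namespace SolitonProfile

/-- The action of `∂²_ξ` on functions `p(S(ξ))`, in terms of the polynomial `p`. -/
noncomputable def xiOp (lam : ℝ) : ℝ[X] →ₗ[ℝ] ℝ[X] :=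
  LinearMap.mulLeft ℝ (X ^ 2 - C (lam / 2) * X ^ 4) ∘ₗ derivative ∘ₗ derivative +
    LinearMap.mulLeft ℝ (X - C lam * X ^ 3) ∘ₗ derivative

lemma eval_xiOp (lam : ℝ) (p : ℝ[X]) (x : ℝ) : (xiOp lam p).eval x =
    (x ^ 2 - lam / 2 * x ^ 4) * p.derivative.derivative.eval x +
      (x - lam * x ^ 3) * p.derivative.eval x := by
  simp [xiOp]

lemma xiOp_X_pow (lam : ℝ) (n : ℕ) :
    xiOp lam (X ^ n) = (n ^ 2 : ℝ) • X ^ n - (lam * (n * (n + 1)) / 2) • X ^ (n + 2) := by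
  refine Polynomial.funext fun x => ?_
  rcases n with _ | _ | n
  · simp [eval_xiOp]
  · norm_num [eval_xiOp]
  · simp only [eval_xiOp, derivative_X_pow, derivative_C_mul, eval_sub, eval_smul, eval_mul,
      eval_pow, eval_C, eval_X, smul_eq_mul, Nat.add_sub_cancel, Nat.cast_add, Nat.cast_one]
    ring

variable {lam : ℝ} (S : SolitonProfile lam)

/-- The function `p(S(ξ)) cos (q τ)`. -/
noncomputable def mode (q : ℕ) : ℝ[X] →ₗ[ℝ] smoothFunctions where
  toFun p := ⟨fun τ ξ => p.eval (S.toFun ξ) * Real.cos (q * τ),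
    (((p.contDiff_aeval ∞).comp S.contDiff).comp contDiff_snd).mul
      (Real.contDiff_cos.comp (contDiff_const.mul contDiff_fst))⟩
  map_add' p r := by ext; simp [add_mul]
  map_smul' c p := by ext; simp [mul_assoc]

lemma mode_apply (q : ℕ) (p : ℝ[X]) (τ ξ : ℝ) :
    (S.mode q p).1 τ ξ = p.eval (S.toFun ξ) * Real.cos (q * τ) := rfl

lemma mode_mul_mode (q r : ℕ) (p p' : ℝ[X]) :
    S.mode q p * S.mode r p' = (1 / 2 : ℝ) • S.mode (q + r) (p * p') +
      (1 / 2 : ℝ) • S.mode (q - r + (r - q)) (p * p') := by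
  ext τ ξ
  have cos_dist : Real.cos (↑(q - r + (r - q)) * τ) = Real.cos (q * τ - r * τ) := by
    rcases le_total q r with h | h
    · rw [Nat.sub_eq_zero_of_le h, zero_add, Nat.cast_sub h, ← Real.cos_neg, ← neg_mul, neg_sub,
        sub_mul]
    · rw [Nat.sub_eq_zero_of_le h, add_zero, Nat.cast_sub h, sub_mul]
  simp only [MulMemClass.coe_mul, Pi.mul_apply, mode_apply, Subalgebra.coe_add, Pi.add_apply,
    Subalgebra.coe_smul, Pi.smul_apply, smul_eq_mul]
  rw [cos_dist, Nat.cast_add, add_mul, Real.cos_add, Real.cos_sub, eval_mul]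
  ring

lemma dTau_dTau_mode (q : ℕ) (p : ℝ[X]) :
    dTau (dTau (S.mode q p)) = (-q ^ 2 : ℝ) • S.mode q p := by
  have deriv_cos : deriv (fun τ : ℝ => Real.cos (q * τ)) = fun τ => -q * Real.sin (q * τ) := by
    funext τ
    simp [mul_comm]
  have deriv_sin (τ : ℝ) : deriv (fun τ : ℝ => Real.sin (q * τ)) τ = q * Real.cos (q * τ) := by
    simp [mul_comm]
  ext τ ξ
  change deriv (deriv fun τ' => p.eval (S.toFun ξ) * Real.cos (q * τ')) τ =
    -q ^ 2 * (p.eval (S.toFun ξ) * Real.cos (q * τ))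
  rw [deriv_const_mul_field', deriv_cos, deriv_const_mul_field, deriv_const_mul_field, deriv_sin]
  ring

lemma hasDerivAt (ξ : ℝ) : HasDerivAt S.toFun (deriv S.toFun ξ) ξ :=
  (S.contDiff.differentiable (by simp) ξ).hasDerivAt

lemma hasDerivAt_deriv (ξ : ℝ) :
    HasDerivAt (deriv S.toFun) (S.toFun ξ - lam * S.toFun ξ ^ 3) ξ := by
  rw [← S.deriv_deriv]
  exact ((contDiff_infty_iff_deriv.1 S.contDiff).2.differentiable (by simp) ξ).hasDerivAt

lemma deriv_deriv_eval (p : ℝ[X]) (ξ : ℝ) :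
    deriv (deriv fun ξ => p.eval (S.toFun ξ)) ξ = (xiOp lam p).eval (S.toFun ξ) := by
  have deriv_eval (p : ℝ[X]) (ξ : ℝ) : HasDerivAt (fun ξ => p.eval (S.toFun ξ))
      (p.derivative.eval (S.toFun ξ) * deriv S.toFun ξ) ξ :=
    (p.hasDerivAt _).comp ξ (S.hasDerivAt ξ)
  rw [funext fun ξ => (deriv_eval p ξ).deriv,
    ((deriv_eval p.derivative ξ).fun_mul (S.hasDerivAt_deriv ξ)).deriv, mul_assoc, ← pow_two,
    S.deriv_sq, eval_xiOp]
  ring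

lemma dXi_dXi_mode (q : ℕ) (p : ℝ[X]) : dXi (dXi (S.mode q p)) = S.mode q (xiOp lam p) := by
  ext τ ξ
  change deriv (deriv fun ξ' => p.eval (S.toFun ξ') * Real.cos (q * τ)) ξ =
    (xiOp lam p).eval (S.toFun ξ) * Real.cos (q * τ)
  rw [← deriv_deriv_eval, deriv_mul_const_field', deriv_mul_const_field]

lemma oscillator_mode (q : ℕ) (p : ℝ[X]) :
    oscillator (S.mode q p) = (1 - q ^ 2 : ℝ) • S.mode q p := by
  rw [oscillator, LinearMap.add_apply, LinearMap.comp_apply, dTau_dTau_mode, LinearMap.id_apply]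
  module

lemma laplacian_mode (q : ℕ) (p : ℝ[X]) :
    laplacian (S.mode q p) = S.mode q (xiOp lam p - (q ^ 2 : ℝ) • p) := by
  rw [laplacian, LinearMap.add_apply, LinearMap.comp_apply, LinearMap.comp_apply, dTau_dTau_mode,
    dXi_dXi_mode, map_sub, map_smul]
  module

/-- The span of the functions `S(ξ) ^ n * cos (q * τ)` with `q ∈ Q` and `n ∈ I`. -/
noncomputable def trigSpan (Q I : Finset ℕ) : Submodule ℝ smoothFunctions :=
  ⨆ q ∈ Q, (polySpan I).map (S.mode q)

variable {S} {Q I J : Finset ℕ}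

lemma trigSpan_le {M : Submodule ℝ smoothFunctions} :
    S.trigSpan Q I ≤ M ↔ ∀ q ∈ Q, ∀ p ∈ polySpan I, S.mode q p ∈ M := by
  simp only [trigSpan, iSup_le_iff, Submodule.map_le_iff_le_comap]
  rfl

lemma mode_mem_trigSpan {q : ℕ} (hq : q ∈ Q) {p : ℝ[X]} (hp : p ∈ polySpan I) :
    S.mode q p ∈ S.trigSpan Q I :=
  trigSpan_le.1 le_rfl q hq p hp

lemma trigSpan_mono {Q' : Finset ℕ} (hQ : Q ⊆ Q') (hI : I ⊆ J) :
    S.trigSpan Q I ≤ S.trigSpan Q' J :=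
  trigSpan_le.2 fun _ hq _ hp => mode_mem_trigSpan (hQ hq) (polySpan_mono hI hp)

lemma trigSpan_singleton (q : ℕ) : S.trigSpan {q} I = (polySpan I).map (S.mode q) := by
  simp [trigSpan]

lemma trigSpan_le_singleton_sup_erase (q : ℕ) :
    S.trigSpan Q I ≤ S.trigSpan {q} I ⊔ S.trigSpan (Q.erase q) I := by
  refine trigSpan_le.2 fun r hr p hp => ?_
  by_cases hrq : r = q
  · exact Submodule.mem_sup_left (mode_mem_trigSpan (Finset.mem_singleton.2 hrq) hp)
  · exact Submodule.mem_sup_right (mode_mem_trigSpan (Finset.mem_erase.2 ⟨hrq, hr⟩) hp)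

lemma mul_mem_trigSpan {R T : Finset ℕ} (hadd : ∀ q ∈ Q, ∀ r ∈ R, q + r ∈ T)
    (hsub : ∀ q ∈ Q, ∀ r ∈ R, q - r + (r - q) ∈ T) {f f' : smoothFunctions}
    (hf : f ∈ S.trigSpan Q I) (hf' : f' ∈ S.trigSpan R J) : f * f' ∈ S.trigSpan T (I + J) := by
  have mul_le : S.trigSpan Q I * S.trigSpan R J ≤ S.trigSpan T (I + J) := by
    conv_lhs => simp only [trigSpan, Submodule.iSup_mul, Submodule.mul_iSup]
    simp only [iSup_le_iff, Submodule.mul_le, Submodule.mem_map]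
    rintro r hr q hq _ ⟨p, hp, rfl⟩ _ ⟨p', hp', rfl⟩
    have hpp' := polySpan_mul_le I J (Submodule.mul_mem_mul hp hp')
    rw [mode_mul_mode]
    exact add_mem (Submodule.smul_mem _ _ (mode_mem_trigSpan (hadd q hq r hr) hpp'))
      (Submodule.smul_mem _ _ (mode_mem_trigSpan (hsub q hq r hr) hpp'))
  exact mul_le (Submodule.mul_mem_mul hf hf')

lemma exists_eq_sum_mode {f : smoothFunctions} (hf : f ∈ S.trigSpan Q I) :
    ∃ a : ℕ → ℝ[X], (∀ q, a q ∈ polySpan I) ∧ f = ∑ q ∈ Q, S.mode q (a q) := by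
  obtain ⟨b, rfl⟩ := (Submodule.mem_iSup_finset_iff_exists_sum _ _).1 hf
  choose a ha hab using fun q => (b q).2
  exact ⟨a, ha, by simp only [hab]⟩

lemma trigSpan_le_map_oscillator (hQ : 1 ∉ Q) :
    S.trigSpan Q I ≤ (S.trigSpan Q I).map oscillator := by
  refine trigSpan_le.2 fun q hq p hp =>
    ⟨(1 - q ^ 2 : ℝ)⁻¹ • S.mode q p, Submodule.smul_mem _ _ (mode_mem_trigSpan hq hp), ?_⟩
  have denom_ne_zero : (1 - q ^ 2 : ℝ) ≠ 0 := by
    rw [sub_ne_zero, ne_comm, ← Nat.cast_pow, Nat.cast_ne_one]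
    simpa using ne_of_mem_of_not_mem hq hQ
  rw [map_smul, oscillator_mode, inv_smul_smul₀ denom_ne_zero]

lemma laplacian_mem_trigSpan (hIJ : I ⊆ J) (hIJ' : ∀ n ∈ I, n + 2 ∈ J) {f : smoothFunctions}
    (hf : f ∈ S.trigSpan Q I) : laplacian f ∈ S.trigSpan Q J := by
  have xiOp_mem {p : ℝ[X]} (hp : p ∈ polySpan I) : xiOp lam p ∈ polySpan J := by
    refine (polySpan_le (M := (polySpan J).comap (xiOp lam))).2 (fun n hn => ?_) hp
    rw [Submodule.mem_comap, xiOp_X_pow]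
    exact sub_mem (Submodule.smul_mem _ _ (X_pow_mem_polySpan (hIJ hn)))
      (Submodule.smul_mem _ _ (X_pow_mem_polySpan (hIJ' n hn)))
  refine (trigSpan_le (M := (S.trigSpan Q J).comap laplacian)).2 (fun q hq p hp => ?_) hf
  rw [Submodule.mem_comap, laplacian_mode]
  exact mode_mem_trigSpan hq
    (sub_mem (xiOp_mem hp) (Submodule.smul_mem _ _ (polySpan_mono hIJ hp)))

/-- The functions that order `k` of the expansion may contain, with powers of `S` at least `d`. -/
noncomputable abbrev gradedSpan (S : SolitonProfile lam) (d k : ℕ) : Submodule ℝ smoothFunctions :=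
  S.trigSpan (parityIcc 0 k) (parityIcc d k)

/-- The members of `gradedSpan` without the harmonic `cos τ`, on which `oscillator` vanishes. -/
noncomputable abbrev nonresonantSpan (S : SolitonProfile lam) (d k : ℕ) :
    Submodule ℝ smoothFunctions :=
  S.trigSpan ((parityIcc 0 k).erase 1) (parityIcc d k)

lemma mul_mem_gradedSpan {d d' k k' : ℕ} {f f' : smoothFunctions} (hf : f ∈ S.gradedSpan d k)
    (hf' : f' ∈ S.gradedSpan d' k') : f * f' ∈ S.gradedSpan (d + d') (k + k') := by
  have add_subset : parityIcc d k + parityIcc d' k' ⊆ parityIcc (d + d') (k + k') := by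
    intro n hn
    obtain ⟨a, ha, b, hb, rfl⟩ := Finset.mem_add.1 hn
    rw [mem_parityIcc] at ha hb ⊢
    omega
  refine trigSpan_mono subset_rfl add_subset (mul_mem_trigSpan ?_ ?_ hf hf')
  all_goals
    intro q hq r hr
    rw [mem_parityIcc] at hq hr ⊢
    omega

lemma coeff_mk_pow_mem_gradedSpan {w : ℕ → smoothFunctions} (hw : ∀ i, w i ∈ S.gradedSpan 1 i)
    (j m : ℕ) : (PowerSeries.mk w ^ j).coeff m ∈ S.gradedSpan j m := by
  induction j generalizing m with
  | zero =>
    rw [pow_zero, PowerSeries.coeff_one]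
    split_ifs with hm
    · have one_eq : (1 : smoothFunctions) = S.mode 0 (X ^ 0) := by
        ext
        simp [mode_apply]
      rw [one_eq, hm]
      exact mode_mem_trigSpan (by decide) (X_pow_mem_polySpan (by decide))
    · exact zero_mem _
  | succ j ih =>
    rw [pow_succ, PowerSeries.coeff_mul]
    refine sum_mem fun ab hab => ?_
    rw [← Finset.HasAntidiagonal.mem_antidiagonal.1 hab, PowerSeries.coeff_mk]
    exact mul_mem_gradedSpan (ih _) (hw _)

lemma gradedSpan_anti {d d' : ℕ} (h : d ≤ d') (k : ℕ) : S.gradedSpan d' k ≤ S.gradedSpan d k :=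
  trigSpan_mono subset_rfl (parityIcc_anti_left h k)

lemma nonresonantSpan_anti {d d' : ℕ} (h : d ≤ d') (k : ℕ) :
    S.nonresonantSpan d' k ≤ S.nonresonantSpan d k :=
  trigSpan_mono subset_rfl (parityIcc_anti_left h k)

lemma laplacian_mem_gradedSpan {d k : ℕ} {f : smoothFunctions} (hf : f ∈ S.gradedSpan d k) :
    laplacian f ∈ S.gradedSpan d (k + 2) :=
  trigSpan_mono (parityIcc_subset_add_two 0 k) subset_rfl <|
    laplacian_mem_trigSpan (parityIcc_subset_add_two d k) (fun _ => add_two_mem_parityIcc) hf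

lemma laplacian_mem_nonresonantSpan {d k : ℕ} {f : smoothFunctions}
    (hf : f ∈ S.nonresonantSpan d k) : laplacian f ∈ S.nonresonantSpan d (k + 2) :=
  trigSpan_mono (Finset.erase_subset_erase 1 (parityIcc_subset_add_two 0 k)) subset_rfl <|
    laplacian_mem_trigSpan (parityIcc_subset_add_two d k) (fun _ => add_two_mem_parityIcc) hf

lemma nonlinearCoeff_mem_gradedSpan (g : ℕ → ℝ) {w : ℕ → smoothFunctions}
    (hw : ∀ i, w i ∈ S.gradedSpan 1 i) (m : ℕ) : nonlinearCoeff g w m ∈ S.gradedSpan 2 m :=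
  sum_mem fun j hj => Submodule.smul_mem _ _ <|
    gradedSpan_anti (Finset.mem_Icc.1 hj).1 m (coeff_mk_pow_mem_gradedSpan hw j m)

lemma eq_zero_of_mem_gradedSpan_zero {f : smoothFunctions} (hf : f ∈ S.gradedSpan 1 0) : f = 0 := by
  obtain ⟨a, ha, rfl⟩ := exists_eq_sum_mode hf
  have polySpan_eq_bot : polySpan (parityIcc 1 0) = ⊥ := by simp [polySpan, parityIcc]
  simp only [polySpan_eq_bot, Submodule.mem_bot] at ha
  simp [ha]

/-- The linearisation at `S` of the amplitude equation `S'' - S + lam * S ^ 3 = 0`, acting on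
functions `p(S(ξ))`, in terms of the polynomial `p`. -/
noncomputable def amplitudeOp (lam : ℝ) : ℝ[X] →ₗ[ℝ] ℝ[X] :=
  xiOp lam - .id + (3 * lam) • LinearMap.mulLeft ℝ (X ^ 2)

lemma amplitudeOp_X_pow (lam : ℝ) (n : ℕ) : amplitudeOp lam (X ^ n) =
    (n ^ 2 - 1 : ℝ) • X ^ n + (lam * (3 - n * (n + 1) / 2)) • X ^ (n + 2) := by
  simp only [amplitudeOp, LinearMap.add_apply, LinearMap.sub_apply, LinearMap.smul_apply,
    LinearMap.id_apply, LinearMap.mulLeft_apply, xiOp_X_pow, ← pow_add, add_comm 2 n]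
  module

-- The coefficient of `X ^ (n + 2)` in `amplitudeOp lam (X ^ n)` vanishes only for `n = 2`.
lemma polySpan_le_map_amplitudeOp (hlam : lam ≠ 0) {k : ℕ} (hk : Odd k) :
    polySpan (parityIcc 2 (k + 2)) ≤ (polySpan (parityIcc 1 k)).map (amplitudeOp lam) := by
  set M := (polySpan (parityIcc 1 k)).map (amplitudeOp lam)
  have X_pow_add_two_mem (n : ℕ) (hn : Odd n) (hnk : n ≤ k) : (X ^ (n + 2) : ℝ[X]) ∈ M := by
    induction n using Nat.strong_induction_on with | _ n ih =>
    have lower_mem : (n ^ 2 - 1 : ℝ) • (X ^ n : ℝ[X]) ∈ M := by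
      obtain _ | _ | l := n
      · exact absurd hn (by decide)
      · simp
      · exact Submodule.smul_mem _ _ (ih l (by omega) (by grind) (by omega))
    have leading_ne_zero : lam * (3 - n * (n + 1) / 2 : ℝ) ≠ 0 := by
      refine mul_ne_zero hlam fun h => ?_
      have eq_six : n * (n + 1) = 6 := by exact_mod_cast (by linarith : (n * (n + 1) : ℝ) = 6)
      have lt_three : n < 3 := by nlinarith
      interval_cases n <;> grind
    have image_mem : amplitudeOp lam (X ^ n) ∈ M :=
      Submodule.mem_map_of_mem (X_pow_mem_polySpan (by rw [mem_parityIcc]; grind))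
    rw [amplitudeOp_X_pow, Submodule.add_mem_iff_right _ lower_mem] at image_mem
    exact (Submodule.smul_mem_iff _ leading_ne_zero).1 image_mem
  refine polySpan_le.2 fun n hn => ?_
  rw [mem_parityIcc] at hn
  obtain ⟨l, rfl⟩ := Nat.exists_eq_add_of_le' hn.1.1
  exact X_pow_add_two_mem l (by grind) (by omega)

/-- The solution of `oscillator u = -2 * g₂ * (S cos τ) * (p(S) cos τ)`, that is, the change one
order later caused by adding `p(S) cos τ` to a term of the expansion. -/
noncomputable def response (S : SolitonProfile lam) (g₂ : ℝ) (p : ℝ[X]) : smoothFunctions :=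
  -g₂ • S.mode 0 (X * p) + (g₂ / 3) • S.mode 2 (X * p)

lemma oscillator_response (g₂ : ℝ) (p : ℝ[X]) :
    oscillator (S.response g₂ p) = -((2 * g₂) • (S.mode 1 X * S.mode 1 p)) := by
  simp only [response, map_add, map_smul, oscillator_mode, mode_mul_mode]
  norm_num
  module

lemma response_mem_gradedSpan (g₂ : ℝ) {k : ℕ} (hk : Odd k) {p : ℝ[X]}
    (hp : p ∈ polySpan (parityIcc 1 k)) : S.response g₂ p ∈ S.gradedSpan 1 (k + 1) := by
  have X_mul_mem : X * p ∈ polySpan (parityIcc 1 (k + 1)) := by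
    rw [← pow_one X]
    refine X_pow_mul_mem_polySpan (fun n hn => ?_) hp
    rw [mem_parityIcc] at hn ⊢
    omega
  refine add_mem (Submodule.smul_mem _ _ (mode_mem_trigSpan ?_ X_mul_mem))
    (Submodule.smul_mem _ _ (mode_mem_trigSpan ?_ X_mul_mem))
  all_goals
    rw [mem_parityIcc]
    grind

lemma mode_one_mul_response (g₂ : ℝ) (p r : ℝ[X]) : S.mode 1 p * S.response g₂ r =
    (-5 / 6 * g₂) • S.mode 1 (X * p * r) + (g₂ / 6) • S.mode 3 (X * p * r) := by
  have mul_comm_left : p * (X * r) = X * p * r := by ring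
  simp only [response, mul_add, mul_smul_comm, mode_mul_mode, mul_comm_left]
  norm_num
  module

lemma mode_one_mul_mode_one_mul_mode_one (p q r : ℝ[X]) :
    S.mode 1 p * S.mode 1 q * S.mode 1 r =
      (3 / 4 : ℝ) • S.mode 1 (p * q * r) + (1 / 4 : ℝ) • S.mode 3 (p * q * r) := by
  simp only [mode_mul_mode, add_mul, smul_mul_assoc]
  norm_num
  module

lemma amplitude_identity {g₂ g₃ : ℝ} (hlam : lam = 5 / 6 * g₂ ^ 2 - 3 / 4 * g₃) (p : ℝ[X]) :
    laplacian (S.mode 1 p) -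
        ((2 * g₂) • (S.mode 1 X * S.response g₂ p + (1 / 2 : ℝ) • S.response g₂ X * S.mode 1 p) +
          (3 * g₃) • (S.mode 1 X ^ 2 * S.mode 1 p)) =
      S.mode 1 (amplitudeOp lam p) - (g₂ ^ 2 / 2 + 3 / 4 * g₃) • S.mode 3 (X ^ 2 * p) := by
  have amplitudeOp_apply : amplitudeOp lam p =
      xiOp lam p - ((1 : ℕ) ^ 2 : ℝ) • p + (3 * lam) • (X ^ 2 * p) := by
    simp [amplitudeOp]
  rw [smul_mul_assoc, mul_comm (S.response _ _), mode_one_mul_response, mode_one_mul_response,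
    pow_two (S.mode 1 X), mode_one_mul_mode_one_mul_mode_one, mul_right_comm X p X, ← pow_two X,
    laplacian_mode, amplitudeOp_apply, map_add, map_smul]
  linear_combination (norm := module) (-3 * hlam) • S.mode 1 (X ^ 2 * p)

/-- The right-hand side of the equation `oscillator (w m) = …` of order `m`. For `m ≤ 1` the
truncated index `m - 2` points to `w 0`, which is meant to be `0`. -/
noncomputable def forcing (g : ℕ → ℝ) (w : ℕ → smoothFunctions) (m : ℕ) : smoothFunctions :=
  laplacian (w (m - 2)) - nonlinearCoeff g w m

/-- A sequence of admissible terms that starts as the formal breather does and solves the equations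
up to order `m`. -/
structure PartialSolution (S : SolitonProfile lam) (g : ℕ → ℝ) (m : ℕ)
    (w : ℕ → smoothFunctions) : Prop where
  mem : ∀ i, w i ∈ S.gradedSpan 1 i
  one : w 1 = S.mode 1 X
  two : w 2 = (1 / 2 : ℝ) • S.response (g 2) X
  equation : ∀ i, 1 ≤ i → i ≤ m → oscillator (w i) = forcing g w i

/-- The sequence `w` with `p(S) cos τ` added to its term `k` and the response to it added to the
next term. -/
noncomputable def perturb (S : SolitonProfile lam) (g₂ : ℝ) (w : ℕ → smoothFunctions) (k : ℕ)
    (p : ℝ[X]) : ℕ → smoothFunctions :=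
  w + Pi.single k (S.mode 1 p) + Pi.single (k + 1) (S.response g₂ p)

lemma perturb_of_lt (g₂ : ℝ) (w : ℕ → smoothFunctions) (p : ℝ[X]) {i k : ℕ} (h : i < k) :
    S.perturb g₂ w k p i = w i := by
  simp [perturb, h.ne, (h.trans k.lt_succ_self).ne]

lemma perturb_self (g₂ : ℝ) (w : ℕ → smoothFunctions) (k : ℕ) (p : ℝ[X]) :
    S.perturb g₂ w k p k = w k + S.mode 1 p := by
  simp [perturb]

lemma perturb_succ (g₂ : ℝ) (w : ℕ → smoothFunctions) (k : ℕ) (p : ℝ[X]) :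
    S.perturb g₂ w k p (k + 1) = w (k + 1) + S.response g₂ p := by
  simp [perturb]

lemma perturb_of_gt (g₂ : ℝ) (w : ℕ → smoothFunctions) (p : ℝ[X]) {i k : ℕ} (h : k + 1 < i) :
    S.perturb g₂ w k p i = w i := by
  simp [perturb, h.ne', (k.lt_succ_self.trans h).ne']

namespace PartialSolution

variable {g : ℕ → ℝ} {m k : ℕ} {w w' : ℕ → smoothFunctions}

lemma zero (h : S.PartialSolution g m w) : w 0 = 0 := eq_zero_of_mem_gradedSpan_zero (h.mem 0)

lemma forcing_congr (h : S.PartialSolution g m w) (hk : 1 ≤ k) (hw : ∀ i < k, w' i = w i) :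
    forcing g w' k = forcing g w k := by
  rw [forcing, forcing, nonlinearCoeff_congr g h.zero hk hw, hw (k - 2) (by omega)]

lemma forcing_mem (h : S.PartialSolution g m w) (k : ℕ) : forcing g w k ∈ S.gradedSpan 1 k := by
  refine sub_mem ?_ (gradedSpan_anti one_le_two k (nonlinearCoeff_mem_gradedSpan g h.mem k))
  obtain hk | hk := lt_or_ge k 2
  · rw [Nat.sub_eq_zero_of_le hk.le, h.zero, map_zero]
    exact zero_mem _
  · obtain ⟨k, rfl⟩ := Nat.exists_eq_add_of_le' hk
    exact laplacian_mem_gradedSpan (h.mem k)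

lemma exists_succ (h : S.PartialSolution g m w) (hm : 2 ≤ m)
    (hf : forcing g w (m + 1) ∈ S.nonresonantSpan 1 (m + 1)) :
    ∃ w', S.PartialSolution g (m + 1) w' ∧ w' (m + 1) ∈ S.nonresonantSpan 1 (m + 1) ∧
      ∀ i ≤ m, w' i = w i := by
  obtain ⟨x, hx, hxf⟩ := trigSpan_le_map_oscillator (Finset.notMem_erase _ _) hf
  have agree (i : ℕ) (hi : i ≤ m) : Function.update w (m + 1) x i = w i :=
    Function.update_of_ne (by omega) _ _
  refine ⟨Function.update w (m + 1) x, ⟨fun i => ?_, ?_, ?_, fun i hi him => ?_⟩, ?_, agree⟩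
  · obtain rfl | hi := eq_or_ne i (m + 1)
    · rw [Function.update_self]
      exact trigSpan_mono (Finset.erase_subset _ _) subset_rfl hx
    · rw [Function.update_of_ne hi]
      exact h.mem i
  · rw [agree 1 (by omega), h.one]
  · rw [agree 2 hm, h.two]
  · rw [h.forcing_congr hi fun l hl => agree l (by omega)]
    obtain rfl | hi' := eq_or_ne i (m + 1)
    · rw [Function.update_self, hxf]
    · rw [Function.update_of_ne hi', h.equation i hi (by omega)]
  · rwa [Function.update_self]

lemma perturb (h : S.PartialSolution g (k + 1) w) (hk : Odd k) (hk' : 3 ≤ k) {p : ℝ[X]}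
    (hp : p ∈ polySpan (parityIcc 1 k)) :
    S.PartialSolution g (k + 1) (S.perturb (g 2) w k p) where
  mem i := by
    obtain hi | rfl | rfl | hi : i < k ∨ i = k ∨ i = k + 1 ∨ k + 1 < i := by omega
    · rw [perturb_of_lt _ _ _ hi]
      exact h.mem i
    · rw [perturb_self]
      exact add_mem (h.mem i) (mode_mem_trigSpan (by rw [mem_parityIcc]; grind) hp)
    · rw [perturb_succ]
      exact add_mem (h.mem _) (response_mem_gradedSpan _ hk hp)
    · rw [perturb_of_gt _ _ _ hi]
      exact h.mem i
  one := by rw [perturb_of_lt _ _ _ (by omega), h.one]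
  two := by rw [perturb_of_lt _ _ _ (by omega), h.two]
  equation i hi hik := by
    have agree (l : ℕ) (hl : l < k) := perturb_of_lt (S := S) (g 2) w p hl
    obtain hi' | rfl | rfl : i < k ∨ i = k ∨ i = k + 1 := by omega
    · rw [h.forcing_congr hi fun l hl => agree l (hl.trans hi'), agree i hi', h.equation i hi hik]
    · rw [h.forcing_congr hi agree, perturb_self, map_add, h.equation i hi hik, oscillator_mode]
      simp
    · rw [perturb_succ, map_add, h.equation _ hi hik, oscillator_response, forcing, forcing,
        nonlinearCoeff_succ_of_agree g h.zero (by omega) agree, agree (k + 1 - 2) (by omega),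
        perturb_self, h.one, add_sub_cancel_left]
      abel

lemma forcing_perturb (h : S.PartialSolution g m w) (hlam : lam = 5 / 6 * g 2 ^ 2 - 3 / 4 * g 3)
    (hk : 3 ≤ k) (p : ℝ[X]) : forcing g (S.perturb (g 2) w k p) (k + 2) =
      forcing g w (k + 2) + S.mode 1 (amplitudeOp lam p) -
        (g 2 ^ 2 / 2 + 3 / 4 * g 3) • S.mode 3 (X ^ 2 * p) := by
  rw [forcing, forcing, nonlinearCoeff_add_two_of_agree g h.zero hk fun l => perturb_of_lt _ _ _,
    Nat.add_sub_cancel, perturb_self, perturb_succ, h.one, h.two, add_sub_cancel_left,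
    add_sub_cancel_left, map_add]
  linear_combination (norm := module) amplitude_identity (S := S) hlam p

lemma forcing_three (h : S.PartialSolution g m w) (hlam : lam = 5 / 6 * g 2 ^ 2 - 3 / 4 * g 3) :
    forcing g w 3 = -(g 2 ^ 2 / 6 + g 3 / 4) • S.mode 3 (X ^ 3) := by
  have xiOp_X : xiOp lam X - ((1 : ℕ) ^ 2 : ℝ) • X = -lam • X ^ 3 := by
    rw [← pow_one X, xiOp_X_pow, ← pow_mul]
    module
  have X_pow_three : (X : ℝ[X]) * X * X = X ^ 3 := by ring
  rw [forcing, nonlinearCoeff_three g h.zero, h.two, h.one, laplacian_mode, xiOp_X, map_smul,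
    mul_smul_comm, mode_one_mul_response, pow_three' (S.mode 1 X),
    mode_one_mul_mode_one_mul_mode_one, X_pow_three]
  linear_combination (norm := module) (-hlam) • S.mode 1 (X ^ 3)

lemma exists_perturb_forcing_mem (h : S.PartialSolution g m w)
    (hlam : lam = 5 / 6 * g 2 ^ 2 - 3 / 4 * g 3) (hlam' : lam ≠ 0) (hk : Odd k) (hk' : 3 ≤ k)
    (hw : w k ∈ S.nonresonantSpan 1 k) : ∃ p ∈ polySpan (parityIcc 1 k),
      forcing g (S.perturb (g 2) w k p) (k + 2) ∈ S.nonresonantSpan 1 (k + 2) := by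
  obtain ⟨_, hy, z, hz, hyz⟩ := Submodule.mem_sup.1 <|
    trigSpan_le_singleton_sup_erase 1 (nonlinearCoeff_mem_gradedSpan g h.mem (k + 2))
  rw [trigSpan_singleton] at hy
  obtain ⟨y, hy, rfl⟩ := hy
  obtain ⟨p, hp, rfl⟩ := polySpan_le_map_amplitudeOp hlam' hk hy
  refine ⟨p, hp, ?_⟩
  have X_sq_mul_mem : X ^ 2 * p ∈ polySpan (parityIcc 1 (k + 2)) :=
    X_pow_mul_mem_polySpan (fun n hn => add_comm 2 n ▸ add_two_mem_parityIcc hn) hp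
  have three_mem : 3 ∈ (parityIcc 0 (k + 2)).erase 1 := by
    rw [Finset.mem_erase, mem_parityIcc]
    grind
  have decomposition : forcing g (S.perturb (g 2) w k p) (k + 2) =
      laplacian (w k) - z - (g 2 ^ 2 / 2 + 3 / 4 * g 3) • S.mode 3 (X ^ 2 * p) := by
    rw [h.forcing_perturb hlam hk', forcing, Nat.add_sub_cancel, ← hyz]
    abel
  rw [decomposition]
  exact sub_mem (sub_mem (laplacian_mem_nonresonantSpan hw) (nonresonantSpan_anti one_le_two _ hz))
    (Submodule.smul_mem _ _ (mode_mem_trigSpan three_mem X_sq_mul_mem))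

lemma exists_add_two (h : S.PartialSolution g k w) (hlam : lam = 5 / 6 * g 2 ^ 2 - 3 / 4 * g 3)
    (hlam' : lam ≠ 0) (hk : Odd k) (hk' : 3 ≤ k) (hw : w k ∈ S.nonresonantSpan 1 k) :
    ∃ w', S.PartialSolution g (k + 2) w' ∧ w' (k + 2) ∈ S.nonresonantSpan 1 (k + 2) ∧
      ∀ i < k, w' i = w i := by
  have forcing_mem : forcing g w (k + 1) ∈ S.nonresonantSpan 1 (k + 1) := by
    have one_notMem : 1 ∉ parityIcc 0 (k + 1) := by
      rw [mem_parityIcc]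
      grind
    rw [nonresonantSpan, Finset.erase_eq_of_notMem one_notMem]
    exact h.forcing_mem (k + 1)
  obtain ⟨w₁, h₁, -, hw₁⟩ := h.exists_succ (by omega) forcing_mem
  obtain ⟨p, hp, hforcing⟩ := h₁.exists_perturb_forcing_mem hlam hlam' hk hk'
    (by rwa [hw₁ k le_rfl])
  obtain ⟨w', h', hw', agree⟩ := (h₁.perturb hk hk' hp).exists_succ (by omega) hforcing
  exact ⟨w', h', hw', fun i hi => by rw [agree i (by omega), perturb_of_lt _ _ _ hi, hw₁ i hi.le]⟩

lemma initial (S : SolitonProfile lam) (g : ℕ → ℝ) : S.PartialSolution g 2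
    (Pi.single 1 (S.mode 1 X) + Pi.single 2 ((1 / 2 : ℝ) • S.response (g 2) X)) where
  mem i := by
    have X_mem : X ∈ polySpan (parityIcc 1 1) := by
      simpa using X_pow_mem_polySpan (show 1 ∈ parityIcc 1 1 by decide)
    obtain _ | _ | _ | i := i
    · simp
    · simpa using mode_mem_trigSpan (S := S) (by decide : 1 ∈ parityIcc 0 1) X_mem
    · simpa using Submodule.smul_mem _ (1 / 2 : ℝ) (response_mem_gradedSpan (g 2) odd_one X_mem)
    · simp
  one := by simp
  two := by simp
  equation i hi hi' := by
    interval_cases i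
    · simp [forcing, nonlinearCoeff, oscillator_mode]
    · rw [forcing, nonlinearCoeff_two g (by simp)]
      simp [oscillator_response, pow_two, mul_smul]

lemma exists_three (S : SolitonProfile lam) (hlam : lam = 5 / 6 * g 2 ^ 2 - 3 / 4 * g 3) :
    ∃ w, S.PartialSolution g 3 w ∧ w 3 ∈ S.nonresonantSpan 1 3 := by
  have forcing_mem := Submodule.smul_mem (S.nonresonantSpan 1 3) (-(g 2 ^ 2 / 6 + g 3 / 4))
    (mode_mem_trigSpan (q := 3) (by decide) (X_pow_mem_polySpan (n := 3) (by decide)))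
  rw [← (initial S g).forcing_three hlam] at forcing_mem
  obtain ⟨w, h, hw, -⟩ := (initial S g).exists_succ le_rfl forcing_mem
  exact ⟨w, h, hw⟩

end PartialSolution

theorem exists_formal_solution (S : SolitonProfile lam) {g : ℕ → ℝ}
    (hlam : lam = 5 / 6 * g 2 ^ 2 - 3 / 4 * g 3) (hlam' : lam ≠ 0) :
    ∃ v : ℕ → smoothFunctions, (∀ k, v k ∈ S.gradedSpan 1 k) ∧ v 1 = S.mode 1 X ∧
      ∀ m, 1 ≤ m → oscillator (v m) = forcing g v m := by
  obtain ⟨w₀, h₀⟩ := PartialSolution.exists_three S hlam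
  obtain ⟨v, hv⟩ := exists_seq_of_forall_exists_extension
    (P := fun n w => S.PartialSolution g (2 * n + 3) w ∧
      w (2 * n + 3) ∈ S.nonresonantSpan 1 (2 * n + 3)) h₀ fun n w ⟨h, hw⟩ => by
        obtain ⟨w', h', hw', agree⟩ := h.exists_add_two hlam hlam' (by grind) (by omega) hw
        exact ⟨w', ⟨h', hw'⟩, fun i hi => agree i (by omega)⟩
  refine ⟨v, fun k => ?_, ?_, fun m hm => ?_⟩
  · obtain ⟨w, ⟨h, -⟩, agree⟩ := hv k
    rw [agree k le_rfl]
    exact h.mem k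
  · obtain ⟨w, ⟨h, -⟩, agree⟩ := hv 1
    rw [agree 1 le_rfl, h.one]
  · obtain ⟨w, ⟨h, -⟩, agree⟩ := hv m
    rw [agree m le_rfl, h.forcing_congr hm fun i hi => agree i hi.le]
    exact h.equation m hm (by omega)

lemma nonlinearCoeff_apply (g : ℕ → ℝ) {w : ℕ → smoothFunctions} (hw : w 0 = 0) (m : ℕ)
    (τ ξ : ℝ) : (nonlinearCoeff g w m).1 τ ξ = ∑ j ∈ Finset.Icc 2 m, g j *
      ∑ c ∈ (Finset.Nat.antidiagonalTuple j m).filter (fun c => ∀ i, c i ≠ 0),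
        ∏ i, (w (c i)).1 τ ξ := by
  simp [nonlinearCoeff, coeff_mk_pow_eq_sum_compositions hw, Finset.sum_apply, Finset.prod_apply]

lemma exists_polynomials_of_mem_gradedSpan {k : ℕ} {f : smoothFunctions}
    (hf : f ∈ S.gradedSpan 1 k) : ∃ a : ℕ → ℝ[X],
      (∀ q ≤ k, (Odd (k + q) → a q = 0) ∧ (a q).natDegree ≤ k ∧
        (∀ n, (a q).coeff n ≠ 0 → n % 2 = k % 2) ∧ (a q).coeff 0 = 0) ∧
      ∀ τ ξ, f.1 τ ξ = ∑ q ∈ Finset.range (k + 1),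
        (a q).eval (S.toFun ξ) * Real.cos (q * τ) := by
  obtain ⟨a, ha, rfl⟩ := exists_eq_sum_mode hf
  have exponent_mem {q n : ℕ} (hn : (a q).coeff n ≠ 0) : (1 ≤ n ∧ n ≤ k) ∧ n % 2 = k % 2 :=
    mem_parityIcc.1 (mem_of_coeff_ne_zero (ha q) hn)
  refine ⟨fun q => if q ∈ parityIcc 0 k then a q else 0, fun q _ => ?_, fun τ ξ => ?_⟩
  · beta_reduce
    split_ifs with hq
    · rw [mem_parityIcc] at hq
      refine ⟨fun hodd => by grind, ?_, fun n hn => (exponent_mem hn).2, ?_⟩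
      · exact natDegree_le_iff_coeff_eq_zero.2 fun n hn =>
          of_not_not fun h => hn.not_ge (exponent_mem h).1.2
      · exact of_not_not fun h => one_ne_zero (Nat.le_zero.1 (exponent_mem h).1.1)
    · simp
  · have parityIcc_subset : parityIcc 0 k ⊆ Finset.range (k + 1) := fun q hq =>
      Finset.mem_range_succ_iff.2 (mem_parityIcc.1 hq).1.2
    rw [← Finset.sum_subset parityIcc_subset fun q _ hq => by simp [hq]]
    simp only [AddSubmonoidClass.coe_finsetSum, Finset.sum_apply, mode_apply]
    exact Finset.sum_congr rfl fun q hq => by rw [if_pos hq]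

lemma apply_tau_add_two_pi {f : smoothFunctions} (hf : f ∈ S.trigSpan Q I) (τ ξ : ℝ) :
    f.1 (τ + 2 * Real.pi) ξ = f.1 τ ξ := by
  obtain ⟨a, -, rfl⟩ := exists_eq_sum_mode hf
  simp [Finset.sum_apply, mode_apply, mul_add, Real.cos_add_nat_mul_two_pi]

lemma apply_neg_tau {f : smoothFunctions} (hf : f ∈ S.trigSpan Q I) (τ ξ : ℝ) :
    f.1 (-τ) ξ = f.1 τ ξ := by
  obtain ⟨a, -, rfl⟩ := exists_eq_sum_mode hf
  simp [Finset.sum_apply, mode_apply]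

lemma apply_neg_xi (hS : Function.Even S.toFun) {f : smoothFunctions} (hf : f ∈ S.trigSpan Q I)
    (τ ξ : ℝ) : f.1 τ (-ξ) = f.1 τ ξ := by
  obtain ⟨a, -, rfl⟩ := exists_eq_sum_mode hf
  simp [Finset.sum_apply, mode_apply, hS ξ]

lemma exists_forall_abs_lt (hS : Tendsto S.toFun (atBot ⊔ atTop) (𝓝 0)) (hI : 0 ∉ I)
    {f : smoothFunctions} (hf : f ∈ S.trigSpan Q I) {δ : ℝ} (hδ : 0 < δ) :
    ∃ A : ℝ, ∀ τ ξ, A ≤ |ξ| → |f.1 τ ξ| < δ := by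
  obtain ⟨a, ha, rfl⟩ := exists_eq_sum_mode hf
  have eval_zero (q : ℕ) : (a q).eval 0 = 0 := by
    rw [← coeff_zero_eq_eval_zero]
    exact of_not_not fun h => hI (mem_of_coeff_ne_zero (ha q) h)
  have bound_tendsto :
      Tendsto (fun ξ => ∑ q ∈ Q, |(a q).eval (S.toFun ξ)|) (atBot ⊔ atTop) (𝓝 0) := by
    have bound_continuous : Continuous fun s => ∑ q ∈ Q, |(a q).eval s| := by fun_prop
    have comp_tendsto := (bound_continuous.tendsto 0).comp hS
    simp only [eval_zero, abs_zero, Finset.sum_const_zero] at comp_tendsto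
    exact comp_tendsto
  rw [← comap_abs_atTop] at bound_tendsto
  obtain ⟨A, -, hA⟩ :=
    (atTop_basis.comap _).eventually_iff.1 (bound_tendsto.eventually_lt_const hδ)
  refine ⟨A, fun τ ξ hξ => lt_of_le_of_lt ?_ (hA hξ)⟩
  simp only [AddSubmonoidClass.coe_finsetSum, Finset.sum_apply, mode_apply]
  refine (Finset.abs_sum_le_sum_abs _ _).trans (Finset.sum_le_sum fun q _ => ?_)
  rw [abs_mul]
  exact mul_le_of_le_one_right (abs_nonneg _) (Real.abs_cos_le_one _)

/-- The profile `√(2 / lam) / cosh ξ`. -/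
noncomputable def sech (hlam : 0 < lam) : SolitonProfile lam where
  toFun ξ := Real.sqrt (2 / lam) / Real.cosh ξ
  contDiff := contDiff_const.div Real.contDiff_cosh fun ξ => (Real.cosh_pos ξ).ne'
  deriv_sq ξ := by
    have sqrt_sq : Real.sqrt (2 / lam) ^ 2 = 2 / lam := Real.sq_sqrt (by positivity)
    rw [(hasDerivAt_div_cosh _ ξ).deriv, neg_sq, mul_pow, tanh_sq, pow_mul _ 2 2, div_pow, sqrt_sq]
    field_simp
  deriv_deriv ξ := by
    have sqrt_sq : Real.sqrt (2 / lam) ^ 2 = 2 / lam := Real.sq_sqrt (by positivity)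
    have deriv_eq : deriv (fun ξ => Real.sqrt (2 / lam) / Real.cosh ξ) =
        fun ξ => -(Real.sqrt (2 / lam) / Real.cosh ξ * Real.tanh ξ) :=
      funext fun ξ => (hasDerivAt_div_cosh _ ξ).deriv
    rw [deriv_eq, ((hasDerivAt_div_cosh _ ξ).fun_mul (hasDerivAt_tanh ξ)).fun_neg.deriv,
      pow_succ _ 2, div_pow, sqrt_sq]
    field_simp
    rw [tanh_sq]
    field_simp
    ring

lemma even_sech (hlam : 0 < lam) : Function.Even (sech hlam).toFun := fun ξ => by
  simp [sech]

lemma tendsto_sech (hlam : 0 < lam) : Tendsto (sech hlam).toFun (atBot ⊔ atTop) (𝓝 0) :=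
  tendsto_cosh.const_div_atTop _

end SolitonProfile

end Modes

theorem first_formal_solution_general (g : ℕ → ℝ)
    (lam : ℝ) (hlam : lam = 5 / 6 * g 2 ^ 2 - 3 / 4 * g 3) (hpos : 0 < lam)
    (S : ℝ → ℝ) (hS : ∀ ξ, S ξ = Real.sqrt (2 / lam) / Real.cosh ξ) :
    ∃ v : ℕ → ℝ → ℝ → ℝ,
      (∀ τ ξ, v 0 τ ξ = 0) ∧
      (∀ k, ContDiff ℝ (⊤ : ℕ∞) fun p : ℝ × ℝ => v k p.1 p.2) ∧
      (∀ τ ξ, v 1 τ ξ = S ξ * Real.cos τ) ∧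
      (∀ k, 1 ≤ k →
        (∀ τ ξ, v k (τ + 2 * Real.pi) ξ = v k τ ξ) ∧
        (∀ τ ξ, v k (-τ) ξ = v k τ ξ) ∧
        (∀ τ ξ, v k τ (-ξ) = v k τ ξ) ∧
        (∀ δ > 0, ∃ A : ℝ, ∀ τ ξ, A ≤ |ξ| → |v k τ ξ| < δ)) ∧
      (∀ k, 1 ≤ k → ∃ a : ℕ → Polynomial ℝ,
        (∀ q ≤ k, (Odd (k + q) → a q = 0) ∧ (a q).natDegree ≤ k ∧
          (∀ n, (a q).coeff n ≠ 0 → n % 2 = k % 2) ∧ (a q).coeff 0 = 0) ∧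
        (∀ τ ξ, v k τ ξ = ∑ q ∈ Finset.range (k + 1),
          (a q).eval (S ξ) * Real.cos (q * τ))) ∧
      (∀ m, 1 ≤ m → ∀ τ ξ,
        deriv (deriv fun τ' => v m τ' ξ) τ + v m τ ξ
          - (deriv (deriv fun τ' => v (m - 2) τ' ξ) τ
             + deriv (deriv fun ξ' => v (m - 2) τ ξ') ξ)
          + ∑ j ∈ Finset.Icc 2 m, g j *
              ∑ c ∈ (Finset.Nat.antidiagonalTuple j m).filter (fun c => ∀ i, c i ≠ 0),
                ∏ i, v (c i) τ ξ = 0) := by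
  obtain rfl : S = (SolitonProfile.sech hpos).toFun := funext hS
  obtain ⟨v, hmem, hone, heq⟩ :=
    (SolitonProfile.sech hpos).exists_formal_solution hlam hpos.ne'
  have hzero : v 0 = 0 := SolitonProfile.eq_zero_of_mem_gradedSpan_zero (hmem 0)
  refine ⟨fun k => (v k).1, fun τ ξ => ?_, fun k => smoothFunctions.contDiff (v k),
    fun τ ξ => ?_, fun k _ => ⟨?_, ?_, ?_, fun δ hδ => ?_⟩,
    fun k _ => SolitonProfile.exists_polynomials_of_mem_gradedSpan (hmem k),
    fun m hm τ ξ => ?_⟩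
  · simp [hzero]
  · simp [hone, SolitonProfile.mode_apply]
  · exact SolitonProfile.apply_tau_add_two_pi (hmem k)
  · exact SolitonProfile.apply_neg_tau (hmem k)
  · exact SolitonProfile.apply_neg_xi (SolitonProfile.even_sech hpos) (hmem k)
  · exact SolitonProfile.exists_forall_abs_lt (SolitonProfile.tendsto_sech hpos)
      (by simp [mem_parityIcc]) (hmem k) hδ
  · have order_m := congrArg (fun f => f.1 τ ξ) (sub_eq_zero.2 (heq m hm))
    rw [SolitonProfile.forcing, ← sub_add] at order_m
    rw [← SolitonProfile.nonlinearCoeff_apply g hzero]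
    exact order_m

/-- Theorem 1, existence of the first formal solution: Let
`g(u) = Σ_{m≥1} g_m u^m` be entire with real coefficients, `g₁ = 1`, and
`λ := (5/6)g₂² − (3/4)g₃ > 0`; set `S(ξ) = √(2/λ)/cosh ξ`. Then there is a sequence of
smooth functions `v_k(τ,ξ)`, with `v₀ = 0`, such that `v₁ = S(ξ)cos τ`; each `v_k`
(`k ≥ 1`) is `2π`-periodic and even in `τ`, even in `ξ`, and tends to `0` uniformly in `τ`
as `|ξ| → ∞`; each `v_k` is of the form `Σ_{q=0}^k a_{kq}(S(ξ))·cos(qτ)` with real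
polynomials `a_{kq}` vanishing for `k+q` odd, of degree `≤ k`, containing only monomials
of degree `≡ k (mod 2)`, and divisible by their variable; and for every `m ≥ 1` the
coefficient of `ε^m` in the scaled equation vanishes:
`∂²_τ v_m + v_m − Δ v_{m−2} + Σ_{j=2}^m g_j Σ_{k₁+⋯+k_j=m, kᵢ≥1} v_{k₁}⋯v_{k_j} = 0`. -/
theorem first_formal_solution (g : ℕ → ℝ) (hg1 : g 1 = 1)
    (hent : ∀ u : ℝ, Summable fun m => g m * u ^ m)
    (lam : ℝ) (hlam : lam = 5 / 6 * g 2 ^ 2 - 3 / 4 * g 3) (hpos : 0 < lam)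
    (S : ℝ → ℝ) (hS : ∀ ξ, S ξ = Real.sqrt (2 / lam) / Real.cosh ξ) :
    ∃ v : ℕ → ℝ → ℝ → ℝ,
      (∀ τ ξ, v 0 τ ξ = 0) ∧
      (∀ k, ContDiff ℝ (⊤ : ℕ∞) fun p : ℝ × ℝ => v k p.1 p.2) ∧
      (∀ τ ξ, v 1 τ ξ = S ξ * Real.cos τ) ∧
      (∀ k, 1 ≤ k →
        (∀ τ ξ, v k (τ + 2 * Real.pi) ξ = v k τ ξ) ∧
        (∀ τ ξ, v k (-τ) ξ = v k τ ξ) ∧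
        (∀ τ ξ, v k τ (-ξ) = v k τ ξ) ∧
        (∀ δ > 0, ∃ A : ℝ, ∀ τ ξ, A ≤ |ξ| → |v k τ ξ| < δ)) ∧
      (∀ k, 1 ≤ k → ∃ a : ℕ → Polynomial ℝ,
        (∀ q ≤ k, (Odd (k + q) → a q = 0) ∧ (a q).natDegree ≤ k ∧
          (∀ n, (a q).coeff n ≠ 0 → n % 2 = k % 2) ∧ (a q).coeff 0 = 0) ∧
        (∀ τ ξ, v k τ ξ = ∑ q ∈ Finset.range (k + 1),
          (a q).eval (S ξ) * Real.cos (q * τ))) ∧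
      (∀ m, 1 ≤ m → ∀ τ ξ,
        deriv (deriv fun τ' => v m τ' ξ) τ + v m τ ξ
          - (deriv (deriv fun τ' => v (m - 2) τ' ξ) τ
             + deriv (deriv fun ξ' => v (m - 2) τ ξ') ξ)
          + ∑ j ∈ Finset.Icc 2 m, g j *
              ∑ c ∈ (Finset.Nat.antidiagonalTuple j m).filter (fun c => ∀ i, c i ≠ 0),
                ∏ i, v (c i) τ ξ = 0) :=
  first_formal_solution_general g lam hlam hpos S hS
end

section
/- Let g(u) = u + Σ_{m≥2} g_m u^m be an entire function with real coefficients. Then there exists a sequence of functions u_l (l ≥ 1) of two real variables (τ, ε) such that: (a) u₁(τ,ε) = cos τ; (b) for each l there exist rational functions c_{l,q}(X) ∈ ℝ(X), 0 ≤ q ≤ l, with c_{l,q} = 0 whenever l + q is odd, such that u_l(τ,ε) = Σ_{q=0}^{l} c_{l,q}(ε)·cos(qτ) wherever the c_{l,q} are defined; and (c) for every l ≥ 1 and every real ε which is not a pole of any c_{l',q} with l' ≤ l, the identity (1−ε²)·∂²_τ u_l(τ,ε) + (1 − l²ε²)·u_l(τ,ε) + Σ_{j=2}^{l} g_j · Σ_{(l₁,…,l_j)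 ∈ (ℤ_{≥1})^j, l₁+⋯+l_j = l} u_{l₁}(τ,ε)·⋯·u_{l_j}(τ,ε) = 0 holds for all τ ∈ ℝ. -/
/-!
Under `X = cos τ` a cosine polynomial `∑ q, c_q cos (qτ)` becomes `∑ q, c_q T_q(X)`, with `T_q` the
Chebyshev polynomials. In this basis, over `K = ℝ(ε)`, the operator
`M_l = (1 - ε²)∂²_τ + (1 - l²ε²)` is diagonal with eigenvalues `1 - q² - ε²(l² - q²)`. These are
nonzero in `K` unless `l = q = 1`, and there is no nonlinear term for `l = 1`, so the triangular
system is solved in `K[X]` by `P_1 = X` and mode-by-mode division. The product formula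
`2 T_a T_b = T_{a+b} + T_{|a-b|}` preserves the degree and parity constraints. Finally, for a real
number `a`, the pairs `(f, f(a))` with `f` regular at `a` form a subalgebra of `K × ℝ`, so a
polynomial identity between elements of `K` specializes to every `a` that is not a pole of them.
-/

open Module Polynomial

section CompositionSum

variable {R A : Type*} [CommSemiring R] [CommSemiring A] [Algebra R A]

/-- The coefficient of `z ^ l` in `∑_{j ≥ 2} g_j (∑_{k ≥ 1} P_k z ^ k) ^ j`, written as a sum over
the compositions of `l`; a composition into `j` parts is encoded as a function `Fin j → ℕ` without
zeros. -/
def compositionSum (g : ℕ → R) (P : ℕ → A) (l : ℕ) : A :=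
  ∑ j ∈ Finset.Icc 2 l, g j •
    ∑ k ∈ (Finset.Nat.antidiagonalTuple j l).filter (fun k => ∀ i, k i ≠ 0), ∏ i, P (k i)

theorem lt_of_mem_antidiagonalTuple {j l : ℕ} (hj : 2 ≤ j) {k : Fin j → ℕ}
    (hk : k ∈ (Finset.Nat.antidiagonalTuple j l).filter (fun k => ∀ i, k i ≠ 0)) (i : Fin j) :
    k i < l := by
  obtain ⟨hsum, hne⟩ := Finset.mem_filter.mp hk
  rw [Finset.Nat.mem_antidiagonalTuple] at hsum
  have : Nontrivial (Fin j) := Fin.nontrivial_iff_two_le.mpr hj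
  obtain ⟨i', hi'⟩ := exists_ne i
  rw [← hsum]
  exact Finset.single_lt_sum hi' (Finset.mem_univ _) (Finset.mem_univ _)
    (Nat.pos_of_ne_zero (hne i')) fun _ _ _ => Nat.zero_le _

theorem compositionSum_congr (g : ℕ → R) {P Q : ℕ → A} {l : ℕ} (h : ∀ m < l, P m = Q m) :
    compositionSum g P l = compositionSum g Q l := by
  refine Finset.sum_congr rfl fun j hj => congrArg (g j • ·) ?_
  exact Finset.sum_congr rfl fun k hk => Finset.prod_congr rfl fun i _ =>
    h _ (lt_of_mem_antidiagonalTuple (Finset.mem_Icc.mp hj).1 hk i)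

theorem map_compositionSum {B : Type*} [CommSemiring B] [Algebra R B] (f : A →ₐ[R] B)
    (g : ℕ → R) (P : ℕ → A) (l : ℕ) :
    f (compositionSum g P l) = compositionSum g (fun m => f (P m)) l := by
  simp only [compositionSum, map_sum, map_smul, map_prod]

theorem compositionSum_mem_graded {K : Type*} [Semiring K] [SMul R K] [Module K A]
    [IsScalarTower R K A] (𝒜 : ℕ → Submodule K A) [SetLike.GradedMonoid 𝒜] (g : ℕ → R)
    {P : ℕ → A} {l : ℕ} (h : ∀ m < l, P m ∈ 𝒜 m) : compositionSum g P l ∈ 𝒜 l := by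
  refine Submodule.sum_mem _ fun j hj =>
    Submodule.smul_of_tower_mem _ _ (Submodule.sum_mem _ fun k hk => ?_)
  have hlt := lt_of_mem_antidiagonalTuple (Finset.mem_Icc.mp hj).1 hk
  rw [← Finset.Nat.mem_antidiagonalTuple.mp (Finset.mem_filter.mp hk).1]
  exact SetLike.prod_mem_graded 𝒜 k _ fun i _ => h _ (hlt i)

theorem compositionSum_mem_subalgebra (S : Subalgebra R A) (g : ℕ → R) {P : ℕ → A} {l : ℕ}
    (h : ∀ m < l, P m ∈ S) : compositionSum g P l ∈ S :=
  have : SetLike.GradedMonoid fun _ : ℕ => Subalgebra.toSubmodule S :=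
    { one_mem := S.one_mem, mul_mem := fun _ _ _ _ => S.mul_mem }
  compositionSum_mem_graded (fun _ => Subalgebra.toSubmodule S) g h

end CompositionSum

section BasisMultiplier

variable {ι K M : Type*}

/-- The linear map that is diagonal in the basis `b`, with eigenvalues `a`. -/
noncomputable def basisMultiplier [CommSemiring K] [AddCommMonoid M] [Module K M] (b : Basis ι K M)
    (a : ι → K) : M →ₗ[K] M :=
  b.constr K fun i => a i • b i

@[simp]
theorem basisMultiplier_basis [CommSemiring K] [AddCommMonoid M] [Module K M] (b : Basis ι K M)
    (a : ι → K) (i : ι) : basisMultiplier b a (b i) = a i • b i :=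
  b.constr_basis K _ i

@[simp]
theorem repr_basisMultiplier [CommSemiring K] [AddCommMonoid M] [Module K M] (b : Basis ι K M)
    (a : ι → K) (x : M) (i : ι) : b.repr (basisMultiplier b a x) i = a i * b.repr x i := by
  classical
  suffices h : Finsupp.lapply i ∘ₗ b.repr.toLinearMap ∘ₗ basisMultiplier b a =
      a i • Finsupp.lapply i ∘ₗ b.repr.toLinearMap from LinearMap.congr_fun h x
  refine b.ext fun j => ?_
  by_cases hij : j = i <;> simp [hij]

theorem support_repr_basisMultiplier_subset [CommSemiring K] [AddCommMonoid M] [Module K M]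
    (b : Basis ι K M) (a : ι → K) (x : M) :
    (b.repr (basisMultiplier b a x)).support ⊆ (b.repr x).support := fun i hi => by
  rw [Finsupp.mem_support_iff, repr_basisMultiplier] at hi
  exact Finsupp.mem_support_iff.mpr (right_ne_zero_of_mul hi)

theorem basisMultiplier_basisMultiplier_inv [Semifield K] [AddCommMonoid M] [Module K M]
    (b : Basis ι K M) {a : ι → K} (ha : ∀ i, a i ≠ 0) (x : M) :
    basisMultiplier b a (basisMultiplier b (fun i => (a i)⁻¹) x) = x :=
  b.ext_elem fun i => by simp [mul_inv_cancel_left₀ (ha i)]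

end BasisMultiplier

section Chebyshev

variable (K : Type*) [Field K] [NeZero (2 : K)]

/-- The Chebyshev polynomials `T_q` as a basis of `K[X]`: under `X = cos τ`, the coordinates of a
polynomial are its cosine Fourier coefficients. -/
noncomputable def chebyshevBasis : Basis ℕ K K[X] :=
  (Chebyshev.chebyshevTsequence K).basis fun q => by
    simp [Chebyshev.chebyshevTsequence, NeZero.ne]

@[simp]
theorem chebyshevBasis_apply (q : ℕ) : chebyshevBasis K q = Chebyshev.T K q :=
  Polynomial.Sequence.basis_eq_self _ _ q

/-- The span of the `T_q` with `q ≤ n` and `q ≡ n` modulo `2`. -/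
noncomputable def chebyshevSpan (n : ℕ) : Submodule K K[X] :=
  Submodule.span K (chebyshevBasis K '' {q | q ≤ n ∧ Even (n + q)})

variable {K}

theorem mem_chebyshevSpan_iff {n : ℕ} {p : K[X]} :
    p ∈ chebyshevSpan K n ↔
      ∀ q, (chebyshevBasis K).repr p q ≠ 0 → q ≤ n ∧ Even (n + q) := by
  rw [chebyshevSpan, Basis.mem_span_image]
  simp [Set.subset_def]

theorem repr_chebyshevBasis_T (q : ℕ) :
    (chebyshevBasis K).repr (Chebyshev.T K q) = Finsupp.single q 1 := by
  rw [← chebyshevBasis_apply, Basis.repr_self]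

theorem eval_eq_sum_repr_chebyshevBasis (p : K[X]) (x : K) :
    p.eval x = ((chebyshevBasis K).repr p).sum fun q a => a * (Chebyshev.T K q).eval x := by
  conv_lhs => rw [← (chebyshevBasis K).linearCombination_repr p]
  simp [Finsupp.linearCombination_apply, Finsupp.sum, eval_finsetSum]

theorem T_mem_chebyshevSpan {n q : ℕ} (hq : q ≤ n) (h : Even (n + q)) :
    Chebyshev.T K q ∈ chebyshevSpan K n :=
  Submodule.subset_span ⟨q, ⟨hq, h⟩, chebyshevBasis_apply K q⟩

theorem T_mul_T_eq_smul_add (a b : ℕ) :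
    Chebyshev.T K a * Chebyshev.T K b =
      (2 : K)⁻¹ • (Chebyshev.T K (a + b : ℕ) + Chebyshev.T K ((a - b : ℤ).natAbs : ℕ)) := by
  rw [Chebyshev.T_natAbs, Nat.cast_add, ← Chebyshev.T_mul_T, mul_assoc, ← C_ofNat, ← smul_eq_C_mul,
    inv_smul_smul₀ (NeZero.ne (2 : K))]

instance chebyshevSpan.gradedMonoid : SetLike.GradedMonoid (chebyshevSpan K) where
  one_mem := by simpa using T_mem_chebyshevSpan (K := K) (n := 0) (q := 0) le_rfl (by simp)
  mul_mem m n p p' hp hp' := by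
    suffices h : chebyshevSpan K m * chebyshevSpan K n ≤ chebyshevSpan K (m + n) from
      h (Submodule.mul_mem_mul hp hp')
    conv_lhs => rw [chebyshevSpan, chebyshevSpan, Submodule.span_mul_span]
    rw [Submodule.span_le]
    rintro _ ⟨_, ⟨a, ⟨ha, hma⟩, rfl⟩, _, ⟨b, ⟨hb, hnb⟩, rfl⟩, rfl⟩
    simp only [chebyshevBasis_apply, T_mul_T_eq_smul_add, SetLike.mem_coe]
    refine Submodule.smul_mem _ _ (Submodule.add_mem _ ?_ ?_) <;>
      exact T_mem_chebyshevSpan (by lia) (by grind)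

theorem basisMultiplier_mem_chebyshevSpan (a : ℕ → K) {n : ℕ} {p : K[X]}
    (hp : p ∈ chebyshevSpan K n) :
    basisMultiplier (chebyshevBasis K) a p ∈ chebyshevSpan K n := by
  rw [mem_chebyshevSpan_iff] at hp ⊢
  exact fun q hq => hp q (right_ne_zero_of_mul (repr_basisMultiplier _ a p q ▸ hq))

end Chebyshev

section FormalSolution

variable {R K : Type*} [CommSemiring R] [Field K] [NeZero (2 : K)] [Algebra R K]

/-- The solution of the triangular system `M_l P_l + compositionSum g P l = 0`, where `M_l` is the
operator `T_q ↦ σ l q • T_q`, started from `P_1 = X`; for `l ≠ 1` the operator `M_l` is inverted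
mode by mode. -/
noncomputable def formalSolution (g : ℕ → R) (σ : ℕ → ℕ → K) (l : ℕ) : K[X] :=
  if l = 1 then X
  else -basisMultiplier (chebyshevBasis K) (fun q => (σ l q)⁻¹)
    (compositionSum g (fun m => if _ : m < l then formalSolution g σ m else 0) l)

variable (g : ℕ → R) (σ : ℕ → ℕ → K)

theorem formalSolution_one : formalSolution g σ 1 = X := by
  rw [formalSolution, if_pos rfl]

theorem formalSolution_of_ne_one {l : ℕ} (hl : l ≠ 1) :
    formalSolution g σ l = -basisMultiplier (chebyshevBasis K) (fun q => (σ l q)⁻¹)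
      (compositionSum g (formalSolution g σ) l) := by
  rw [formalSolution, if_neg hl,
    compositionSum_congr (Q := formalSolution g σ) g fun m hm => dif_pos hm]

theorem formalSolution_mem_chebyshevSpan (l : ℕ) : formalSolution g σ l ∈ chebyshevSpan K l := by
  induction l using Nat.strong_induction_on with
  | _ l ih =>
    by_cases hl : l = 1
    · subst hl
      rw [formalSolution_one, ← Chebyshev.T_one]
      exact T_mem_chebyshevSpan (q := 1) le_rfl (by decide)
    · rw [formalSolution_of_ne_one g σ hl]
      exact neg_mem (basisMultiplier_mem_chebyshevSpan _ (compositionSum_mem_graded _ g ih))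

variable {σ} in
theorem basisMultiplier_formalSolution_add_compositionSum (h_one : σ 1 1 = 0)
    (h_ne : ∀ l ≠ 1, ∀ q, σ l q ≠ 0) (l : ℕ) :
    basisMultiplier (chebyshevBasis K) (σ l) (formalSolution g σ l) +
      compositionSum g (formalSolution g σ) l = 0 := by
  by_cases hl : l = 1
  · subst hl
    have hX : (X : K[X]) = chebyshevBasis K 1 := by simp
    rw [formalSolution_one, hX, basisMultiplier_basis, h_one, zero_smul, zero_add]
    simp [compositionSum]
  · rw [formalSolution_of_ne_one g σ hl, map_neg,
      basisMultiplier_basisMultiplier_inv _ (h_ne l hl), neg_add_cancel]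

end FormalSolution

section Specialization

variable {K : Type*} [Field K]

/-- The graph of evaluation at `ε`, on the rational functions without a pole there. -/
def evalGraph (ε : K) : Subalgebra K (RatFunc K × K) where
  carrier := {p | p.1.denom.eval ε ≠ 0 ∧ p.1.eval (RingHom.id K) ε = p.2}
  mul_mem' {p q} hp hq := by
    refine ⟨fun h => ?_,
      (RatFunc.eval_mul _ _ hp.1 hq.1).trans (congrArg₂ (· * ·) hp.2 hq.2)⟩
    have h_prod := eval_eq_zero_of_dvd_of_eval_eq_zero (RatFunc.denom_mul_dvd p.1 q.1) h
    exact mul_ne_zero hp.1 hq.1 (by rwa [eval_mul] at h_prod)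
  add_mem' {p q} hp hq := by
    refine ⟨fun h => ?_,
      (RatFunc.eval_add _ _ hp.1 hq.1).trans (congrArg₂ (· + ·) hp.2 hq.2)⟩
    have h_prod := eval_eq_zero_of_dvd_of_eval_eq_zero (RatFunc.denom_add_dvd p.1 q.1) h
    exact mul_ne_zero hp.1 hq.1 (by rwa [eval_mul] at h_prod)
  algebraMap_mem' a := by simp [RatFunc.algebraMap_eq_C]

variable {ε : K}

theorem mem_evalGraph_of_eval_denom_ne_zero {f : RatFunc K} (hf : f.denom.eval ε ≠ 0) :
    (f, f.eval (RingHom.id K) ε) ∈ evalGraph ε := ⟨hf, rfl⟩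

theorem algebraMap_mem_evalGraph (p : K[X]) :
    (algebraMap K[X] (RatFunc K) p, p.eval ε) ∈ evalGraph ε := ⟨by simp, by simp⟩

variable [NeZero (2 : RatFunc K)]

/-- The value at `(ε, x)` of a polynomial with coefficients in `K(ε)`, obtained by evaluating its
Chebyshev coefficients at `ε`. Coefficients with a pole at `ε` are evaluated to the junk
value `0`. -/
noncomputable def specialize (ε x : K) (p : (RatFunc K)[X]) : K :=
  ((chebyshevBasis (RatFunc K)).repr p).sum fun q f =>
    f.eval (RingHom.id K) ε * (Chebyshev.T K q).eval x

theorem specialize_T (ε x : K) (q : ℕ) :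
    specialize ε x (Chebyshev.T (RatFunc K) q) = (Chebyshev.T K q).eval x := by
  rw [specialize, repr_chebyshevBasis_T, Finsupp.sum_single_index] <;> simp

theorem specialize_eq_sum_range {n : ℕ} {p : (RatFunc K)[X]}
    (hp : p ∈ chebyshevSpan (RatFunc K) n) (ε x : K) :
    specialize ε x p = ∑ q ∈ Finset.range (n + 1),
      ((chebyshevBasis (RatFunc K)).repr p q).eval (RingHom.id K) ε * (Chebyshev.T K q).eval x := by
  refine Finsupp.sum_of_support_subset _ (fun q hq => ?_) _ fun q _ => by simp
  exact Finset.mem_range_succ_iff.mpr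
    (mem_chebyshevSpan_iff.mp hp q (Finsupp.mem_support_iff.mp hq)).1

theorem eval_specialize_mem_evalGraph {p : (RatFunc K)[X]}
    (hp : ∀ q, ((chebyshevBasis (RatFunc K)).repr p q).denom.eval ε ≠ 0) (x : K) :
    (p.eval (algebraMap K (RatFunc K) x), specialize ε x p) ∈ evalGraph ε := by
  have hsum : (p.eval (algebraMap K (RatFunc K) x), specialize ε x p) =
      ∑ q ∈ ((chebyshevBasis (RatFunc K)).repr p).support,
        (((chebyshevBasis (RatFunc K)).repr p q,
          ((chebyshevBasis (RatFunc K)).repr p q).eval (RingHom.id K) ε) *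
        algebraMap K (RatFunc K × K) ((Chebyshev.T K q).eval x)) := by
    refine Prod.ext ?_ ?_
    · rw [eval_eq_sum_repr_chebyshevBasis, Prod.fst_sum]
      simp only [Finsupp.sum, Prod.fst_mul, Prod.algebraMap_apply]
      simp only [Chebyshev.algebraMap_eval_T]
    · simp only [specialize, Finsupp.sum, Prod.snd_sum, Prod.snd_mul, Prod.algebraMap_apply,
        Algebra.algebraMap_self, RingHom.id_apply]
  rw [hsum]
  exact sum_mem fun q _ => mul_mem (mem_evalGraph_of_eval_denom_ne_zero (hp q))
    (Subalgebra.algebraMap_mem _ _)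

theorem specialize_add_compositionSum_eq_zero {g : ℕ → K} {P : ℕ → (RatFunc K)[X]}
    {Q : (RatFunc K)[X]} {l : ℕ} (h : Q + compositionSum g P l = 0)
    (hQ : ∀ q, ((chebyshevBasis (RatFunc K)).repr Q q).denom.eval ε ≠ 0)
    (hP : ∀ m < l, ∀ q, ((chebyshevBasis (RatFunc K)).repr (P m) q).denom.eval ε ≠ 0) (x : K) :
    specialize ε x Q + compositionSum g (fun m => specialize ε x (P m)) l = 0 := by
  let y := algebraMap K (RatFunc K) x
  let U (m : ℕ) : RatFunc K × K := ((P m).eval y, specialize ε x (P m))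
  have hmem : (Q.eval y, specialize ε x Q) + compositionSum g U l ∈ evalGraph ε :=
    add_mem (eval_specialize_mem_evalGraph hQ x)
      (compositionSum_mem_subalgebra _ g fun m hm => eval_specialize_mem_evalGraph (hP m hm) x)
  have hfst : ((Q.eval y, specialize ε x Q) + compositionSum g U l).1 = 0 := by
    have hU := map_compositionSum (AlgHom.fst K (RatFunc K) K) g U l
    have hP := map_compositionSum ((aeval (R := RatFunc K) y).restrictScalars K) g P l
    simp only [AlgHom.fst_apply, AlgHom.restrictScalars_apply, coe_aeval_eq_eval, U] at hU hP
    rw [Prod.fst_add, hU, ← hP, ← eval_add, h, eval_zero]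
  have hsnd := hmem.2
  rw [hfst, RatFunc.eval_zero, Prod.snd_add] at hsnd
  exact (congrArg _ (map_compositionSum (AlgHom.snd K (RatFunc K) K) g U l).symm).trans hsnd.symm

theorem eval_denom_repr_basisMultiplier_ne_zero (s : ℕ → K[X]) {p : (RatFunc K)[X]}
    (hp : ∀ q, ((chebyshevBasis (RatFunc K)).repr p q).denom.eval ε ≠ 0) (q : ℕ) :
    ((chebyshevBasis (RatFunc K)).repr (basisMultiplier (chebyshevBasis (RatFunc K))
      (fun q => algebraMap K[X] (RatFunc K) (s q)) p) q).denom.eval ε ≠ 0 := by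
  rw [repr_basisMultiplier]
  exact (mul_mem (algebraMap_mem_evalGraph (s q)) (mem_evalGraph_of_eval_denom_ne_zero (hp q))).1

theorem specialize_basisMultiplier (s : ℕ → K[X]) {p : (RatFunc K)[X]}
    (hp : ∀ q, ((chebyshevBasis (RatFunc K)).repr p q).denom.eval ε ≠ 0) (x : K) :
    specialize ε x (basisMultiplier (chebyshevBasis (RatFunc K))
        (fun q => algebraMap K[X] (RatFunc K) (s q)) p) =
      ((chebyshevBasis (RatFunc K)).repr p).sum fun q f =>
        (s q).eval ε * (f.eval (RingHom.id K) ε * (Chebyshev.T K q).eval x) := by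
  rw [specialize, Finsupp.sum_of_support_subset _ (support_repr_basisMultiplier_subset _ _ p) _
    fun q _ => by simp]
  refine Finset.sum_congr rfl fun q _ => ?_
  have hmul : (algebraMap K[X] (RatFunc K) (s q) * (chebyshevBasis (RatFunc K)).repr p q).eval
        (RingHom.id K) ε =
      (s q).eval ε * ((chebyshevBasis (RatFunc K)).repr p q).eval (RingHom.id K) ε :=
    (mul_mem (algebraMap_mem_evalGraph (s q)) (mem_evalGraph_of_eval_denom_ne_zero (hp q))).2
  rw [repr_basisMultiplier, hmul, mul_assoc]

theorem eval_denom_repr_ne_zero_of_le {n : ℕ} {p : (RatFunc K)[X]}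
    (hp : p ∈ chebyshevSpan (RatFunc K) n)
    (h : ∀ q ≤ n, ((chebyshevBasis (RatFunc K)).repr p q).denom.eval ε ≠ 0) (q : ℕ) :
    ((chebyshevBasis (RatFunc K)).repr p q).denom.eval ε ≠ 0 := by
  by_cases hq : (chebyshevBasis (RatFunc K)).repr p q = 0
  · simp [hq]
  · exact h q (mem_chebyshevSpan_iff.mp hp q hq).1

end Specialization

section Breather

/-- The polynomial `1 - q² - ε²(l² - q²)` in `ε`: the factor by which
`(1 - ε²)∂²_τ + (1 - l²ε²)` multiplies `cos (qτ)`. -/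
noncomputable def modeSymbol (l q : ℕ) : ℝ[X] :=
  C (1 - (q : ℝ) ^ 2) - C ((l : ℝ) ^ 2 - (q : ℝ) ^ 2) * X ^ 2

theorem eval_modeSymbol (l q : ℕ) (ε : ℝ) :
    (modeSymbol l q).eval ε = 1 - (q : ℝ) ^ 2 - ((l : ℝ) ^ 2 - (q : ℝ) ^ 2) * ε ^ 2 := by
  simp [modeSymbol]

theorem modeSymbol_one_one : modeSymbol 1 1 = 0 := by simp [modeSymbol]

theorem modeSymbol_ne_zero {l : ℕ} (hl : l ≠ 1) (q : ℕ) : modeSymbol l q ≠ 0 := by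
  intro h
  have h_eval : 1 - (q : ℝ) ^ 2 - ((l : ℝ) ^ 2 - (q : ℝ) ^ 2) * 1 ^ 2 = 0 := by
    rw [← eval_modeSymbol, h, eval_zero]
  have h_sq : (l : ℝ) ^ 2 = 1 := by linarith
  exact hl (by exact_mod_cast (pow_eq_one_iff_of_nonneg l.cast_nonneg two_ne_zero).mp h_sq)

theorem deriv_deriv_sum_mul_cos (s : Finset ℕ) (a : ℕ → ℝ) (τ : ℝ) :
    deriv (deriv fun t => ∑ q ∈ s, a q * Real.cos (q * t)) τ =
      ∑ q ∈ s, -(q : ℝ) ^ 2 * (a q * Real.cos (q * τ)) := by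
  have h_deriv : (deriv fun t => ∑ q ∈ s, a q * Real.cos (q * t)) =
      fun t => ∑ q ∈ s, a q * (-Real.sin (q * t) * q) := by
    funext t
    refine (HasDerivAt.fun_sum fun q _ => ?_).deriv
    exact (((hasDerivAt_id t).const_mul (q : ℝ)).cos.const_mul (a q)).congr_deriv (by simp)
  rw [h_deriv]
  refine (HasDerivAt.fun_sum fun q _ => ?_).deriv
  exact ((((hasDerivAt_id τ).const_mul (q : ℝ)).sin.neg.mul_const (q : ℝ)).const_mul
    (a q)).congr_deriv (by simp only [id, mul_one]; ring)

/-- The operator `M_l = (1 - ε²)∂²_τ + (1 - l²ε²)` on `(RatFunc ℝ)[X]`, under `X = cos τ`. -/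
noncomputable def modeOperator (l : ℕ) : (RatFunc ℝ)[X] →ₗ[RatFunc ℝ] (RatFunc ℝ)[X] :=
  basisMultiplier (chebyshevBasis (RatFunc ℝ)) fun q => algebraMap ℝ[X] (RatFunc ℝ) (modeSymbol l q)

theorem deriv_deriv_specialize_add (l : ℕ) {ε : ℝ} {p : (RatFunc ℝ)[X]}
    (hp : ∀ q, ((chebyshevBasis (RatFunc ℝ)).repr p q).denom.eval ε ≠ 0) (τ : ℝ) :
    (1 - ε ^ 2) * deriv (deriv fun t => specialize ε (Real.cos t) p) τ +
        (1 - (l : ℝ) ^ 2 * ε ^ 2) * specialize ε (Real.cos τ) p =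
      specialize ε (Real.cos τ) (modeOperator l p) := by
  rw [modeOperator, specialize_basisMultiplier _ hp]
  simp only [specialize, Finsupp.sum, Chebyshev.T_real_cos, Int.cast_natCast, eval_modeSymbol]
  rw [deriv_deriv_sum_mul_cos, Finset.mul_sum, Finset.mul_sum, ← Finset.sum_add_distrib]
  exact Finset.sum_congr rfl fun q _ => by ring

theorem second_formal_solution_general (g : ℕ → ℝ) :
    ∃ (u : ℕ → ℝ → ℝ → ℝ) (c : ℕ → ℕ → RatFunc ℝ),
      (∀ τ ε, u 1 τ ε = Real.cos τ) ∧
      (∀ l, 1 ≤ l → ∀ q ≤ l, Odd (l + q) → c l q = 0) ∧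
      (∀ l, 1 ≤ l → ∀ τ ε : ℝ, (∀ q ≤ l, Polynomial.eval ε (c l q).denom ≠ 0) →
        u l τ ε = ∑ q ∈ Finset.range (l + 1),
          RatFunc.eval (RingHom.id ℝ) ε (c l q) * Real.cos (q * τ)) ∧
      (∀ l, 1 ≤ l → ∀ ε : ℝ,
        (∀ l' ≤ l, ∀ q ≤ l', Polynomial.eval ε (c l' q).denom ≠ 0) →
        ∀ τ, (1 - ε ^ 2) * deriv (deriv fun τ' => u l τ' ε) τ
            + (1 - (l : ℝ) ^ 2 * ε ^ 2) * u l τ ε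
            + ∑ j ∈ Finset.Icc 2 l, g j *
                ∑ k ∈ (Finset.Nat.antidiagonalTuple j l).filter (fun k => ∀ i, k i ≠ 0),
                  ∏ i, u (k i) τ ε = 0) := by
  let σ (l q : ℕ) : RatFunc ℝ := algebraMap ℝ[X] (RatFunc ℝ) (modeSymbol l q)
  let P : ℕ → (RatFunc ℝ)[X] := formalSolution g σ
  have hP (l : ℕ) : P l ∈ chebyshevSpan (RatFunc ℝ) l := formalSolution_mem_chebyshevSpan g σ l
  have hPg (l : ℕ) : modeOperator l (P l) + compositionSum g P l = 0 :=
    basisMultiplier_formalSolution_add_compositionSum g (by simp [modeSymbol_one_one])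
      (fun l hl q => RatFunc.algebraMap_ne_zero (modeSymbol_ne_zero hl q)) l
  refine ⟨fun l τ ε => specialize ε (Real.cos τ) (P l),
    fun l q => (chebyshevBasis (RatFunc ℝ)).repr (P l) q, fun τ ε => ?_, fun l _ q _ hq => ?_,
    fun l _ τ ε _ => ?_, fun l _ ε hε τ => ?_⟩
  · have hP_one : P 1 = Chebyshev.T _ (1 : ℕ) := by simp [P, formalSolution_one]
    simp only [hP_one, specialize_T]
    simp
  · by_contra h
    exact Nat.not_even_iff_odd.mpr hq (mem_chebyshevSpan_iff.mp (hP l) q h).2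
  · simp [specialize_eq_sum_range (hP l)]
  · have hreg (m : ℕ) (hm : m ≤ l) := eval_denom_repr_ne_zero_of_le (hP m) (hε m hm)
    rw [deriv_deriv_specialize_add l (hreg l le_rfl)]
    exact specialize_add_compositionSum_eq_zero (hPg l)
      (eval_denom_repr_basisMultiplier_ne_zero _ (hreg l le_rfl)) (fun m hm => hreg m hm.le) _

end Breather

/-- Theorem 2, second formal solution: Let `g(u) = u + Σ_{m≥2} g_m u^m` be
entire with real coefficients. Then there exist functions `u_l(τ,ε)` such that
`u₁ = cos τ`; each `u_l` is of the form `Σ_{q=0}^l c_{l,q}(ε)·cos(qτ)` with rational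
functions `c_{l,q} ∈ ℝ(X)` vanishing when `l + q` is odd, wherever the `c_{l,q}` are
defined; and for every `l ≥ 1` and every real `ε` that is not a pole of any `c_{l',q}`
with `l' ≤ l`, the coefficient of `e^{−lξ}` in the scaled equation vanishes:
`(1−ε²)∂²_τ u_l + (1 − l²ε²)u_l + Σ_{j=2}^l g_j Σ_{l₁+⋯+l_j=l, lᵢ≥1} u_{l₁}⋯u_{l_j} = 0`. -/
theorem second_formal_solution (g : ℕ → ℝ) (hg1 : g 1 = 1)
    (hent : ∀ u : ℝ, Summable fun m => g m * u ^ m) :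
    ∃ (u : ℕ → ℝ → ℝ → ℝ) (c : ℕ → ℕ → RatFunc ℝ),
      (∀ τ ε, u 1 τ ε = Real.cos τ) ∧
      (∀ l, 1 ≤ l → ∀ q ≤ l, Odd (l + q) → c l q = 0) ∧
      (∀ l, 1 ≤ l → ∀ τ ε : ℝ, (∀ q ≤ l, Polynomial.eval ε (c l q).denom ≠ 0) →
        u l τ ε = ∑ q ∈ Finset.range (l + 1),
          RatFunc.eval (RingHom.id ℝ) ε (c l q) * Real.cos (q * τ)) ∧
      (∀ l, 1 ≤ l → ∀ ε : ℝ,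
        (∀ l' ≤ l, ∀ q ≤ l', Polynomial.eval ε (c l' q).denom ≠ 0) →
        ∀ τ, (1 - ε ^ 2) * deriv (deriv fun τ' => u l τ' ε) τ
            + (1 - (l : ℝ) ^ 2 * ε ^ 2) * u l τ ε
            + ∑ j ∈ Finset.Icc 2 l, g j *
                ∑ k ∈ (Finset.Nat.antidiagonalTuple j l).filter (fun k => ∀ i, k i ≠ 0),
                  ∏ i, u (k i) τ ε = 0) :=
  second_formal_solution_general g
end

section
/- Let g(u) = Σ_{m odd, m≥1} g_m u^m be an odd entire function with real coefficients, g₁ = 1, and suppose there exists α > 0 such that |g_m| ≤ α^{m−1}/m! for every odd m. Then for every ε ∈ (0,1) there exist ξ₀ ∈ ℝ and real coefficients a_{l,s}, indexed by odd integers l, s with 1 ≤ s ≤ l, with a_{1,1} = ε, such that: (a) Σ_{l,s} |a_{l,s}|·e^{−lξ} < ∞ for every ξ > ξ₀; and (b) the function u(x,t) := Σ_{l,s odd, s≤l} a_{l,s}·e^{−l·εx}·cos(s·√(1−ε²)·t), defined on the region {(x,t) : εx > ξ₀}, satisfies ∂²_t u − ∂²_x u + g(u) = 0 at every point of that region. In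 particular u is periodic in t with period 2π/√(1−ε²), tends to 0 as x → +∞, and is not identically zero. -/
/-!
On a power series in `e^{-ξ+iτ}` and `e^{-ξ-iτ}`, where `ξ = εx` and `τ = √(1 - ε²) t`, the linear
part of the equation is diagonal: up to sign it multiplies the monomial of total degree `l` and
frequency `s` by `(1 - ε²)s² + ε²l² - 1`. This vanishes on the two monomials of the leading term
and is at least `8ε²` on every other odd monomial, since `s² ≥ 1` and `l ≥ 3` there. A formal
solution is therefore a fixed point of `f ↦ ε e^{-ξ} cos τ + L⁻¹ (h ∘ f)` with `L⁻¹` bounded and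
`h(u) = g(u) - u` of order at least `3`. This map is a contraction for the `X`-adic topology, and
it preserves a small ball of the weighted `ℓ¹` norm `∑ |fₙ| r^|n|`, so its unique fixed point
converges for large `ξ`; the majorant `∑ |hₘ| Mᵐ` plays the part of the sinh-Gordon series.
Uniqueness makes the fixed point symmetric in the two variables, hence real.
-/

namespace SecondFormalSolution

open Finset Filter MvPowerSeries Topology
open scoped ENNReal

section Multiplier

variable {σ R : Type*} [CommSemiring R]

/-- The linear operator multiplying the `n`-th coefficient by `w n`. It stands both for a
constant coefficient differential operator, `w` being its symbol, and for its inverse. -/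
def multiplier (w : (σ →₀ ℕ) → R) : MvPowerSeries σ R →ₗ[R] MvPowerSeries σ R :=
  LinearMap.pi fun n => w n • coeff n

@[simp]
theorem coeff_multiplier (w : (σ →₀ ℕ) → R) (f : MvPowerSeries σ R) (n : σ →₀ ℕ) :
    coeff n (multiplier w f) = w n * coeff n f := rfl

theorem order_le_order_multiplier (w : (σ →₀ ℕ) → R) (f : MvPowerSeries σ R) :
    f.order ≤ (multiplier w f).order :=
  le_order fun n hn => by rw [coeff_multiplier, coeff_of_lt_order hn, mul_zero]

end Multiplier

section WeightedNorm

variable {σ R : Type*} [NormedCommRing R]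

/-- The weighted `ℓ¹` norm `∑ₙ ‖fₙ‖ r^|n|`, an extended real so that no summability has to be
assumed. -/
noncomputable def weightedNorm (r : ℝ≥0∞) (f : MvPowerSeries σ R) : ℝ≥0∞ :=
  ∑' n : σ →₀ ℕ, ‖coeff n f‖ₑ * r ^ n.degree

theorem weightedNorm_monomial (r : ℝ≥0∞) (n : σ →₀ ℕ) (c : R) :
    weightedNorm r (monomial n c) = ‖c‖ₑ * r ^ n.degree := by
  classical
  rw [weightedNorm, tsum_eq_single n fun k hk => by simp [coeff_monomial, hk], coeff_monomial_same]

theorem weightedNorm_add_le (r : ℝ≥0∞) (f g : MvPowerSeries σ R) :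
    weightedNorm r (f + g) ≤ weightedNorm r f + weightedNorm r g := by
  simp only [weightedNorm, ← ENNReal.tsum_add, ← add_mul, map_add]
  gcongr
  exact enorm_add_le _ _

theorem weightedNorm_mul_le (r : ℝ≥0∞) (f g : MvPowerSeries σ R) :
    weightedNorm r (f * g) ≤ weightedNorm r f * weightedNorm r g := by
  classical
  let F (p : (σ →₀ ℕ) × (σ →₀ ℕ)) : ℝ≥0∞ :=
    ‖coeff p.1 f‖ₑ * r ^ p.1.degree * (‖coeff p.2 g‖ₑ * r ^ p.2.degree)
  calc weightedNorm r (f * g)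
      ≤ ∑' n : σ →₀ ℕ, ∑ p ∈ antidiagonal n, F p := by
        refine ENNReal.tsum_le_tsum fun n => ?_
        rw [coeff_mul]
        refine (mul_le_mul_left (enorm_sum_le _ _) _).trans ?_
        rw [sum_mul]
        refine sum_le_sum fun p hp => ?_
        rw [← mem_antidiagonal.1 hp, map_add, pow_add]
        calc ‖coeff p.1 f * coeff p.2 g‖ₑ * (r ^ p.1.degree * r ^ p.2.degree)
            ≤ ‖coeff p.1 f‖ₑ * ‖coeff p.2 g‖ₑ * (r ^ p.1.degree * r ^ p.2.degree) := by
              gcongr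
              exact enorm_smul_le
          _ = F p := by ring
    _ = ∑' p, F p := by
        rw [← HasAntidiagonal.sigmaAntidiagonalEquivProd.tsum_eq, ENNReal.tsum_sigma']
        refine tsum_congr fun n => ?_
        rw [tsum_fintype, ← sum_coe_sort]
        rfl
    _ = weightedNorm r f * weightedNorm r g := by
        rw [weightedNorm, weightedNorm, ← ENNReal.tsum_mul_right, ENNReal.tsum_prod']
        simp only [F, ENNReal.tsum_mul_left]

theorem weightedNorm_pow_le [NormOneClass R] (r : ℝ≥0∞) (f : MvPowerSeries σ R) (m : ℕ) :
    weightedNorm r (f ^ m) ≤ weightedNorm r f ^ m := by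
  induction m with
  | zero => simpa using (weightedNorm_monomial r (0 : σ →₀ ℕ) (1 : R)).le
  | succ m ih =>
    rw [pow_succ, pow_succ]
    exact (weightedNorm_mul_le _ _ _).trans (by gcongr)

theorem weightedNorm_le_of_forall_exists_le_order_sub {r M : ℝ≥0∞} {f : MvPowerSeries σ R}
    (h : ∀ N : ℕ, ∃ g, N ≤ (f - g).order ∧ weightedNorm r g ≤ M) : weightedNorm r f ≤ M := by
  rw [weightedNorm, ENNReal.tsum_eq_iSup_sum]
  refine iSup_le fun s => ?_
  obtain ⟨g, hfg, hg⟩ := h (s.sup (fun n => n.degree + 1))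
  have hcoeff : ∀ n ∈ s, coeff n f = coeff n g := fun n hn => by
    have hlt : n.degree < s.sup fun n => n.degree + 1 :=
      Nat.lt_of_succ_le (le_sup (f := fun n : σ →₀ ℕ => n.degree + 1) hn)
    exact sub_eq_zero.1 (coeff_of_lt_order (lt_of_lt_of_le (mod_cast hlt) hfg))
  rw [sum_congr rfl fun n hn => by rw [hcoeff n hn]]
  exact (ENNReal.sum_le_tsum s).trans hg

/-- The majorant `∑ₘ ‖hₘ‖ Mᵐ` of the power series `h`. -/
noncomputable def majorant (h : PowerSeries R) (M : ℝ≥0∞) : ℝ≥0∞ :=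
  ∑' m, ‖PowerSeries.coeff m h‖ₑ * M ^ m

theorem majorant_mono (h : PowerSeries R) : Monotone (majorant h) := fun M N hMN => by
  unfold majorant
  gcongr

theorem weightedNorm_subst_le [NormOneClass R] (r : ℝ≥0∞) (h : PowerSeries R)
    {f : MvPowerSeries σ R} (hf : constantCoeff f = 0) :
    weightedNorm r (h.subst f) ≤ majorant h (weightedNorm r f) := by
  have hs := PowerSeries.HasSubst.of_constantCoeff_zero hf
  calc weightedNorm r (h.subst f)
      ≤ ∑' (n : σ →₀ ℕ) (m : ℕ),
          ‖PowerSeries.coeff m h‖ₑ * (‖coeff n (f ^ m)‖ₑ * r ^ n.degree) := by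
        refine ENNReal.tsum_le_tsum fun n => ?_
        rw [PowerSeries.coeff_subst hs, ← tsum_eq_finsum (L := .unconditional ℕ)
          (PowerSeries.coeff_subst_finite hs h n)]
        refine (mul_le_mul_left enorm_tsum_le_tsum_enorm _).trans ?_
        rw [← ENNReal.tsum_mul_right]
        refine ENNReal.tsum_le_tsum fun m => ?_
        rw [← mul_assoc]
        gcongr
        exact enorm_smul_le
    _ = ∑' m, ‖PowerSeries.coeff m h‖ₑ * weightedNorm r (f ^ m) := by
        rw [ENNReal.tsum_comm]
        simp only [ENNReal.tsum_mul_left, weightedNorm]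
    _ ≤ majorant h (weightedNorm r f) := by
        unfold majorant
        gcongr
        exact weightedNorm_pow_le _ _ _

theorem weightedNorm_multiplier_le {C : ℝ≥0∞} {w : (σ →₀ ℕ) → R} (hw : ∀ n, ‖w n‖ₑ ≤ C)
    (r : ℝ≥0∞) (f : MvPowerSeries σ R) :
    weightedNorm r (multiplier w f) ≤ C * weightedNorm r f := by
  simp only [weightedNorm, coeff_multiplier, ← ENNReal.tsum_mul_left, ← mul_assoc]
  gcongr with n
  exact (enorm_smul_le (r := w n)).trans (by gcongr; exact hw n)

end WeightedNorm

section FormalContraction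

variable {σ R : Type*} [CommRing R]

/-- A self-map `T` of the power series without constant term that raises the order of a difference.
It is a contraction for the `X`-adic topology. -/
structure IsFormalContraction (T : MvPowerSeries σ R → MvPowerSeries σ R) : Prop where
  constantCoeff_map : ∀ f, constantCoeff f = 0 → constantCoeff (T f) = 0
  order_sub_add_one_le : ∀ f g, constantCoeff f = 0 → constantCoeff g = 0 →
    (f - g).order + 1 ≤ (T f - T g).order

namespace IsFormalContraction

variable {T : MvPowerSeries σ R → MvPowerSeries σ R} (hT : IsFormalContraction T)
include hT

theorem constantCoeff_iterate {f : MvPowerSeries σ R} (hf : constantCoeff f = 0) (N : ℕ) :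
    constantCoeff (T^[N] f) = 0 := by
  induction N with
  | zero => exact hf
  | succ N ih =>
    rw [Function.iterate_succ_apply']
    exact hT.constantCoeff_map _ ih

theorem le_order_iterate_sub_iterate {f g : MvPowerSeries σ R} (hf : constantCoeff f = 0)
    (hg : constantCoeff g = 0) (N : ℕ) : N ≤ (T^[N] f - T^[N] g).order := by
  induction N with
  | zero => simp
  | succ N ih =>
    rw [Function.iterate_succ_apply', Function.iterate_succ_apply', Nat.cast_succ]
    exact (add_le_add_left ih 1).trans (hT.order_sub_add_one_le _ _
      (hT.constantCoeff_iterate hf N) (hT.constantCoeff_iterate hg N))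

theorem eq_of_isFixedPt {f g : MvPowerSeries σ R} (hf0 : constantCoeff f = 0)
    (hg0 : constantCoeff g = 0) (hf : T f = f) (hg : T g = g) : f = g := by
  have hle : (f - g).order + 1 ≤ (f - g).order := by
    simpa only [hf, hg] using hT.order_sub_add_one_le f g hf0 hg0
  rw [← sub_eq_zero, ← order_eq_top_iff]
  by_contra hne
  exact absurd hle (not_le.2 (ENat.lt_add_one_iff hne |>.2 le_rfl))

theorem exists_isFixedPt : ∃ f, constantCoeff f = 0 ∧ T f = f ∧
    ∀ N : ℕ, N ≤ (f - T^[N] 0).order := by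
  let f : MvPowerSeries σ R := fun n => coeff n (T^[n.degree + 1] 0)
  have hcoeff (n : σ →₀ ℕ) : coeff n f = coeff n (T^[n.degree + 1] 0) := rfl
  have hf (N : ℕ) : N ≤ (f - T^[N] 0).order := by
    refine nat_le_order fun n hn => ?_
    obtain ⟨k, rfl⟩ := Nat.exists_eq_add_of_lt hn
    have hle := hT.le_order_iterate_sub_iterate (map_zero _)
      (hT.constantCoeff_iterate (map_zero _) k) (n.degree + 1)
    rw [add_right_comm, Function.iterate_add_apply, map_sub, hcoeff, ← map_sub]
    exact coeff_of_lt_order (lt_of_lt_of_le (mod_cast n.degree.lt_succ_self) hle)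
  have hf0 : constantCoeff f = 0 := by
    rw [← coeff_zero_eq_constantCoeff_apply, hcoeff, coeff_zero_eq_constantCoeff_apply]
    exact hT.constantCoeff_iterate (map_zero _) _
  refine ⟨f, hf0, ?_, hf⟩
  rw [← sub_eq_zero, ← order_eq_top_iff, ENat.eq_top_iff_forall_ge]
  intro N
  have h0 := hT.constantCoeff_iterate (map_zero constantCoeff) N
  have h1 : N ≤ (T f - T^[N + 1] 0).order := by
    rw [Function.iterate_succ_apply']
    exact (hf N).trans (le_self_add.trans (hT.order_sub_add_one_le f _ hf0 h0))
  have h2 : N ≤ (T^[N + 1] 0 - f).order := by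
    rw [← neg_sub, order_neg]
    exact le_trans (by simp) (hf (N + 1))
  rw [← sub_add_sub_cancel (T f) (T^[N + 1] 0) f]
  exact (le_min h1 h2).trans min_order_le_add

end IsFormalContraction

theorem order_sub_add_one_le_order_pow_sub_pow {f g : MvPowerSeries σ R}
    (hf : constantCoeff f = 0) (hg : constantCoeff g = 0) {m : ℕ} (hm : 2 ≤ m) :
    (f - g).order + 1 ≤ (f ^ m - g ^ m).order := by
  rw [← (Commute.all f g).mul_geom_sum₂]
  refine (add_le_add_right ?_ _).trans le_order_mul
  rw [one_le_order_iff_constCoeff_eq_zero, map_sum]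
  refine sum_eq_zero fun i hi => ?_
  rcases Nat.eq_zero_or_pos i with rfl | hi0
  · simp [hg, show m - 1 ≠ 0 by omega]
  · simp [hf, hi0.ne']

theorem coeff_subst_eq_zero_of_degree_le_one {h : PowerSeries R}
    (h0 : PowerSeries.coeff 0 h = 0) (h1 : PowerSeries.coeff 1 h = 0) {f : MvPowerSeries σ R}
    (hf : constantCoeff f = 0) {n : σ →₀ ℕ} (hn : n.degree ≤ 1) :
    coeff n (h.subst f : MvPowerSeries σ R) = 0 := by
  rw [PowerSeries.coeff_subst (.of_constantCoeff_zero hf)]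
  refine finsum_eq_zero_of_forall_eq_zero fun m => ?_
  match m with
  | 0 => rw [h0, zero_smul]
  | 1 => rw [h1, zero_smul]
  | m + 2 =>
    have hlt : n.degree < m + 2 := by omega
    rw [coeff_of_lt_order (lt_of_lt_of_le (mod_cast hlt)
      (le_order_pow_of_constantCoeff_eq_zero (m + 2) hf)), smul_zero]

theorem order_sub_add_one_le_order_subst_sub_subst {h : PowerSeries R}
    (h1 : PowerSeries.coeff 1 h = 0) {f g : MvPowerSeries σ R}
    (hf : constantCoeff f = 0) (hg : constantCoeff g = 0) :
    (f - g).order + 1 ≤ (h.subst f - h.subst g : MvPowerSeries σ R).order := by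
  refine le_order fun n hn => ?_
  rw [map_sub, sub_eq_zero, PowerSeries.coeff_subst (.of_constantCoeff_zero hf),
    PowerSeries.coeff_subst (.of_constantCoeff_zero hg)]
  refine finsum_congr fun m => ?_
  match m with
  | 0 => simp
  | 1 => simp [h1]
  | m + 2 =>
    congr 1
    rw [← sub_eq_zero, ← map_sub]
    exact coeff_of_lt_order
      (hn.trans_le (order_sub_add_one_le_order_pow_sub_pow hf hg (by omega)))

theorem isFormalContraction_add_multiplier_subst {b : MvPowerSeries σ R}
    (hb : constantCoeff b = 0) (w : (σ →₀ ℕ) → R) {h : PowerSeries R}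
    (h0 : PowerSeries.coeff 0 h = 0) (h1 : PowerSeries.coeff 1 h = 0) :
    IsFormalContraction fun f => b + multiplier w (h.subst f) where
  constantCoeff_map f hf := by
    rw [PowerSeries.coeff_zero_eq_constantCoeff_apply] at h0
    rw [map_add, hb, zero_add, ← coeff_zero_eq_constantCoeff_apply, coeff_multiplier,
      coeff_zero_eq_constantCoeff_apply, PowerSeries.constantCoeff_subst_eq_zero hf h h0, mul_zero]
  order_sub_add_one_le f g hf hg := by
    rw [add_sub_add_left_eq_sub, ← map_sub]
    exact (order_sub_add_one_le_order_subst_sub_subst h1 hf hg).trans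
      (order_le_order_multiplier _ _)

end FormalContraction

section FixedPoint

variable {σ R : Type*} [NormedCommRing R] {h : PowerSeries R}

theorem exists_add_multiplier_subst_eq [NormOneClass R] (h0 : PowerSeries.coeff 0 h = 0)
    (h1 : PowerSeries.coeff 1 h = 0) {b : MvPowerSeries σ R} (hb : constantCoeff b = 0)
    {C r M : ℝ≥0∞} {w : (σ →₀ ℕ) → R} (hw : ∀ n, ‖w n‖ₑ ≤ C)
    (hM : weightedNorm r b + C * majorant h M ≤ M) :
    ∃ f, constantCoeff f = 0 ∧ b + multiplier w (h.subst f) = f ∧ weightedNorm r f ≤ M := by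
  have hT := isFormalContraction_add_multiplier_subst hb w h0 h1
  set T := fun f => b + multiplier w (h.subst f)
  have hiterate (N : ℕ) : weightedNorm r (T^[N] 0) ≤ M := by
    induction N with
    | zero => simp [weightedNorm]
    | succ N ih =>
      rw [Function.iterate_succ_apply']
      calc weightedNorm r (T (T^[N] 0))
          ≤ weightedNorm r b + C * weightedNorm r (h.subst (T^[N] 0)) :=
            (weightedNorm_add_le _ _ _).trans (by gcongr; exact weightedNorm_multiplier_le hw _ _)
        _ ≤ weightedNorm r b + C * majorant h M := by
            gcongr
            exact (weightedNorm_subst_le _ _ (hT.constantCoeff_iterate (map_zero _) N)).trans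
              (majorant_mono h ih)
        _ ≤ M := hM
  obtain ⟨f, hf0, hf, hlim⟩ := hT.exists_isFixedPt
  exact ⟨f, hf0, hf, weightedNorm_le_of_forall_exists_le_order_sub fun N =>
    ⟨_, hlim N, hiterate N⟩⟩

theorem majorant_mul_le (h0 : PowerSeries.coeff 0 h = 0) (h1 : PowerSeries.coeff 1 h = 0)
    {θ : ℝ≥0∞} (hθ : θ ≤ 1) (M : ℝ≥0∞) : majorant h (θ * M) ≤ θ ^ 2 * majorant h M := by
  rw [majorant, majorant, ← ENNReal.tsum_mul_left]
  refine ENNReal.tsum_le_tsum fun m => ?_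
  match m with
  | 0 => simp [h0]
  | 1 => simp [h1]
  | m + 2 =>
    calc ‖PowerSeries.coeff (m + 2) h‖ₑ * (θ * M) ^ (m + 2)
        = θ ^ m * (θ ^ 2 * (‖PowerSeries.coeff (m + 2) h‖ₑ * M ^ (m + 2))) := by ring
      _ ≤ θ ^ 2 * (‖PowerSeries.coeff (m + 2) h‖ₑ * M ^ (m + 2)) :=
        mul_le_of_le_one_left zero_le (pow_le_one₀ zero_le hθ)

theorem exists_mul_majorant_le_half (h0 : PowerSeries.coeff 0 h = 0)
    (h1 : PowerSeries.coeff 1 h = 0) {C R₀ : ℝ≥0∞} (hC : C ≠ ∞) (hR₀ : R₀ ≠ 0)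
    (hh : majorant h R₀ ≠ ∞) : ∃ M ≤ R₀, M ≠ 0 ∧ C * majorant h M ≤ M / 2 := by
  obtain ⟨δ, hδ, hδR⟩ := ENNReal.exists_nnreal_pos_mul_lt (ENNReal.mul_ne_top hC hh)
    (ENNReal.half_pos hR₀).ne'
  let θ : ℝ≥0∞ := min δ 1
  have hθ : θ ≠ 0 := (lt_min (by simpa using hδ) one_pos).ne'
  refine ⟨θ * R₀, mul_le_of_le_one_left zero_le (min_le_right _ _), mul_ne_zero hθ hR₀, ?_⟩
  calc C * majorant h (θ * R₀)
      ≤ C * (θ ^ 2 * majorant h R₀) := by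
        gcongr
        exact majorant_mul_le h0 h1 (min_le_right _ _) _
    _ = θ * (θ * (C * majorant h R₀)) := by ring
    _ ≤ θ * (R₀ / 2) := by
        gcongr
        exact le_trans (by gcongr; exact min_le_left _ _) hδR.le
    _ = θ * R₀ / 2 := (mul_div_assoc _ _ _).symm

end FixedPoint

section Parity

variable {σ : Type*}

theorem coeff_pow_eq_zero_of_odd_degree_add {R : Type*} [CommSemiring R] {f : MvPowerSeries σ R}
    (hf : ∀ n, Even n.degree → coeff n f = 0) {m : ℕ} {n : σ →₀ ℕ} (hn : Odd (n.degree + m)) :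
    coeff n (f ^ m) = 0 := by
  classical
  induction m generalizing n with
  | zero =>
    rw [pow_zero, coeff_one, if_neg]
    rintro rfl
    simp at hn
  | succ m ih =>
    rw [pow_succ, coeff_mul]
    refine sum_eq_zero fun p hp => ?_
    rw [← mem_antidiagonal.1 hp, map_add] at hn
    by_cases hp2 : Even p.2.degree
    · rw [hf _ hp2, mul_zero]
    · rw [ih (by grind), zero_mul]

theorem coeff_subst_eq_zero_of_even_degree {R : Type*} [CommRing R] {h : PowerSeries R}
    (hodd : ∀ m, Even m → PowerSeries.coeff m h = 0) {f : MvPowerSeries σ R}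
    (hf : ∀ n, Even n.degree → coeff n f = 0) {n : σ →₀ ℕ} (hn : Even n.degree) :
    coeff n (h.subst f : MvPowerSeries σ R) = 0 := by
  rw [PowerSeries.coeff_subst (.of_constantCoeff_zero (hf 0 (by simp)))]
  refine finsum_eq_zero_of_forall_eq_zero fun m => ?_
  rcases Nat.even_or_odd m with hm | hm
  · rw [hodd m hm, zero_smul]
  · rw [coeff_pow_eq_zero_of_odd_degree_add hf (hn.add_odd hm), smul_zero]

end Parity

section Rename

theorem coeff_equivMapDomain_rename {σ τ R : Type*} [CommSemiring R] (e : σ ≃ τ)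
    (f : MvPowerSeries σ R) (n : σ →₀ ℕ) :
    coeff (n.equivMapDomain e) (rename e f) = coeff n f := by
  simpa [Finsupp.embDomain_eq_mapDomain, Finsupp.equivMapDomain_eq_mapDomain] using
    coeff_embDomain_rename e.toEmbedding f n

variable {σ R : Type*}

theorem rename_multiplier [CommSemiring R] {e : Equiv.Perm σ} {w : (σ →₀ ℕ) → R}
    (hw : ∀ n, w (n.equivMapDomain e) = w n) (f : MvPowerSeries σ R) :
    rename e (multiplier w f) = multiplier w (rename e f) := by
  ext n
  obtain ⟨n, rfl⟩ := (Finsupp.equivCongrLeft e).surjective n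
  simp [coeff_equivMapDomain_rename, hw]

theorem rename_subst {τ : Type*} [CommRing R] (e : σ ≃ τ) (h : PowerSeries R)
    {f : MvPowerSeries σ R} (hf : constantCoeff f = 0) :
    rename e (h.subst f) = (h.subst (rename e f) : MvPowerSeries τ R) := by
  have hf' : constantCoeff (rename e f) = 0 := by rw [constantCoeff_rename, hf]
  ext n
  obtain ⟨n, rfl⟩ := (Finsupp.equivCongrLeft e).surjective n
  simp only [Finsupp.equivCongrLeft_apply, coeff_equivMapDomain_rename, ← map_pow,
    PowerSeries.coeff_subst (.of_constantCoeff_zero hf),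
    PowerSeries.coeff_subst (.of_constantCoeff_zero hf')]

end Rename

section FormalSolution

theorem degree_fin_two (n : Fin 2 →₀ ℕ) : n.degree = n 0 + n 1 := by
  rw [Finsupp.degree_eq_sum, Fin.sum_univ_two]

theorem degree_eq_one_iff {n : Fin 2 →₀ ℕ} :
    n.degree = 1 ↔ n = Finsupp.single 0 1 ∨ n = Finsupp.single 1 1 := by
  simp only [degree_fin_two, Finsupp.ext_iff, Fin.forall_fin_two, Finsupp.single_apply]
  grind

/-- The frequency `n₀ - n₁` of the monomial `n`: the two variables stand for `e^{-ξ+iτ}` and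
`e^{-ξ-iτ}`, so that `n` stands for `e^{-|n|ξ} e^{i(n₀-n₁)τ}`. -/
def frequency (n : Fin 2 →₀ ℕ) : ℤ := n 0 - n 1

theorem abs_frequency_le (n : Fin 2 →₀ ℕ) : |frequency n| ≤ n.degree := by
  rw [degree_fin_two, frequency, abs_le]
  omega

theorem frequency_ne_zero_of_odd_degree {n : Fin 2 →₀ ℕ} (hn : Odd n.degree) :
    frequency n ≠ 0 := by
  rw [degree_fin_two] at hn
  rw [frequency]
  grind

/-- The symbol of `-(1 - ε²)∂_τ² + ε²∂_ξ² - 1`, which is minus the linear part of the equation in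
the variables `ξ = εx` and `τ = √(1 - ε²) t`. -/
noncomputable def symbol (ε : ℝ) (n : Fin 2 →₀ ℕ) : ℝ :=
  (1 - ε ^ 2) * frequency n ^ 2 + ε ^ 2 * n.degree ^ 2 - 1

theorem symbol_of_degree_eq_one (ε : ℝ) {n : Fin 2 →₀ ℕ} (hn : n.degree = 1) :
    symbol ε n = 0 := by
  rcases degree_eq_one_iff.1 hn with rfl | rfl <;> simp [symbol, frequency]

theorem frequency_equivMapDomain_swap (n : Fin 2 →₀ ℕ) :
    frequency (n.equivMapDomain (Equiv.swap 0 1)) = -frequency n := by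
  simp [frequency, Finsupp.equivMapDomain_apply]

theorem degree_equivMapDomain {σ τ : Type*} (e : σ ≃ τ) (n : σ →₀ ℕ) :
    (n.equivMapDomain e).degree = n.degree := by
  rw [Finsupp.equivMapDomain_eq_mapDomain, Finsupp.degree_mapDomain]

theorem symbol_equivMapDomain_swap (ε : ℝ) (n : Fin 2 →₀ ℕ) :
    symbol ε (n.equivMapDomain (Equiv.swap 0 1)) = symbol ε n := by
  simp [symbol, frequency_equivMapDomain_swap, degree_equivMapDomain]

theorem le_symbol_of_odd_degree {ε : ℝ} (hε : ε ^ 2 ≤ 1) {n : Fin 2 →₀ ℕ} (hodd : Odd n.degree)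
    (hn : n.degree ≠ 1) : 8 * ε ^ 2 ≤ symbol ε n := by
  have hfreq : (1 : ℝ) ≤ frequency n ^ 2 := by
    exact_mod_cast Int.add_one_le_iff.2 (sq_pos_of_ne_zero (frequency_ne_zero_of_odd_degree hodd))
  have hdegree : (3 : ℝ) ≤ n.degree := by
    have : 3 ≤ n.degree := by grind
    exact_mod_cast this
  calc 8 * ε ^ 2 = (1 - ε ^ 2) * 1 + ε ^ 2 * 3 ^ 2 - 1 := by ring
    _ ≤ symbol ε n := by unfold symbol; gcongr

/-- The inverse of `symbol ε` on the odd modes other than the leading ones,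
extended by zero. -/
noncomputable def invSymbol (ε : ℝ) (n : Fin 2 →₀ ℕ) : ℝ :=
  if Odd n.degree ∧ n.degree ≠ 1 then (symbol ε n)⁻¹ else 0

theorem invSymbol_equivMapDomain_swap (ε : ℝ) (n : Fin 2 →₀ ℕ) :
    invSymbol ε (n.equivMapDomain (Equiv.swap 0 1)) = invSymbol ε n := by
  simp [invSymbol, symbol_equivMapDomain_swap, degree_equivMapDomain]

theorem enorm_invSymbol_le {ε : ℝ} (hε0 : 0 < ε) (hε1 : ε ^ 2 ≤ 1) (n : Fin 2 →₀ ℕ) :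
    ‖invSymbol ε n‖ₑ ≤ ENNReal.ofReal (8 * ε ^ 2)⁻¹ := by
  rw [invSymbol]
  split_ifs with hn
  · have hle := le_symbol_of_odd_degree hε1 hn.1 hn.2
    have hpos : 0 < 8 * ε ^ 2 := by positivity
    rw [Real.enorm_of_nonneg (inv_nonneg.2 (hpos.le.trans hle))]
    exact ENNReal.ofReal_le_ofReal (inv_anti₀ hpos hle)
  · simp

/-- The leading term `ε e^{-ξ} cos τ`. -/
noncomputable def leadingTerm (ε : ℝ) : MvPowerSeries (Fin 2) ℝ :=
  monomial (Finsupp.single 0 1) (ε / 2) + monomial (Finsupp.single 1 1) (ε / 2)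

theorem coeff_leadingTerm (ε : ℝ) (n : Fin 2 →₀ ℕ) :
    coeff n (leadingTerm ε) = if n.degree = 1 then ε / 2 else 0 := by
  classical
  have hne : (Finsupp.single 0 1 : Fin 2 →₀ ℕ) ≠ Finsupp.single 1 1 :=
    (Finsupp.single_left_injective one_ne_zero).ne zero_ne_one
  simp only [leadingTerm, map_add, coeff_monomial, degree_eq_one_iff]
  split_ifs <;> simp_all

theorem constantCoeff_leadingTerm (ε : ℝ) : constantCoeff (leadingTerm ε) = 0 := by
  simp [← coeff_zero_eq_constantCoeff_apply, coeff_leadingTerm]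

theorem rename_swap_leadingTerm (ε : ℝ) :
    rename (Equiv.swap 0 1) (leadingTerm ε) = leadingTerm ε := by
  ext n
  obtain ⟨n, rfl⟩ := (Finsupp.equivCongrLeft (Equiv.swap 0 1)).surjective n
  simp [coeff_equivMapDomain_rename, coeff_leadingTerm, degree_equivMapDomain]

theorem weightedNorm_leadingTerm_le {ε : ℝ} (hε : 0 ≤ ε) (r : ℝ≥0∞) :
    weightedNorm r (leadingTerm ε) ≤ ENNReal.ofReal ε * r := by
  refine (weightedNorm_add_le _ _ _).trans_eq ?_
  rw [weightedNorm_monomial, weightedNorm_monomial, Real.enorm_of_nonneg (by positivity),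
    Finsupp.degree_single, Finsupp.degree_single, pow_one, ← add_mul,
    ← ENNReal.ofReal_add (by positivity) (by positivity), add_halves]

/-- `f` is the formal second solution for the nonlinear part `h` of `g(u) = u + h(u)`: it has the
leading term `ε e^{-ξ} cos τ`, is even in `τ`, has only odd modes, and solves the equation
coefficientwise. -/
structure IsFormalSolution (ε : ℝ) (h : PowerSeries ℝ) (f : MvPowerSeries (Fin 2) ℝ) : Prop where
  coeff_of_degree_eq_one : ∀ n, n.degree = 1 → coeff n f = ε / 2
  coeff_of_even_degree : ∀ n, Even n.degree → coeff n f = 0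
  rename_swap : rename (Equiv.swap 0 1) f = f
  multiplier_symbol : multiplier (symbol ε) f = h.subst f

theorem isFormalSolution_of_fixedPoint {ε : ℝ} (hε0 : 0 < ε) (hε1 : ε ^ 2 ≤ 1) {h : PowerSeries ℝ}
    (hodd : ∀ m, Even m → PowerSeries.coeff m h = 0) (h1 : PowerSeries.coeff 1 h = 0)
    {f : MvPowerSeries (Fin 2) ℝ} (hf0 : constantCoeff f = 0)
    (hf : leadingTerm ε + multiplier (invSymbol ε) (h.subst f) = f) : IsFormalSolution ε h f := by
  have h0 := hodd 0 (by simp)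
  have hcoeff (n : Fin 2 →₀ ℕ) : coeff n f = (if n.degree = 1 then ε / 2 else 0) +
      invSymbol ε n * coeff n (h.subst f : MvPowerSeries (Fin 2) ℝ) := by
    conv_lhs => rw [← hf, map_add, coeff_leadingTerm, coeff_multiplier]
  have heven (n : Fin 2 →₀ ℕ) (hn : Even n.degree) : coeff n f = 0 := by
    have hn1 : n.degree ≠ 1 := by grind
    simp [hcoeff, invSymbol, hn1, hn]
  refine ⟨fun n hn => by simp [hcoeff, invSymbol, hn], heven, ?_, ?_⟩
  · have hswap0 : constantCoeff (rename (Equiv.swap 0 1) f) = 0 := by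
      rw [constantCoeff_rename, hf0]
    refine (isFormalContraction_add_multiplier_subst (constantCoeff_leadingTerm ε) (invSymbol ε)
      h0 h1).eq_of_isFixedPt hswap0 hf0 ?_ hf
    conv_rhs => rw [← hf]
    rw [map_add, rename_swap_leadingTerm, rename_multiplier (invSymbol_equivMapDomain_swap ε),
      rename_subst _ h hf0]
  · ext n
    rw [coeff_multiplier]
    rcases Nat.even_or_odd n.degree with hn | hn
    · rw [heven n hn, mul_zero, coeff_subst_eq_zero_of_even_degree hodd heven hn]
    by_cases hn1 : n.degree = 1
    · rw [symbol_of_degree_eq_one ε hn1, zero_mul,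
        coeff_subst_eq_zero_of_degree_le_one h0 h1 hf0 hn1.le]
    · have hpos : 0 < symbol ε n :=
        lt_of_lt_of_le (by positivity) (le_symbol_of_odd_degree hε1 hn hn1)
      rw [hcoeff, invSymbol, if_neg hn1, if_pos ⟨hn, hn1⟩, zero_add, mul_inv_cancel_left₀ hpos.ne']

theorem exists_isFormalSolution {ε : ℝ} (hε0 : 0 < ε) (hε1 : ε ^ 2 ≤ 1) {h : PowerSeries ℝ}
    (hodd : ∀ m, Even m → PowerSeries.coeff m h = 0) (h1 : PowerSeries.coeff 1 h = 0)
    {R : ℝ≥0∞} (hR0 : R ≠ 0) (hR : majorant h R ≠ ∞) :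
    ∃ f r, r ≠ 0 ∧ weightedNorm r f ≤ R ∧ IsFormalSolution ε h f := by
  have h0 := hodd 0 (by simp)
  obtain ⟨M, hMR, hM0, hM⟩ := exists_mul_majorant_le_half h0 h1
    (ENNReal.ofReal_ne_top (r := (8 * ε ^ 2)⁻¹)) hR0 hR
  have hε : ENNReal.ofReal ε ≠ 0 := by simpa using hε0
  obtain ⟨f, hf0, hf, hfM⟩ := exists_add_multiplier_subst_eq h0 h1 (constantCoeff_leadingTerm ε)
    (enorm_invSymbol_le hε0 hε1) (r := M / 2 / ENNReal.ofReal ε) (M := M) <| by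
      refine (add_le_add ((weightedNorm_leadingTerm_le hε0.le _).trans_eq ?_) hM).trans_eq
        (ENNReal.add_halves M)
      exact ENNReal.mul_div_cancel hε ENNReal.ofReal_ne_top
  refine ⟨f, _, (ENNReal.div_pos (ENNReal.half_pos hM0).ne' ENNReal.ofReal_ne_top).ne',
    hfM.trans hMR, isFormalSolution_of_fixedPoint hε0 hε1 hodd h1 hf0 hf⟩

end FormalSolution

section Evaluation

variable {σ 𝕜 A : Type*} [NormedField 𝕜] [NormedCommRing A] [NormedAlgebra 𝕜 A]

/-- The value at `z` of the power series `f`, as an unconditional sum in a normed algebra. -/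
noncomputable def evalAt (z : σ → A) (f : MvPowerSeries σ 𝕜) : A :=
  ∑' n, coeff n f • n.prod fun i k => z i ^ k

theorem prod_add_pow {M : Type*} [CommMonoid M] (z : σ → M) (n k : σ →₀ ℕ) :
    ((n + k).prod fun i j => z i ^ j) = (n.prod fun i j => z i ^ j) * k.prod fun i j => z i ^ j :=
  Finsupp.prod_add_index' (fun _ => pow_zero _) fun _ => pow_add _

theorem evalAt_rename {τ : Type*} (e : σ ≃ τ) (z : τ → A) (f : MvPowerSeries σ 𝕜) :
    evalAt z (rename e f) = evalAt (z ∘ e) f := by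
  rw [evalAt, ← (Finsupp.equivCongrLeft e).tsum_eq, evalAt]
  refine tsum_congr fun n => ?_
  rw [Finsupp.equivCongrLeft_apply, coeff_equivMapDomain_rename,
    Finsupp.equivMapDomain_eq_mapDomain, Finsupp.prod_mapDomain_index_inj e.injective]
  rfl

variable [NormOneClass A] {z : σ → A} {r : ℝ≥0∞}

theorem enorm_prod_pow_le (hz : ∀ i, ‖z i‖ₑ ≤ r) (n : σ →₀ ℕ) :
    ‖n.prod fun i k => z i ^ k‖ₑ ≤ r ^ n.degree := by
  induction n using Finsupp.induction_linear with
  | zero => simp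
  | add n k hn hk =>
    rw [prod_add_pow, map_add, pow_add]
    exact (enorm_smul_le (r := n.prod fun i k => z i ^ k)).trans (by gcongr)
  | single i k =>
    rw [Finsupp.prod_single_index (h := fun i k => z i ^ k) (pow_zero _), Finsupp.degree_single]
    induction k with
    | zero => simp
    | succ k ih =>
      rw [pow_succ, pow_succ]
      exact (enorm_smul_le (r := z i ^ k)).trans (by gcongr; exact hz i)

theorem tsum_enorm_le_weightedNorm (hz : ∀ i, ‖z i‖ₑ ≤ r) (f : MvPowerSeries σ 𝕜) :
    ∑' n, ‖coeff n f • n.prod fun i k => z i ^ k‖ₑ ≤ weightedNorm r f := by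
  refine ENNReal.tsum_le_tsum fun n => enorm_smul_le.trans ?_
  gcongr
  exact enorm_prod_pow_le hz n

theorem summable_norm_evalAt (hz : ∀ i, ‖z i‖ₑ ≤ r) {f : MvPowerSeries σ 𝕜}
    (hf : weightedNorm r f ≠ ∞) : Summable fun n => ‖coeff n f • n.prod fun i k => z i ^ k‖ :=
  tsum_enorm_ne_top_iff_summable_norm.1 (ne_top_of_le_ne_top hf (tsum_enorm_le_weightedNorm hz f))

variable [CompleteSpace A]

theorem evalAt_mul (hz : ∀ i, ‖z i‖ₑ ≤ r) {f g : MvPowerSeries σ 𝕜}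
    (hf : weightedNorm r f ≠ ∞) (hg : weightedNorm r g ≠ ∞) :
    evalAt z (f * g) = evalAt z f * evalAt z g := by
  classical
  have hf' := summable_norm_evalAt hz hf
  have hg' := summable_norm_evalAt hz hg
  have hfg := summable_mul_of_summable_norm hf' hg'
  refine Eq.trans ?_ (hf'.of_norm.tsum_mul_tsum_eq_tsum_sum_antidiagonal hg'.of_norm hfg).symm
  refine tsum_congr fun n => ?_
  rw [coeff_mul, sum_smul]
  refine sum_congr rfl fun p hp => ?_
  rw [← mem_antidiagonal.1 hp, prod_add_pow, smul_mul_smul_comm]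

theorem evalAt_pow (hz : ∀ i, ‖z i‖ₑ ≤ r) {f : MvPowerSeries σ 𝕜} (hf : weightedNorm r f ≠ ∞)
    (m : ℕ) : evalAt z (f ^ m) = evalAt z f ^ m := by
  classical
  induction m with
  | zero =>
    rw [pow_zero, pow_zero, evalAt, tsum_eq_single 0 fun n hn => by simp [coeff_one, hn]]
    simp
  | succ m ih =>
    have hfm := ne_top_of_le_ne_top (ENNReal.pow_ne_top hf) (weightedNorm_pow_le r f m)
    rw [pow_succ, pow_succ, evalAt_mul hz hfm hf, ih]

theorem hasSum_evalAt_subst (hz : ∀ i, ‖z i‖ₑ ≤ r) {h : PowerSeries 𝕜}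
    {f : MvPowerSeries σ 𝕜} (hf0 : constantCoeff f = 0) (hf : weightedNorm r f ≠ ∞)
    (hh : majorant h (weightedNorm r f) ≠ ∞) :
    HasSum (fun m => PowerSeries.coeff m h • evalAt z f ^ m) (evalAt z (h.subst f)) := by
  have hs := PowerSeries.HasSubst.of_constantCoeff_zero hf0
  let F (n : σ →₀ ℕ) (m : ℕ) : A :=
    PowerSeries.coeff m h • coeff n (f ^ m) • n.prod fun i k => z i ^ k
  have hF : Summable (Function.uncurry F) := by
    refine .of_norm (tsum_enorm_ne_top_iff_summable_norm.1 (ne_top_of_le_ne_top hh ?_))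
    rw [ENNReal.tsum_prod', ENNReal.tsum_comm]
    refine ENNReal.tsum_le_tsum fun m => ?_
    calc ∑' n, ‖F n m‖ₑ
        ≤ ∑' n, ‖PowerSeries.coeff m h‖ₑ * ‖coeff n (f ^ m) • n.prod fun i k => z i ^ k‖ₑ :=
          ENNReal.tsum_le_tsum fun n => enorm_smul_le
      _ ≤ ‖PowerSeries.coeff m h‖ₑ * weightedNorm r f ^ m := by
          rw [ENNReal.tsum_mul_left]
          gcongr
          exact (tsum_enorm_le_weightedNorm hz _).trans (weightedNorm_pow_le r f m)
  have hrow (m : ℕ) : ∑' n, F n m = PowerSeries.coeff m h • evalAt z f ^ m := by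
    have hfm := ne_top_of_le_ne_top (ENNReal.pow_ne_top hf) (weightedNorm_pow_le r f m)
    rw [← evalAt_pow hz hf, evalAt, (summable_norm_evalAt hz hfm).of_norm.tsum_const_smul]
  have hcolumn (n : σ →₀ ℕ) : ∑' m, F n m =
      coeff n (h.subst f : MvPowerSeries σ 𝕜) • n.prod fun i k => z i ^ k := by
    have hfin := PowerSeries.coeff_subst_finite hs h n
    rw [PowerSeries.coeff_subst hs, ← tsum_eq_finsum (L := .unconditional ℕ) hfin,
      ← (summable_of_hasFiniteSupport hfin).tsum_smul_const]
    simp only [F, smul_assoc]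
  have hvalue : evalAt z (h.subst f) = ∑' m, PowerSeries.coeff m h • evalAt z f ^ m :=
    calc evalAt z (h.subst f) = ∑' n, ∑' m, F n m := by simp only [hcolumn, evalAt]
      _ = ∑' m, ∑' n, F n m := hF.tsum_comm.symm
      _ = ∑' m, PowerSeries.coeff m h • evalAt z f ^ m := by simp only [hrow]
  rw [hvalue]
  exact (funext hrow ▸ hF.prod_symm.prod).hasSum

end Evaluation

section Waves

open scoped ComplexConjugate

/-- The values `e^{-ξ+iτ}` and `e^{-ξ-iτ}` of the two variables. -/
noncomputable def wavePoint (ξ τ : ℝ) : Fin 2 → ℂ :=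
  ![Complex.exp (-ξ + τ * Complex.I), Complex.exp (-ξ - τ * Complex.I)]

theorem enorm_wavePoint (ξ τ : ℝ) (i : Fin 2) :
    ‖wavePoint ξ τ i‖ₑ = ENNReal.ofReal (Real.exp (-ξ)) := by
  rw [← ofReal_norm]
  fin_cases i <;> simp [wavePoint, Complex.norm_exp]

theorem conj_wavePoint (ξ τ : ℝ) (i : Fin 2) :
    conj (wavePoint ξ τ i) = wavePoint ξ τ (Equiv.swap 0 1 i) := by
  fin_cases i <;> simp [wavePoint, ← Complex.exp_conj, sub_eq_add_neg]

theorem prod_wavePoint_pow (ξ τ : ℝ) (n : Fin 2 →₀ ℕ) :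
    (n.prod fun i k => wavePoint ξ τ i ^ k) =
      Real.exp (-n.degree * ξ) * Complex.exp ((frequency n * τ : ℝ) * Complex.I) := by
  rw [Finsupp.prod_fintype _ _ (by simp), Fin.prod_univ_two, degree_fin_two, frequency]
  simp only [wavePoint, Matrix.cons_val_zero, Matrix.cons_val_one, ← Complex.exp_nat_mul,
    Complex.ofReal_exp, ← Complex.exp_add]
  push_cast
  ring_nf

theorem conj_evalAt_wavePoint (ξ τ : ℝ) (f : MvPowerSeries (Fin 2) ℝ) :
    conj (evalAt (wavePoint ξ τ) f) = evalAt (wavePoint ξ τ) (rename (Equiv.swap 0 1) f) := by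
  rw [evalAt_rename, evalAt, evalAt, Complex.conj_tsum]
  refine tsum_congr fun n => ?_
  simp [Complex.real_smul, Finsupp.prod, conj_wavePoint]

theorem summable_coeff_mul_exp {ξ : ℝ} {r : ℝ≥0∞}
    (hr : ENNReal.ofReal (Real.exp (-ξ)) ≤ r) {f : MvPowerSeries (Fin 2) ℝ}
    (hf : weightedNorm r f ≠ ∞) : Summable fun n => coeff n f * Real.exp (-n.degree * ξ) := by
  have hz (i : Fin 2) : ‖wavePoint ξ 0 i‖ₑ ≤ r := (enorm_wavePoint ξ 0 i).trans_le hr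
  refine .of_norm ((summable_norm_evalAt hz hf).congr fun n => ?_)
  rw [norm_smul, prod_wavePoint_pow, norm_mul, norm_mul, Complex.norm_exp_ofReal_mul_I, mul_one,
    Complex.norm_real]

/-- The wave `∑ₙ fₙ e^{-|n|ξ} cos((n₀-n₁)τ)`, which is the value of `f` at `e^{-ξ±iτ}` when `f` is
symmetric. -/
noncomputable def wave (f : MvPowerSeries (Fin 2) ℝ) (ξ τ : ℝ) : ℝ :=
  ∑' n, coeff n f * Real.exp (-n.degree * ξ) * Real.cos (frequency n * τ)

variable {ξ : ℝ} {r : ℝ≥0∞} {f : MvPowerSeries (Fin 2) ℝ}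

theorem evalAt_wavePoint (hr : ENNReal.ofReal (Real.exp (-ξ)) ≤ r) (hf : weightedNorm r f ≠ ∞)
    (hswap : rename (Equiv.swap 0 1) f = f) (τ : ℝ) :
    evalAt (wavePoint ξ τ) f = wave f ξ τ := by
  have hz (i : Fin 2) : ‖wavePoint ξ τ i‖ₑ ≤ r := (enorm_wavePoint ξ τ i).trans_le hr
  refine Complex.ext ?_ ?_
  · rw [Complex.ofReal_re, evalAt, Complex.re_tsum (summable_norm_evalAt hz hf).of_norm, wave]
    refine tsum_congr fun n => ?_
    rw [prod_wavePoint_pow, Complex.real_smul, ← mul_assoc, ← Complex.ofReal_mul,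
      Complex.re_ofReal_mul, Complex.exp_ofReal_mul_I_re]
  · rw [Complex.ofReal_im, ← Complex.conj_eq_iff_im, conj_evalAt_wavePoint, hswap]

theorem hasSum_coeff_mul_wave_pow (hr : ENNReal.ofReal (Real.exp (-ξ)) ≤ r)
    (hf : weightedNorm r f ≠ ∞) (hf0 : constantCoeff f = 0)
    (hswap : rename (Equiv.swap 0 1) f = f) {h : PowerSeries ℝ}
    (hh : majorant h (weightedNorm r f) ≠ ∞) (τ : ℝ) :
    HasSum (fun m => PowerSeries.coeff m h * wave f ξ τ ^ m) (wave (h.subst f) ξ τ) := by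
  have hz (i : Fin 2) : ‖wavePoint ξ τ i‖ₑ ≤ r := (enorm_wavePoint ξ τ i).trans_le hr
  have hsubst := ne_top_of_le_ne_top hh (weightedNorm_subst_le r h hf0)
  have hsum := hasSum_evalAt_subst hz hf0 hf hh
  rw [evalAt_wavePoint hr hf hswap,
    evalAt_wavePoint hr hsubst (by rw [rename_subst _ _ hf0, hswap])] at hsum
  rw [← Complex.hasSum_ofReal]
  simpa only [Complex.real_smul, Complex.ofReal_mul, Complex.ofReal_pow] using hsum

theorem exists_ofReal_exp_neg_le (hr : r ≠ 0) :
    ∃ ξ₀ : ℝ, ∀ ξ, ξ₀ ≤ ξ → ENNReal.ofReal (Real.exp (-ξ)) ≤ r := by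
  have hlim : Tendsto (fun ξ : ℝ => ENNReal.ofReal (Real.exp (-ξ))) atTop (𝓝 0) := by
    simpa using ENNReal.tendsto_ofReal
      (Real.tendsto_exp_atBot.comp tendsto_neg_atTop_atBot)
  exact eventually_atTop.1 (hlim.eventually_le_const (pos_iff_ne_zero.2 hr))

end Waves

section TrigonometricSeries

variable {ι : Type*} {b s : ι → ℝ}

theorem summable_mul_cos (hb : Summable b) (θ : ι → ℝ) :
    Summable fun i => b i * Real.cos (θ i) := by
  refine .of_norm_bounded hb.norm fun i => ?_
  rw [norm_mul]
  exact mul_le_of_le_one_right (norm_nonneg _) (Real.abs_cos_le_one _)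

theorem hasDerivAt_tsum_mul_cos_add (hb : Summable b) (hbs : Summable fun i => b i * s i)
    (φ τ : ℝ) :
    HasDerivAt (fun τ => ∑' i, b i * Real.cos (s i * τ + φ))
      (∑' i, b i * s i * Real.cos (s i * τ + (φ + Real.pi / 2))) τ := by
  refine hasDerivAt_tsum (g := fun i τ => b i * Real.cos (s i * τ + φ))
    (g' := fun i τ => b i * s i * Real.cos (s i * τ + (φ + Real.pi / 2))) (y₀ := 0) hbs.norm
    (fun i y => ?_) (fun i y => ?_)
    (summable_mul_cos hb _) τ
  · have hphase : HasDerivAt (fun y => s i * y + φ) (s i) y := by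
      simpa using ((hasDerivAt_id y).const_mul (s i)).add_const φ
    refine (hphase.cos.const_mul (b i)).congr_deriv ?_
    rw [← add_assoc, Real.cos_add_pi_div_two]
    ring
  · rw [norm_mul]
    exact mul_le_of_le_one_right (norm_nonneg _) (Real.abs_cos_le_one _)

theorem deriv_deriv_tsum_mul_cos (hb : Summable b) (hbs : Summable fun i => b i * s i)
    (hbss : Summable fun i => b i * s i * s i) (τ : ℝ) :
    deriv (deriv fun τ => ∑' i, b i * Real.cos (s i * τ)) τ =
      -∑' i, b i * s i * s i * Real.cos (s i * τ) := by
  have hderiv (τ : ℝ) := (hasDerivAt_tsum_mul_cos_add hb hbs 0 τ).deriv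
  simp only [add_zero] at hderiv
  rw [funext hderiv, (hasDerivAt_tsum_mul_cos_add hbs hbss _ τ).deriv, ← tsum_neg]
  refine tsum_congr fun i => ?_
  rw [zero_add, add_halves, Real.cos_add_pi, mul_neg]

theorem tsum_mul_cos_add_period (b : ι → ℝ) (s : ι → ℕ) {ω : ℝ} (hω : ω ≠ 0) (t : ℝ) :
    ∑' i, b i * Real.cos (s i * (ω * (t + 2 * Real.pi / ω))) =
      ∑' i, b i * Real.cos (s i * (ω * t)) := by
  refine tsum_congr fun i => ?_
  rw [mul_add ω, mul_div_cancel₀ _ hω, mul_add, Real.cos_add_nat_mul_two_pi]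

end TrigonometricSeries

section ExponentialSeries

variable {ι : Type*} {c l : ι → ℝ} {ξ₀ : ℝ}

theorem summable_rate_mul (hl : ∀ i, 0 ≤ l i)
    (hc : ∀ ξ, ξ₀ < ξ → Summable fun i => c i * Real.exp (-l i * ξ)) {ξ : ℝ} (hξ : ξ₀ < ξ) :
    Summable fun i => l i * c i * Real.exp (-l i * ξ) := by
  obtain ⟨η, hη, hηξ⟩ := exists_between hξ
  refine .of_norm_bounded ((hc η hη).norm.mul_left (ξ - η)⁻¹) fun i => ?_
  have hexp : l i ≤ (ξ - η)⁻¹ * Real.exp (l i * (ξ - η)) := by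
    rw [le_inv_mul_iff₀ (sub_pos.2 hηξ), mul_comm]
    exact (le_add_of_nonneg_right zero_le_one).trans (Real.add_one_le_exp _)
  calc ‖l i * c i * Real.exp (-l i * ξ)‖
      = l i * (|c i| * Real.exp (-l i * ξ)) := by
        rw [mul_assoc, norm_mul, norm_mul, Real.norm_of_nonneg (hl i),
          Real.norm_of_nonneg (Real.exp_nonneg _), Real.norm_eq_abs]
    _ ≤ (ξ - η)⁻¹ * Real.exp (l i * (ξ - η)) * (|c i| * Real.exp (-l i * ξ)) := by gcongr
    _ = (ξ - η)⁻¹ * ‖c i * Real.exp (-l i * η)‖ := by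
        rw [norm_mul, Real.norm_of_nonneg (Real.exp_nonneg _), Real.norm_eq_abs, mul_assoc,
          mul_left_comm (Real.exp _), ← Real.exp_add]
        ring_nf

theorem hasDerivAt_tsum_mul_exp (hl : ∀ i, 0 ≤ l i)
    (hc : ∀ ξ, ξ₀ < ξ → Summable fun i => c i * Real.exp (-l i * ξ)) {ξ : ℝ} (hξ : ξ₀ < ξ) :
    HasDerivAt (fun ξ => ∑' i, c i * Real.exp (-l i * ξ))
      (-∑' i, l i * c i * Real.exp (-l i * ξ)) ξ := by
  obtain ⟨η, hη, hηξ⟩ := exists_between hξ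
  rw [← tsum_neg]
  refine hasDerivAt_tsum_of_isPreconnected (g := fun i ξ => c i * Real.exp (-l i * ξ))
    (g' := fun i ξ => -(l i * c i * Real.exp (-l i * ξ))) (t := Set.Ioi η)
    (summable_rate_mul hl hc hη).norm isOpen_Ioi isPreconnected_Ioi
    (fun i y _ => ?_) (fun i y hy => ?_) hηξ (hc ξ hξ) hηξ
  · have hphase : HasDerivAt (fun y => -l i * y) (-l i) y := by
      simpa using (hasDerivAt_id y).const_mul (-l i)
    exact (hphase.exp.const_mul (c i)).congr_deriv (by ring)
  · rw [norm_neg, norm_mul, norm_mul _ (Real.exp _), Real.norm_of_nonneg (Real.exp_nonneg _),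
      Real.norm_of_nonneg (Real.exp_nonneg _)]
    exact mul_le_mul_of_nonneg_left (Real.exp_le_exp.2
      (mul_le_mul_of_nonpos_left hy.le (neg_nonpos.2 (hl i)))) (norm_nonneg _)

theorem deriv_deriv_tsum_mul_exp (hl : ∀ i, 0 ≤ l i)
    (hc : ∀ ξ, ξ₀ < ξ → Summable fun i => c i * Real.exp (-l i * ξ)) {ξ : ℝ} (hξ : ξ₀ < ξ) :
    deriv (deriv fun ξ => ∑' i, c i * Real.exp (-l i * ξ)) ξ =
      ∑' i, l i * (l i * c i) * Real.exp (-l i * ξ) := by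
  have hderiv : deriv (fun ξ => ∑' i, c i * Real.exp (-l i * ξ)) =ᶠ[𝓝 ξ]
      fun ξ => -∑' i, l i * c i * Real.exp (-l i * ξ) := by
    filter_upwards [Ioi_mem_nhds hξ] with η hη
    exact (hasDerivAt_tsum_mul_exp hl hc hη).deriv
  have hc' (ξ : ℝ) (hξ : ξ₀ < ξ) := summable_rate_mul hl hc hξ
  rw [hderiv.deriv_eq, (hasDerivAt_tsum_mul_exp hl hc' hξ).fun_neg.deriv, neg_neg]

theorem tendsto_tsum_mul_exp_sub {d ξ₁ : ℝ} (hl : ∀ i, c i ≠ 0 → d ≤ l i)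
    (hc : Summable fun i => c i * Real.exp (-l i * ξ₁)) :
    Tendsto (fun ξ => ∑' i, c i * Real.exp (-(l i - d) * ξ)) atTop
      (𝓝 (∑' i, if l i = d then c i else 0)) := by
  have hbound : Summable fun i => Real.exp (d * ξ₁) * ‖c i * Real.exp (-l i * ξ₁)‖ :=
    hc.norm.mul_left _
  refine tendsto_tsum_of_dominated_convergence hbound (fun i => ?_) ?_
  · split_ifs with hi
    · simp [hi]
    by_cases hci : c i = 0
    · simp [hci]
    have hpos : 0 < l i - d := sub_pos.2 ((hl i hci).lt_of_ne' hi)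
    simpa using (Real.tendsto_exp_atBot.comp
      (tendsto_id.const_mul_atTop_of_neg (neg_lt_zero.2 hpos))).const_mul (c i)
  · filter_upwards [eventually_ge_atTop ξ₁] with ξ hξ i
    by_cases hci : c i = 0
    · simp [hci]
    have hle : -(l i - d) * ξ ≤ d * ξ₁ + -l i * ξ₁ := by
      nlinarith [mul_nonneg (sub_nonneg.2 (hl i hci)) (sub_nonneg.2 hξ)]
    rw [norm_mul, norm_mul, mul_left_comm, Real.norm_of_nonneg (Real.exp_nonneg _),
      Real.norm_of_nonneg (Real.exp_nonneg _), ← Real.exp_add]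
    gcongr

theorem exists_forall_abs_tsum_mul_exp_mul_cos_lt (hl : ∀ i, c i ≠ 0 → 0 < l i)
    (hc : ∀ ξ, ξ₀ < ξ → Summable fun i => c i * Real.exp (-l i * ξ)) {δ : ℝ} (hδ : 0 < δ) :
    ∃ A, ∀ ξ, A ≤ ξ → ∀ θ : ι → ℝ,
      |∑' i, c i * Real.exp (-l i * ξ) * Real.cos (θ i)| < δ := by
  have habs (ξ : ℝ) (hξ : ξ₀ < ξ) : Summable fun i => |c i| * Real.exp (-l i * ξ) :=
    (hc ξ hξ).abs.congr fun i => by rw [abs_mul, Real.abs_exp]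
  have hlim := tendsto_tsum_mul_exp_sub (d := 0) (fun i hi => (hl i (abs_ne_zero.1 hi)).le)
    (habs _ (lt_add_one ξ₀))
  have hzero (i : ι) : (if l i = 0 then |c i| else 0) = 0 := by
    by_cases hci : c i = 0
    · simp [hci]
    · exact if_neg (hl i hci).ne'
  simp only [hzero, tsum_zero, sub_zero] at hlim
  obtain ⟨A, hA⟩ := eventually_atTop.1
    ((hlim.eventually_lt_const hδ).and (eventually_gt_atTop ξ₀))
  refine ⟨A, fun ξ hξ θ => lt_of_le_of_lt ?_ (hA ξ hξ).1⟩
  rw [← Real.norm_eq_abs]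
  refine tsum_of_norm_bounded (habs ξ (hA ξ hξ).2).hasSum fun i => ?_
  rw [norm_mul, norm_mul, Real.norm_of_nonneg (Real.exp_nonneg _)]
  exact mul_le_of_le_one_right (by positivity) (Real.abs_cos_le_one _)

theorem exists_tsum_mul_exp_ne_zero {d : ℝ} (hl : ∀ i, c i ≠ 0 → d ≤ l i)
    (hc : ∀ ξ, ξ₀ < ξ → Summable fun i => c i * Real.exp (-l i * ξ))
    (hd : ∑' i, (if l i = d then c i else 0) ≠ 0) :
    ∃ ξ, ξ₀ < ξ ∧ ∑' i, c i * Real.exp (-l i * ξ) ≠ 0 := by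
  obtain ⟨ξ, hne, hξ⟩ := (((tendsto_tsum_mul_exp_sub hl (hc _ (lt_add_one ξ₀))).eventually_ne
    hd).and (eventually_gt_atTop ξ₀)).exists
  refine ⟨ξ, hξ, fun h0 => hne ?_⟩
  have hfactor (i : ι) : c i * Real.exp (-(l i - d) * ξ) =
      c i * Real.exp (-l i * ξ) * Real.exp (d * ξ) := by
    rw [mul_assoc, ← Real.exp_add]
    ring_nf
  simp only [hfactor, tsum_mul_right, h0, zero_mul]

end ExponentialSeries

section WaveEquation

variable {f : MvPowerSeries (Fin 2) ℝ} {ξ₀ ξ : ℝ}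
  (hf : ∀ ξ, ξ₀ < ξ → Summable fun n => coeff n f * Real.exp (-n.degree * ξ))
include hf

theorem summable_coeff_multiplier_mul_exp {w : (Fin 2 →₀ ℕ) → ℝ} (hw : ∀ n, |w n| ≤ n.degree)
    (hξ : ξ₀ < ξ) : Summable fun n => coeff n (multiplier w f) * Real.exp (-n.degree * ξ) := by
  refine .of_norm_bounded (summable_rate_mul (fun _ => Nat.cast_nonneg _) hf hξ).norm fun n => ?_
  rw [coeff_multiplier, norm_mul, norm_mul, norm_mul, norm_mul, Real.norm_natCast]
  gcongr
  exact hw n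

theorem summable_coeff_multiplier_multiplier_mul_exp {w : (Fin 2 →₀ ℕ) → ℝ}
    (hw : ∀ n, |w n| ≤ n.degree) (hξ : ξ₀ < ξ) :
    Summable fun n => coeff n (multiplier w (multiplier w f)) * Real.exp (-n.degree * ξ) :=
  summable_coeff_multiplier_mul_exp
    (fun _ hη => summable_coeff_multiplier_mul_exp hf hw hη) hw hξ

theorem deriv_deriv_wave_right (hξ : ξ₀ < ξ) (τ : ℝ) :
    deriv (deriv (wave f ξ)) τ =
      -wave (multiplier (fun n => (frequency n : ℝ)) (multiplier (fun n => (frequency n : ℝ)) f))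
        ξ τ := by
  have hle (n : Fin 2 →₀ ℕ) : |(frequency n : ℝ)| ≤ n.degree := mod_cast abs_frequency_le n
  have hb : Summable fun n => coeff n f * Real.exp (-n.degree * ξ) * frequency n := by
    refine (summable_coeff_multiplier_mul_exp hf hle hξ).congr fun n => ?_
    rw [coeff_multiplier]
    ring
  have hbb : Summable fun n =>
      coeff n f * Real.exp (-n.degree * ξ) * frequency n * frequency n := by
    refine (summable_coeff_multiplier_multiplier_mul_exp hf hle hξ).congr fun n => ?_
    rw [coeff_multiplier, coeff_multiplier]
    ring
  refine (deriv_deriv_tsum_mul_cos (hf ξ hξ) hb hbb τ).trans (congrArg _ (tsum_congr fun n => ?_))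
  rw [coeff_multiplier, coeff_multiplier]
  ring

theorem deriv_deriv_wave_left (hξ : ξ₀ < ξ) (τ : ℝ) :
    deriv (deriv fun ξ => wave f ξ τ) ξ =
      wave (multiplier (fun n => (n.degree : ℝ)) (multiplier (fun n => (n.degree : ℝ)) f)) ξ τ := by
  have hc (ξ : ℝ) (hξ : ξ₀ < ξ) : Summable fun n : Fin 2 →₀ ℕ =>
      coeff n f * Real.cos (frequency n * τ) * Real.exp (-n.degree * ξ) :=
    (summable_mul_cos (hf ξ hξ) fun n => frequency n * τ).congr fun n => by ring
  simp only [wave, mul_right_comm _ (Real.exp _) (Real.cos _)]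
  rw [deriv_deriv_tsum_mul_exp (fun _ => Nat.cast_nonneg _) hc hξ]
  refine tsum_congr fun n => ?_
  rw [coeff_multiplier, coeff_multiplier]
  ring

theorem wave_multiplier_symbol (ε : ℝ) (hξ : ξ₀ < ξ) (τ : ℝ) :
    wave (multiplier (symbol ε) f) ξ τ =
      -(1 - ε ^ 2) * deriv (deriv (wave f ξ)) τ +
        ε ^ 2 * deriv (deriv fun ξ => wave f ξ τ) ξ - wave f ξ τ := by
  have hfrequency (n : Fin 2 →₀ ℕ) : |(frequency n : ℝ)| ≤ n.degree := mod_cast abs_frequency_le n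
  have hdegree (n : Fin 2 →₀ ℕ) : |(n.degree : ℝ)| ≤ n.degree := (Nat.abs_cast _).le
  have hcos {w : (Fin 2 →₀ ℕ) → ℝ} (hw : ∀ n, |w n| ≤ n.degree) :=
    summable_mul_cos (summable_coeff_multiplier_multiplier_mul_exp hf hw hξ)
      fun n => frequency n * τ
  rw [deriv_deriv_wave_right hf hξ, deriv_deriv_wave_left hf hξ, neg_mul_neg]
  simp only [wave]
  have h_time := (hcos hfrequency).mul_left (1 - ε ^ 2)
  have h_space := (hcos hdegree).mul_left (ε ^ 2)
  rw [← tsum_mul_left, ← tsum_mul_left, ← h_time.tsum_add h_space,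
    ← (h_time.add h_space).tsum_sub (summable_mul_cos (hf ξ hξ) _)]
  refine tsum_congr fun n => ?_
  simp only [coeff_multiplier, symbol]
  ring

end WaveEquation

section Modes

/-- The pair `(l, s)` of the rate `l` and the nonnegative frequency `s` of the monomial `n`. -/
noncomputable def mode (n : Fin 2 →₀ ℕ) : ℕ × ℕ := (n.degree, (frequency n).natAbs)

/-- The coefficient `a_{l,s}` of `e^{-lξ} cos(sτ)` in `wave f`, for `p = (l, s)`. The sum is finite
because `mode` has finite fibres. -/
noncomputable def modeCoeff (f : MvPowerSeries (Fin 2) ℝ) (p : ℕ × ℕ) : ℝ :=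
  ∑' n : mode ⁻¹' {p}, coeff n.1 f

theorem cos_natAbs_mul (k : ℤ) (τ : ℝ) : Real.cos (k.natAbs * τ) = Real.cos (k * τ) := by
  rw [← Real.cos_abs (k * τ), ← Real.cos_abs (k.natAbs * τ), abs_mul, abs_mul, Nat.abs_cast,
    Nat.cast_natAbs, Int.cast_abs]

theorem hasSum_modeCoeff {f : MvPowerSeries (Fin 2) ℝ} {ξ : ℝ}
    (hf : Summable fun n => coeff n f * Real.exp (-n.degree * ξ)) (τ : ℝ) :
    HasSum (fun p : ℕ × ℕ => modeCoeff f p * Real.exp (-p.1 * ξ) * Real.cos (p.2 * τ))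
      (wave f ξ τ) := by
  refine ((summable_mul_cos hf fun n => frequency n * τ).hasSum.tsum_fiberwise mode).congr_fun
    fun p => ?_
  simp only [modeCoeff, ← tsum_mul_right]
  refine tsum_congr fun ⟨n, hn⟩ => ?_
  obtain rfl : mode n = p := hn
  simp only [mode, cos_natAbs_mul]

theorem summable_modeCoeff_mul_exp {f : MvPowerSeries (Fin 2) ℝ} {ξ : ℝ}
    (hf : Summable fun n => coeff n f * Real.exp (-n.degree * ξ)) :
    Summable fun p : ℕ × ℕ => modeCoeff f p * Real.exp (-p.1 * ξ) := by
  simpa using (hasSum_modeCoeff hf 0).summable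

theorem odd_frequency_of_odd_degree {n : Fin 2 →₀ ℕ} (hn : Odd n.degree) :
    Odd (frequency n).natAbs := by
  rw [degree_fin_two] at hn
  rw [frequency, Int.natAbs_odd]
  grind

namespace IsFormalSolution

variable {ε : ℝ} {h : PowerSeries ℝ} {f : MvPowerSeries (Fin 2) ℝ} (hf : IsFormalSolution ε h f)
include hf

theorem constantCoeff_eq_zero : constantCoeff f = 0 :=
  hf.coeff_of_even_degree 0 (by simp)

theorem odd_of_modeCoeff_ne_zero {p : ℕ × ℕ} (hp : modeCoeff f p ≠ 0) :
    Odd p.1 ∧ Odd p.2 ∧ p.2 ≤ p.1 := by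
  obtain ⟨⟨n, hn⟩, hne⟩ : ∃ n : mode ⁻¹' {p}, coeff n.1 f ≠ 0 := by
    by_contra! hzero
    exact hp (by simp only [modeCoeff, hzero, tsum_zero])
  obtain rfl : mode n = p := hn
  have hodd : Odd n.degree := by
    rw [← Nat.not_even_iff_odd]
    exact fun heven => hne (hf.coeff_of_even_degree n heven)
  have hle := abs_frequency_le n
  exact ⟨hodd, odd_frequency_of_odd_degree hodd, by grind [mode]⟩

theorem modeCoeff_one_one : modeCoeff f (1, 1) = ε := by
  have hfibre : mode ⁻¹' {(1, 1)} =
      (({Finsupp.single 0 1, Finsupp.single 1 1} : Finset (Fin 2 →₀ ℕ)) : Set _) := by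
    ext n
    simp only [mode, Set.mem_preimage, Set.mem_singleton_iff, Prod.mk.injEq, degree_eq_one_iff,
      coe_insert, coe_singleton, Set.mem_insert_iff, and_iff_left_iff_imp]
    rintro (rfl | rfl) <;> simp [frequency]
  have hne : (Finsupp.single 0 1 : Fin 2 →₀ ℕ) ≠ Finsupp.single 1 1 :=
    (Finsupp.single_left_injective one_ne_zero).ne zero_ne_one
  rw [modeCoeff, hfibre]
  refine (Finset.tsum_subtype' _ fun n => coeff n f).trans ?_
  rw [sum_pair hne, hf.coeff_of_degree_eq_one _ (by simp),
    hf.coeff_of_degree_eq_one _ (by simp), add_halves]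

theorem exists_tsum_modeCoeff_mul_exp_ne_zero {ξ₀ : ℝ} (hε : ε ≠ 0)
    (hsum : ∀ ξ, ξ₀ < ξ → Summable fun n => coeff n f * Real.exp (-n.degree * ξ)) :
    ∃ ξ, ξ₀ < ξ ∧ ∑' p : ℕ × ℕ, modeCoeff f p * Real.exp (-p.1 * ξ) ≠ 0 := by
  refine exists_tsum_mul_exp_ne_zero (d := 1) (fun p hp => ?_)
    (fun ξ hξ => summable_modeCoeff_mul_exp (hsum ξ hξ)) ?_
  · exact_mod_cast (hf.odd_of_modeCoeff_ne_zero hp).1.pos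
  · rw [tsum_eq_single (1, 1), Nat.cast_one, if_pos rfl, hf.modeCoeff_one_one]
    · exact hε
    · intro p hp
      by_contra hne
      obtain ⟨hp1, hne⟩ := ite_ne_right_iff.1 hne
      obtain ⟨-, hp2, hle⟩ := hf.odd_of_modeCoeff_ne_zero hne
      have hp1 : p.1 = 1 := by exact_mod_cast hp1
      exact hp (Prod.ext hp1 (le_antisymm (hle.trans hp1.le) hp2.pos))

end IsFormalSolution

end Modes

section Solution

theorem deriv_deriv_comp_mul_left (v : ℝ → ℝ) (c y : ℝ) :
    deriv (deriv fun y => v (c * y)) y = c ^ 2 * deriv (deriv v) (c * y) := by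
  have hderiv : (deriv fun y => v (c * y)) = fun y => c * deriv v (c * y) :=
    funext fun y => deriv_comp_mul_left c v y
  rw [hderiv, deriv_const_mul_field, deriv_comp_mul_left, smul_eq_mul]
  ring

theorem IsFormalSolution.wave_equation {ε ξ₀ : ℝ} {h : PowerSeries ℝ}
    {f : MvPowerSeries (Fin 2) ℝ} (hε : ε ^ 2 ≤ 1) (hf : IsFormalSolution ε h f)
    (hsum : ∀ ξ, ξ₀ < ξ → Summable fun n => coeff n f * Real.exp (-n.degree * ξ))
    {u : ℝ → ℝ → ℝ} (hu : ∀ x t, ξ₀ < ε * x → u x t = wave f (ε * x) (√(1 - ε ^ 2) * t))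
    {x : ℝ} (hx : ξ₀ < ε * x) (t : ℝ) :
    deriv (deriv fun t' => u x t') t - deriv (deriv fun x' => u x' t) x +
      (u x t + wave (h.subst f) (ε * x) (√(1 - ε ^ 2) * t)) = 0 := by
  have h_time : deriv (deriv fun t' => u x t') t =
      (1 - ε ^ 2) * deriv (deriv (wave f (ε * x))) (√(1 - ε ^ 2) * t) := by
    simp only [hu x _ hx]
    rw [deriv_deriv_comp_mul_left, Real.sq_sqrt (sub_nonneg.2 hε)]
  have h_space : deriv (deriv fun x' => u x' t) x =
      ε ^ 2 * deriv (deriv fun ξ => wave f ξ (√(1 - ε ^ 2) * t)) (ε * x) := by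
    have hnhds : (fun x' => u x' t) =ᶠ[𝓝 x] fun x' => wave f (ε * x') (√(1 - ε ^ 2) * t) := by
      filter_upwards [(continuous_const_mul ε).isOpen_preimage _ isOpen_Ioi |>.mem_nhds hx]
        with y hy using hu y t hy
    rw [hnhds.deriv.deriv_eq,
      deriv_deriv_comp_mul_left (fun ξ => wave f ξ (√(1 - ε ^ 2) * t))]
  rw [h_time, h_space, hu x t hx, ← hf.multiplier_symbol, wave_multiplier_symbol hsum ε hx]
  ring

theorem exists_convergent_isFormalSolution {g : ℕ → ℝ} (hg1 : g 1 = 1)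
    (hodd : ∀ m, ¬ Odd m → g m = 0) {R : ℝ} (hR : 0 < R) (hg : Summable fun m => |g m| * R ^ m)
    {ε : ℝ} (hε0 : 0 < ε) (hε1 : ε ^ 2 ≤ 1) :
    ∃ f h ξ₀, IsFormalSolution ε h f ∧
      (∀ ξ, ξ₀ < ξ → Summable fun n => coeff n f * Real.exp (-n.degree * ξ)) ∧
      ∀ ξ, ξ₀ < ξ → ∀ τ, HasSum (fun m => g m * wave f ξ τ ^ m)
        (wave f ξ τ + wave (h.subst f) ξ τ) := by
  let h : PowerSeries ℝ := PowerSeries.mk g - PowerSeries.X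
  have hcoeff (m : ℕ) : PowerSeries.coeff m h = g m - if m = 1 then 1 else 0 := by
    simp [h, PowerSeries.coeff_X]
  have hle (m : ℕ) : |PowerSeries.coeff m h| ≤ |g m| := by
    rw [hcoeff]
    split_ifs with hm <;> simp [hm, hg1]
  have hmajorant : majorant h (ENNReal.ofReal R) ≠ ∞ := by
    refine ne_top_of_le_ne_top (tsum_enorm_ne_top_iff_summable_norm.2 hg.norm)
      (ENNReal.tsum_le_tsum fun m => ?_)
    rw [enorm_mul, enorm_pow, Real.enorm_abs, Real.enorm_of_nonneg hR.le]
    gcongr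
    exact enorm_le_iff_norm_le.2 (hle m)
  obtain ⟨f, r, hr, hfR, hf⟩ := exists_isFormalSolution hε0 hε1
    (fun m hm => by grind) (by simp [hcoeff, hg1]) (ENNReal.ofReal_pos.2 hR).ne' hmajorant
  have hfr := ne_top_of_le_ne_top ENNReal.ofReal_ne_top hfR
  obtain ⟨ξ₀, hξ₀⟩ := exists_ofReal_exp_neg_le hr
  refine ⟨f, h, ξ₀, hf, fun ξ hξ => ?_, fun ξ hξ τ => ?_⟩
  · exact summable_coeff_mul_exp (hξ₀ ξ hξ.le) hfr
  · have hlinear := hasSum_ite_eq 1 (wave f ξ τ)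
    have hnonlinear := hasSum_coeff_mul_wave_pow (hξ₀ ξ hξ.le) hfr hf.constantCoeff_eq_zero
      hf.rename_swap (ne_top_of_le_ne_top hmajorant (majorant_mono h hfR)) τ
    refine (hlinear.add hnonlinear).congr_fun fun m => ?_
    rw [hcoeff]
    split_ifs with hm
    · simp [hm, hg1]
    · simp

theorem summable_abs_mul_pow_of_le_factorial {g : ℕ → ℝ} (hodd : ∀ m, ¬ Odd m → g m = 0) {α : ℝ}
    (hα : 0 < α) (hbound : ∀ m, Odd m → |g m| ≤ α ^ (m - 1) / m.factorial) {R : ℝ} (hR : 0 ≤ R) :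
    Summable fun m => |g m| * R ^ m := by
  refine .of_nonneg_of_le (fun m => by positivity) (fun m => ?_)
    ((Real.summable_pow_div_factorial (α * R)).mul_left α⁻¹)
  by_cases hm : Odd m
  · calc |g m| * R ^ m ≤ α ^ (m - 1) / m.factorial * R ^ m := by
          gcongr
          exact hbound m hm
      _ = α⁻¹ * ((α * R) ^ m / m.factorial) := by
          rw [mul_pow, ← mul_pow_sub_one hm.pos.ne' α]
          field_simp
  · rw [hodd m hm, abs_zero, zero_mul]
    positivity

end Solution

end SecondFormalSolution

open SecondFormalSolution in
theorem convergence_second_formal_solution_general (g : ℕ → ℝ) (hg1 : g 1 = 1)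
    (hodd : ∀ m, ¬ Odd m → g m = 0) {R : ℝ} (hR : 0 < R)
    (hg : Summable fun m => |g m| * R ^ m) :
    ∀ ε : ℝ, 0 < ε → ε < 1 →
      ∃ (ξ₀ : ℝ) (a : ℕ → ℕ → ℝ),
        (∀ l s, a l s ≠ 0 → Odd l ∧ Odd s ∧ s ≤ l) ∧
        a 1 1 = ε ∧
        (∀ ξ : ℝ, ξ₀ < ξ →
          Summable fun p : ℕ × ℕ => |a p.1 p.2| * Real.exp (-(p.1 : ℝ) * ξ)) ∧
        (∀ u : ℝ → ℝ → ℝ,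
          (∀ x t, u x t = ∑' p : ℕ × ℕ,
            a p.1 p.2 * Real.exp (-(p.1 : ℝ) * (ε * x)) *
              Real.cos ((p.2 : ℝ) * (Real.sqrt (1 - ε ^ 2) * t))) →
          (∀ x t : ℝ, ξ₀ < ε * x → Summable fun m => g m * u x t ^ m) ∧
          (∀ x t : ℝ, ξ₀ < ε * x →
            deriv (deriv fun t' => u x t') t - deriv (deriv fun x' => u x' t) x
              + ∑' m : ℕ, g m * u x t ^ m = 0) ∧
          (∀ x t, u x (t + 2 * Real.pi / Real.sqrt (1 - ε ^ 2)) = u x t) ∧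
          (∀ δ > 0, ∃ A : ℝ, ∀ x t, A ≤ x → |u x t| < δ) ∧
          (∃ x t, ξ₀ < ε * x ∧ u x t ≠ 0)) := by
  intro ε hε0 hε1
  have hε : ε ^ 2 < 1 := pow_lt_one₀ hε0.le hε1 two_ne_zero
  obtain ⟨f, h, ξ₀, hf, hsum, hpow⟩ :=
    exists_convergent_isFormalSolution hg1 hodd hR hg hε0 hε.le
  have hmode (ξ : ℝ) (hξ : ξ₀ < ξ) := summable_modeCoeff_mul_exp (hsum ξ hξ)
  refine ⟨ξ₀, fun l s => modeCoeff f (l, s), fun l s => hf.odd_of_modeCoeff_ne_zero,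
    hf.modeCoeff_one_one, fun ξ hξ => ?_, fun u hu => ?_⟩
  · simpa only [abs_mul, Real.abs_exp] using (hmode ξ hξ).abs
  have huwave (x t : ℝ) (hx : ξ₀ < ε * x) : u x t = wave f (ε * x) (√(1 - ε ^ 2) * t) :=
    (hu x t).trans (hasSum_modeCoeff (hsum _ hx) _).tsum_eq
  refine ⟨fun x t hx => ?_, fun x t hx => ?_, fun x t => ?_, fun δ hδ => ?_, ?_⟩
  · rw [huwave x t hx]
    exact (hpow _ hx _).summable
  · rw [← hf.wave_equation hε.le hsum huwave hx t, huwave x t hx, (hpow _ hx _).tsum_eq]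
  · rw [hu, hu, tsum_mul_cos_add_period _ _ (Real.sqrt_ne_zero'.2 (sub_pos.2 hε))]
  · obtain ⟨A, hA⟩ := exists_forall_abs_tsum_mul_exp_mul_cos_lt
      (fun p hp => Nat.cast_pos.2 (hf.odd_of_modeCoeff_ne_zero hp).1.pos) hmode hδ
    refine ⟨A / ε, fun x t hx => ?_⟩
    rw [hu]
    exact hA _ ((div_le_iff₀' hε0).1 hx) _
  · obtain ⟨ξ, hξ, hne⟩ := hf.exists_tsum_modeCoeff_mul_exp_ne_zero hε0.ne' hsum
    refine ⟨ξ / ε, 0, ?_, ?_⟩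
    · rwa [mul_div_cancel₀ _ hε0.ne']
    · simpa [hu, mul_div_cancel₀ _ hε0.ne'] using hne

/-- Theorem 4, convergence of the second formal solution: Let
`g(u) = Σ_{m odd} g_m u^m` be odd, entire, with `g₁ = 1` and `|g_m| ≤ α^{m−1}/m!` for all
odd `m` and some `α > 0`. Then for every `ε ∈ (0,1)` there are `ξ₀ ∈ ℝ` and coefficients
`a_{l,s}` (supported on odd `l,s` with `s ≤ l`, `a_{1,1} = ε`) such that
`Σ |a_{l,s}| e^{−lξ} < ∞` for `ξ > ξ₀`, and
`u(x,t) = Σ a_{l,s} e^{−lεx} cos(s√(1−ε²)t)` solves `u_tt − u_xx + g(u) = 0` on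
`{εx > ξ₀}`; in particular `u` is periodic in `t` with period `2π/√(1−ε²)`, tends to `0`
as `x → +∞`, and is not identically zero. -/
theorem convergence_second_formal_solution (g : ℕ → ℝ) (hg1 : g 1 = 1)
    (hodd : ∀ m, ¬ Odd m → g m = 0)
    (α : ℝ) (hα : 0 < α)
    (hbound : ∀ m, Odd m → |g m| ≤ α ^ (m - 1) / Nat.factorial m) :
    ∀ ε : ℝ, 0 < ε → ε < 1 →
      ∃ (ξ₀ : ℝ) (a : ℕ → ℕ → ℝ),
        (∀ l s, a l s ≠ 0 → Odd l ∧ Odd s ∧ s ≤ l) ∧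
        a 1 1 = ε ∧
        (∀ ξ : ℝ, ξ₀ < ξ →
          Summable fun p : ℕ × ℕ => |a p.1 p.2| * Real.exp (-(p.1 : ℝ) * ξ)) ∧
        (∀ u : ℝ → ℝ → ℝ,
          (∀ x t, u x t = ∑' p : ℕ × ℕ,
            a p.1 p.2 * Real.exp (-(p.1 : ℝ) * (ε * x)) *
              Real.cos ((p.2 : ℝ) * (Real.sqrt (1 - ε ^ 2) * t))) →
          (∀ x t : ℝ, ξ₀ < ε * x →
            deriv (deriv fun t' => u x t') t - deriv (deriv fun x' => u x' t) x
              + ∑' m : ℕ, g m * u x t ^ m = 0) ∧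
          (∀ x t, u x (t + 2 * Real.pi / Real.sqrt (1 - ε ^ 2)) = u x t) ∧
          (∀ δ > 0, ∃ A : ℝ, ∀ x t, A ≤ x → |u x t| < δ) ∧
          (∃ x t, ξ₀ < ε * x ∧ u x t ≠ 0)) := by
  intro ε hε0 hε1
  obtain ⟨ξ₀, a, hsupport, ha, hsum, hu⟩ := convergence_second_formal_solution_general g hg1 hodd
    one_pos (SecondFormalSolution.summable_abs_mul_pow_of_le_factorial hodd hα hbound zero_le_one)
    ε hε0 hε1
  exact ⟨ξ₀, a, hsupport, ha, hsum, fun u hu' => (hu u hu').2⟩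
end
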